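/- For every θ ∈ ℝ and every E ∈ σ(H_{α,θ,b}), the Lyapunov exponent L(E) is strictly positive if and only if |αE + 2λ| > 2. -/

import Mathlib

open scoped Real

/-- The quasi-periodic potential `v(x) = 2λcos(2πx)/(1 - αcos(2πx))`. -/
noncomputable def potV (α lam : ℝ) (x : ℝ) : ℝ :=
  2 * lam * Real.cos (2 * Real.pi * x) / (1 - α * Real.cos (2 * Real.pi * x))

/-- One-step transfer matrix `A(x,z) = [[z - V x, -1],[1,0]]`. -/
noncomputable def tMat (V : ℝ → ℝ) (x : ℝ) (z : ℂ) : Matrix (Fin 2) (Fin 2) ℂ :=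
  !![z - (V x : ℝ), -1; 1, 0]

/-- The `n`-step transfer matrix `A_n(x,z) = A(x+(n-1)b,z) ⋯ A(x+b,z) A(x,z)`. -/
noncomputable def tProd (V : ℝ → ℝ) (b : ℝ) (n : ℕ) (x : ℝ) (z : ℂ) :
    Matrix (Fin 2) (Fin 2) ℂ :=
  (((List.range n).reverse).map (fun j => tMat V (x + (j : ℝ) * b) z)).prod

/-- The operator norm of a 2×2 complex matrix, acting on the Euclidean space `ℂ²`. -/
noncomputable def opNorm2 (M : Matrix (Fin 2) (Fin 2) ℂ) : ℝ :=
  ‖Matrix.toEuclideanCLM (𝕜 := ℂ) M‖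

/-- The Lyapunov exponent `L(z) = lim_n (1/n)∫₀¹ log‖A_n(x,z)‖ dx`; the limit exists and
equals `inf_{n ≥ 1} (1/n)∫₀¹ log‖A_n(x,z)‖ dx` by subadditivity, so we take that as the
definition. -/
noncomputable def lyap (V : ℝ → ℝ) (b : ℝ) (z : ℂ) : ℝ :=
  ⨅ n : ℕ+, ((n : ℝ))⁻¹ * ∫ x in (0:ℝ)..(1:ℝ), Real.log (opNorm2 (tProd V b n x z))

/-- `IsSchrodingerOp V b θ H` says that `H` is the bounded operator on `ℓ²(ℤ)` given by
`(Hu)ₙ = u_{n+1} + u_{n-1} + V(nb+θ)uₙ`. -/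
def IsSchrodingerOp (V : ℝ → ℝ) (b θ : ℝ)
    (H : lp (fun _ : ℤ => ℂ) 2 →L[ℂ] lp (fun _ : ℤ => ℂ) 2) : Prop :=
  ∀ u : lp (fun _ : ℤ => ℂ) 2, ∀ n : ℤ,
    (H u : ∀ _ : ℤ, ℂ) n = (u : ∀ _ : ℤ, ℂ) (n + 1) + (u : ∀ _ : ℤ, ℂ) (n - 1)
      + (V ((n : ℝ) * b + θ) : ℂ) * (u : ∀ _ : ℤ, ℂ) n

/-!
In the coordinate `X = e^{2πix}` the potential is a rational function of `X` with poles at `β` and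
`β⁻¹`, where `|β| < 1`. Multiplying the transfer matrix by `X (1 - α cos(2πx))` makes it polynomial
in `X`, with trace `-(αE + 2λ) / 2` and determinant `α² / 4` at `X = 0`.

If `|αE + 2λ| > 2`, then Jensen's inequality on the unit disc bounds `L(E)` below by the logarithm
of the spectral radius at `X = 0` minus the mean of `log (1 - α cos(2πx))`, which is positive.

If `|αE + 2λ| ≤ 2`, that spectral radius is so small that, when the growth rate on the unit circle
is positive, convexity in `log |X|` forces it to have slope in `(-1, 0]` just inside the unit
circle. Near such circles an iterate of length `k` is then determined, up to exponentially small
errors, by its values at fewer than `k` points of an orbit, so long iterates cannot be small along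
a whole orbit segment of length less than `k`. Where they are large, square-summable approximate
solutions of the difference equation are small, so `H - z` with complexified phase is bounded below
on circles near the unit circle, for `z = E + iη` with `η` small. Its inverse is analytic in the
complex phase, so the maximum principle bounds the resolvent at `E + iη` at real phases uniformly in
`η`, and `E` is not in the spectrum.
-/

open scoped FourierTransform lp

section LinftyOpNorm

attribute [local instance] Matrix.linftyOpNormedAddCommGroup Matrix.linftyOpNormedSpace
  Matrix.linftyOpNormedRing Matrix.linftyOpNormedAlgebra

/-- The cocycle iterate `F (X ρⁿ⁻¹) ⋯ F (X ρ) F X` over the rotation `X ↦ X ρ`. The phase `x` of the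
operator is encoded multiplicatively, as `X = e^{2πix}`, so that it can leave the unit circle. -/
def cocycle {R : Type*} [Monoid R] (F : ℂ → R) (ρ : ℂ) : ℕ → ℂ → R
  | 0, _ => 1
  | n + 1, X => F (X * ρ ^ n) * cocycle F ρ n X

/-- The iterates of `F` over the rotation by `ρ` grow at exponential rate at most `c` on the circle
of radius `r`. -/
def HasGrowthBound {R : Type*} [NormedRing R] (F : ℂ → R) (ρ : ℂ) (r c : ℝ) : Prop :=
  ∃ C : ℝ, 0 < C ∧ ∀ (n : ℕ) (X : ℂ), ‖X‖ = r → ‖cocycle F ρ n X‖ ≤ C * Real.exp (c * n)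

lemma norm_mul_pow_of_norm_eq_one {ρ : ℂ} (hρ : ‖ρ‖ = 1) (X : ℂ) (n : ℕ) :
    ‖X * ρ ^ n‖ = ‖X‖ := by
  simp [hρ]

lemma norm_mul_zpow_of_norm_eq_one {ρ : ℂ} (hρ : ‖ρ‖ = 1) (X : ℂ) (n : ℤ) :
    ‖X * ρ ^ n‖ = ‖X‖ := by
  simp [hρ]

namespace cocycle

section Monoid

variable {R : Type*} [Monoid R] (F : ℂ → R) (ρ X : ℂ)

@[simp] lemma zero : cocycle F ρ 0 X = 1 := rfl

lemma succ (n : ℕ) : cocycle F ρ (n + 1) X = F (X * ρ ^ n) * cocycle F ρ n X := rfl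

lemma add (m n : ℕ) : cocycle F ρ (m + n) X = cocycle F ρ m (X * ρ ^ n) * cocycle F ρ n X := by
  induction m with
  | zero => rw [Nat.zero_add, zero, one_mul]
  | succ m ih =>
    rw [Nat.add_right_comm, succ, succ, ih, mul_assoc, mul_assoc, ← pow_add, add_comm n]

lemma one : cocycle F ρ 1 X = F X := by
  simp [succ]

lemma succ' (n : ℕ) : cocycle F ρ (n + 1) X = cocycle F ρ n (X * ρ) * F X := by
  rw [add, one, pow_one]

lemma at_zero (n : ℕ) : cocycle F ρ n 0 = F 0 ^ n := by
  induction n with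
  | zero => simp
  | succ n ih => rw [succ, ih, zero_mul, pow_succ']

lemma continuous [TopologicalSpace R] [ContinuousMul R] {F : ℂ → R} (hF : Continuous F) (n : ℕ) :
    Continuous (cocycle F ρ n) := by
  induction n with
  | zero => exact continuous_const
  | succ n ih => exact (hF.comp (continuous_mul_const _)).mul ih

lemma eq_prod_smul {S : Type*} [CommMonoid S] [MulAction S R] [IsScalarTower S R R]
    [SMulCommClass S R R] {F G : ℂ → R} {s : ℂ → S} {ρ X : ℂ}
    (h : ∀ j : ℕ, F (X * ρ ^ j) = s (X * ρ ^ j) • G (X * ρ ^ j)) (n : ℕ) :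
    cocycle F ρ n X = (∏ j ∈ Finset.range n, s (X * ρ ^ j)) • cocycle G ρ n X := by
  induction n with
  | zero => simp
  | succ n ih =>
    rw [succ, succ, ih, h, Finset.prod_range_succ, smul_mul_smul_comm, mul_comm (s (X * ρ ^ n))]

end Monoid

section Norm

variable {R : Type*} [NormedRing R] [NormOneClass R] {F G : ℂ → R} {ρ X : ℂ} {r B δ : ℝ}

lemma norm_le (hρ : ‖ρ‖ = 1) (hF : ∀ X : ℂ, ‖X‖ = r → ‖F X‖ ≤ B) (hX : ‖X‖ = r) (n : ℕ) :
    ‖cocycle F ρ n X‖ ≤ B ^ n := by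
  have hB : 0 ≤ B := (norm_nonneg _).trans (hF X hX)
  induction n with
  | zero => simp
  | succ n ih =>
    rw [succ, pow_succ']
    exact (norm_mul_le _ _).trans
      (mul_le_mul (hF _ (by rwa [norm_mul_pow_of_norm_eq_one hρ])) ih (norm_nonneg _) hB)

lemma norm_sub_le (hρ : ‖ρ‖ = 1) (hB : 1 ≤ B) (hF : ∀ X : ℂ, ‖X‖ = r → ‖F X‖ ≤ B)
    (hG : ∀ X : ℂ, ‖X‖ = r → ‖G X‖ ≤ B) (hGF : ∀ X : ℂ, ‖X‖ = r → ‖G X - F X‖ ≤ δ)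
    (hX : ‖X‖ = r) (n : ℕ) :
    ‖cocycle G ρ n X - cocycle F ρ n X‖ ≤ n * B ^ n * δ := by
  have hδ : 0 ≤ δ := (norm_nonneg _).trans (hGF X hX)
  induction n with
  | zero => simp
  | succ n ih =>
    have hXn : ‖X * ρ ^ n‖ = r := by rwa [norm_mul_pow_of_norm_eq_one hρ]
    calc ‖cocycle G ρ (n + 1) X - cocycle F ρ (n + 1) X‖
        = ‖(G (X * ρ ^ n) - F (X * ρ ^ n)) * cocycle G ρ n X
            + F (X * ρ ^ n) * (cocycle G ρ n X - cocycle F ρ n X)‖ := by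
          rw [succ, succ, sub_mul, mul_sub, sub_add_sub_cancel]
      _ ≤ δ * B ^ n + B * (n * B ^ n * δ) :=
          (norm_add_le _ _).trans (add_le_add
            ((norm_mul_le _ _).trans
              (mul_le_mul (hGF _ hXn) (norm_le hρ hG hX n) (norm_nonneg _) hδ))
            ((norm_mul_le _ _).trans (mul_le_mul (hF _ hXn) ih (norm_nonneg _) (by linarith))))
      _ ≤ δ * B ^ (n + 1) + B * (n * B ^ n * δ) := by gcongr; exact n.le_succ
      _ = (n + 1 : ℕ) * B ^ (n + 1) * δ := by push_cast; ring

lemma norm_mul_le_exp (hρ : ‖ρ‖ = 1) {c : ℝ} {m : ℕ}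
    (h : ∀ X : ℂ, ‖X‖ = r → ‖cocycle F ρ m X‖ ≤ Real.exp (c * m)) (hX : ‖X‖ = r) (q : ℕ) :
    ‖cocycle F ρ (m * q) X‖ ≤ Real.exp (c * (m * q : ℕ)) := by
  induction q with
  | zero => simp
  | succ q ih =>
    rw [Nat.mul_succ, add_comm, add]
    calc ‖cocycle F ρ m (X * ρ ^ (m * q)) * cocycle F ρ (m * q) X‖
        ≤ Real.exp (c * m) * Real.exp (c * (m * q : ℕ)) :=
          (norm_mul_le _ _).trans (mul_le_mul (h _ (by rwa [norm_mul_pow_of_norm_eq_one hρ])) ih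
            (norm_nonneg _) (Real.exp_nonneg _))
      _ = Real.exp (c * (m + m * q : ℕ)) := by rw [← Real.exp_add]; push_cast; ring_nf

end Norm

lemma differentiableOn {R : Type*} [NormedRing R] [NormedAlgebra ℂ R] {F : ℂ → R} {ρ : ℂ}
    {S : Set ℂ} (hS : Set.MapsTo (· * ρ) S S) (hF : DifferentiableOn ℂ F S) (n : ℕ) :
    DifferentiableOn ℂ (cocycle F ρ n) S := by
  have hSn : ∀ n : ℕ, Set.MapsTo (fun X ↦ X * ρ ^ n) S S := fun n X hX ↦ by
    induction n with
    | zero => simpa using hX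
    | succ n ih => simpa only [pow_succ, mul_assoc] using hS ih
  induction n with
  | zero => exact differentiableOn_const 1
  | succ n ih => exact (hF.comp (by fun_prop) (hSn n)).mul ih

lemma det {n : Type*} [Fintype n] [DecidableEq n] {F : ℂ → Matrix n n ℂ}
    (hF : ∀ X, (F X).det = 1) (ρ X : ℂ) (k : ℕ) : (cocycle F ρ k X).det = 1 := by
  induction k with
  | zero => simp
  | succ k ih => rw [succ, Matrix.det_mul, hF, ih, one_mul]

end cocycle

namespace HasGrowthBound

variable {R : Type*} [NormedRing R] {F : ℂ → R} {ρ : ℂ} {r c c' : ℝ}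

lemma mono (h : HasGrowthBound F ρ r c) (hc : c ≤ c') : HasGrowthBound F ρ r c' := by
  obtain ⟨C, hC, h⟩ := h
  exact ⟨C, hC, fun n X hX ↦ (h n X hX).trans (by gcongr)⟩

lemma exists_of_norm_le [NormOneClass R] {B : ℝ} (hρ : ‖ρ‖ = 1)
    (hF : ∀ X : ℂ, ‖X‖ = r → ‖F X‖ ≤ B) : ∃ c, HasGrowthBound F ρ r c := by
  refine ⟨B, 1, one_pos, fun n X hX ↦ (cocycle.norm_le hρ hF hX n).trans ?_⟩
  have hB : 0 ≤ B := (norm_nonneg _).trans (hF X hX)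
  rw [one_mul, mul_comm, Real.exp_nat_mul]
  gcongr
  linarith [Real.add_one_le_exp B]

lemma of_norm_le_exp [NormOneClass R] {B : ℝ} (hρ : ‖ρ‖ = 1)
    (hF : ∀ X : ℂ, ‖X‖ = r → ‖F X‖ ≤ B) {m : ℕ} (hm : 0 < m)
    (h : ∀ X : ℂ, ‖X‖ = r → ‖cocycle F ρ m X‖ ≤ Real.exp (c * m)) : HasGrowthBound F ρ r c := by
  have hF' : ∀ X : ℂ, ‖X‖ = r → ‖F X‖ ≤ max B 1 := fun X hX ↦ (hF X hX).trans (le_max_left _ _)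
  refine ⟨max B 1 ^ m * Real.exp (|c| * m), by positivity, fun n X hX ↦ ?_⟩
  have hmod : n % m ≤ m := (n.mod_lt hm).le
  have hremainder : ‖cocycle F ρ (n % m) (X * ρ ^ (m * (n / m)))‖ ≤ max B 1 ^ m :=
    (cocycle.norm_le hρ hF' (by rwa [norm_mul_pow_of_norm_eq_one hρ]) _).trans
      (pow_le_pow_right₀ (le_max_right _ _) hmod)
  have hexponent : c * (m * (n / m) : ℕ) ≤ |c| * m + c * n := by
    have hn : (n : ℝ) = (n % m : ℕ) + (m * (n / m) : ℕ) := by exact_mod_cast (n.mod_add_div m).symm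
    have : -c * (n % m : ℕ) ≤ |c| * m :=
      mul_le_mul (neg_le_abs c) (by exact_mod_cast hmod) (Nat.cast_nonneg _) (abs_nonneg c)
    rw [hn]
    linarith
  calc ‖cocycle F ρ n X‖
      = ‖cocycle F ρ (n % m) (X * ρ ^ (m * (n / m))) * cocycle F ρ (m * (n / m)) X‖ := by
        rw [← cocycle.add, n.mod_add_div]
    _ ≤ max B 1 ^ m * Real.exp (c * (m * (n / m) : ℕ)) :=
        (norm_mul_le _ _).trans (mul_le_mul hremainder (cocycle.norm_mul_le_exp hρ h hX _)
          (norm_nonneg _) (by positivity))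
    _ ≤ max B 1 ^ m * Real.exp (|c| * m + c * n) := by gcongr
    _ = max B 1 ^ m * Real.exp (|c| * m) * Real.exp (c * n) := by rw [Real.exp_add, mul_assoc]

lemma of_frequently [NormOneClass R] {B C : ℝ} (hρ : ‖ρ‖ = 1) (hc : c < c')
    (hF : ∀ X : ℂ, ‖X‖ = r → ‖F X‖ ≤ B)
    (h : ∃ᶠ n : ℕ in Filter.atTop, ∀ X : ℂ, ‖X‖ = r → ‖cocycle F ρ n X‖ ≤ C * Real.exp (c * n)) :
    HasGrowthBound F ρ r c' := by
  have hlarge : ∀ᶠ n : ℕ in Filter.atTop, 0 < n ∧ C ≤ (c' - c) * n :=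
    (Filter.eventually_gt_atTop 0).and
      ((tendsto_natCast_atTop_atTop.const_mul_atTop (sub_pos.2 hc)).eventually_ge_atTop C)
  obtain ⟨n, hn, hn0, hCn⟩ := (h.and_eventually hlarge).exists
  refine of_norm_le_exp hρ hF hn0 fun X hX ↦ (hn X hX).trans ?_
  calc C * Real.exp (c * n) ≤ Real.exp ((c' - c) * n) * Real.exp (c * n) := by
        gcongr
        linarith [Real.add_one_le_exp ((c' - c) * n)]
    _ = Real.exp (c' * n) := by rw [← Real.exp_add, sub_mul, sub_add_cancel]

end HasGrowthBound

section TwoByTwo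

variable (M : Matrix (Fin 2) (Fin 2) ℂ)

lemma norm_entry_le_linfty_opNorm (i j : Fin 2) : ‖M i j‖ ≤ ‖M‖ := by
  rw [Matrix.linfty_opNorm_def]
  have hrow : ‖M i j‖₊ ≤ ∑ j, ‖M i j‖₊ :=
    Finset.single_le_sum (f := fun j ↦ ‖M i j‖₊) (fun _ _ ↦ zero_le) (Finset.mem_univ j)
  exact_mod_cast hrow.trans (Finset.le_sup (f := fun i ↦ ∑ j, ‖M i j‖₊) (Finset.mem_univ i))

lemma linfty_opNorm_le_two_mul {M : Matrix (Fin 2) (Fin 2) ℂ} {C : ℝ} (h : ∀ i j, ‖M i j‖ ≤ C) :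
    ‖M‖ ≤ 2 * C := by
  lift C to NNReal using (norm_nonneg _).trans (h 0 0)
  rw [Matrix.linfty_opNorm_def]
  have hsup : (Finset.univ.sup fun i ↦ ∑ j, ‖M i j‖₊) ≤ 2 * C := Finset.sup_le fun i _ ↦ by
    rw [Fin.sum_univ_two, two_mul]
    exact add_le_add (by exact_mod_cast h i 0) (by exact_mod_cast h i 1)
  exact_mod_cast hsup

lemma norm_det_le_of_norm_entry_le {M : Matrix (Fin 2) (Fin 2) ℂ} {C : ℝ}
    (h : ∀ i j, ‖M i j‖ ≤ C) : ‖M.det‖ ≤ 2 * C ^ 2 := by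
  have hC : 0 ≤ C := (norm_nonneg _).trans (h 0 0)
  rw [Matrix.det_fin_two]
  calc ‖M 0 0 * M 1 1 - M 0 1 * M 1 0‖ ≤ ‖M 0 0‖ * ‖M 1 1‖ + ‖M 0 1‖ * ‖M 1 0‖ := by
        rw [← norm_mul, ← norm_mul]; exact norm_sub_le _ _
    _ ≤ C * C + C * C := by gcongr <;> exact h _ _
    _ = 2 * C ^ 2 := by ring

end TwoByTwo

lemma HasGrowthBound.nonneg_of_det_eq_one {F : ℂ → Matrix (Fin 2) (Fin 2) ℂ} {ρ : ℂ} {r c : ℝ}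
    (hF : ∀ X, (F X).det = 1) (hr : 0 ≤ r) (h : HasGrowthBound F ρ r c) : 0 ≤ c := by
  by_contra! hc
  obtain ⟨C, -, h⟩ := h
  have hdet : ∀ n : ℕ, 1 ≤ 2 * (C * Real.exp (c * n)) ^ 2 := fun n ↦ by
    have := norm_det_le_of_norm_entry_le fun i j ↦
      (norm_entry_le_linfty_opNorm (cocycle F ρ n r) i j).trans (h n r (by simp [abs_of_nonneg hr]))
    rwa [cocycle.det hF, norm_one] at this
  have hlim : Filter.Tendsto (fun n : ℕ ↦ 2 * (C * Real.exp (c * n)) ^ 2) Filter.atTop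
      (nhds (2 * (C * 0) ^ 2)) :=
    (((Real.tendsto_exp_atBot.comp
      (tendsto_natCast_atTop_atTop.const_mul_atTop_of_neg hc)).const_mul C).pow 2).const_mul 2
  have := ge_of_tendsto' hlim hdet
  norm_num at this

/-! ### Analytic functions on annuli -/

/-- The closed annulus `a ≤ |z| ≤ R` centred at the origin. -/
def closedAnnulus (a R : ℝ) : Set ℂ := {z | a ≤ ‖z‖ ∧ ‖z‖ ≤ R}

section Annulus

variable {E : Type*} [NormedAddCommGroup E] [NormedSpace ℂ E] {f : ℂ → E} {a R C : ℝ} {z : ℂ}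

lemma isClosed_closedAnnulus : IsClosed (closedAnnulus a R) :=
  (isClosed_le continuous_const continuous_norm).inter
    (isClosed_le continuous_norm continuous_const)

lemma closedAnnulus_mem_nhds (ha : a < ‖z‖) (hR : ‖z‖ < R) : closedAnnulus a R ∈ nhds z :=
  Filter.mem_of_superset
    (((isOpen_lt continuous_const continuous_norm).inter
      (isOpen_lt continuous_norm continuous_const)).mem_nhds ⟨ha, hR⟩)
    fun _ hw ↦ ⟨hw.1.le, hw.2.le⟩

lemma mapsTo_mul_closedAnnulus {ρ : ℂ} (hρ : ‖ρ‖ = 1) :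
    Set.MapsTo (· * ρ) (closedAnnulus a R) (closedAnnulus a R) := fun z hz ↦ by
  simpa only [closedAnnulus, Set.mem_ofPred_eq, norm_mul, hρ, mul_one] using hz

lemma norm_le_of_norm_le_on_circles (hf : DifferentiableOn ℂ f (closedAnnulus a R))
    (hfa : ∀ z : ℂ, ‖z‖ = a → ‖f z‖ ≤ C) (hfR : ∀ z : ℂ, ‖z‖ = R → ‖f z‖ ≤ C)
    (hz : z ∈ closedAnnulus a R) : ‖f z‖ ≤ C := by
  have hbounded : Bornology.IsBounded (closedAnnulus a R) :=
    (Metric.isBounded_closedBall (x := (0 : ℂ)) (r := R)).subset fun z hz ↦ by simpa using hz.2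
  by_cases hz_int : z ∈ interior (closedAnnulus a R)
  · refine Complex.norm_le_of_forall_mem_frontier_norm_le (hbounded.subset interior_subset)
      (hf.mono (closure_minimal interior_subset isClosed_closedAnnulus)).diffContOnCl
      (fun w hw ↦ ?_) (subset_closure hz_int)
    have hwA := closure_minimal interior_subset isClosed_closedAnnulus (frontier_subset_closure hw)
    have hwI : w ∉ interior (closedAnnulus a R) := by
      simpa only [interior_interior] using hw.2
    rcases hwA.1.eq_or_lt with h | ha
    · exact hfa w h.symm
    rcases hwA.2.eq_or_lt with h | hR
    · exact hfR w h
    · exact absurd (mem_interior_iff_mem_nhds.2 (closedAnnulus_mem_nhds ha hR)) hwI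
  · rcases hz.1.eq_or_lt with h | ha
    · exact hfa z h.symm
    rcases hz.2.eq_or_lt with h | hR
    · exact hfR z h
    · exact absurd (mem_interior_iff_mem_nhds.2 (closedAnnulus_mem_nhds ha hR)) hz_int

lemma exists_norm_le_of_norm_eq {r : ℝ} (hf : DifferentiableOn ℂ f (closedAnnulus a R))
    (ha : a ≤ r) (hR : r ≤ R) : ∃ B, ∀ z : ℂ, ‖z‖ = r → ‖f z‖ ≤ B := by
  obtain ⟨B, hB⟩ := (isCompact_sphere (0 : ℂ) r).exists_bound_of_continuousOn
    (hf.continuousOn.mono fun z hz ↦ by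
      rw [mem_sphere_zero_iff_norm] at hz
      exact ⟨hz ▸ ha, hz ▸ hR⟩)
  exact ⟨B, fun z hz ↦ hB z (mem_sphere_zero_iff_norm.2 hz)⟩

/-- Hadamard's three circles theorem: pull `f` back along the exponential to a vertical strip. -/
lemma norm_le_exp_add_mul_log {p s : ℝ} (ha : 0 < a) (haR : a < R)
    (hf : DifferentiableOn ℂ f (closedAnnulus a R))
    (hfa : ∀ z : ℂ, ‖z‖ = a → ‖f z‖ ≤ Real.exp (p + s * Real.log a))
    (hfR : ∀ z : ℂ, ‖z‖ = R → ‖f z‖ ≤ Real.exp (p + s * Real.log R))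
    (hz : z ∈ closedAnnulus a R) : ‖f z‖ ≤ Real.exp (p + s * Real.log ‖z‖) := by
  have hR : 0 < R := ha.trans haR
  have hl : Real.log a < Real.log R := Real.log_lt_log ha haR
  have hz0 : z ≠ 0 := norm_pos_iff.1 (ha.trans_le hz.1)
  have hre : (Complex.log z).re = Real.log ‖z‖ := Complex.log_re z
  have hmaps : Set.MapsTo Complex.exp
      (Complex.HadamardThreeLines.verticalClosedStrip (Real.log a) (Real.log R))
      (closedAnnulus a R) := fun w hw ↦ by
    simp only [closedAnnulus, Set.mem_ofPred_eq, Complex.norm_exp, ← Real.log_le_iff_le_exp ha,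
      ← Real.le_log_iff_exp_le hR]
    exact hw
  have hdiff : DiffContOnCl ℂ (fun w ↦ f (Complex.exp w))
      (Complex.HadamardThreeLines.verticalStrip (Real.log a) (Real.log R)) := by
    refine (hf.comp Complex.differentiable_exp.differentiableOn (hmaps.mono_left ?_)).diffContOnCl
    exact closure_minimal (Set.preimage_mono Set.Ioo_subset_Icc_self)
      (isClosed_Icc.preimage Complex.continuous_re)
  have hbounded : ∃ B, ∀ z ∈ closedAnnulus a R, ‖f z‖ ≤ B :=
    ⟨_, fun z ↦ norm_le_of_norm_le_on_circles hf
      (fun z hz ↦ (hfa z hz).trans (le_max_left _ _))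
      fun z hz ↦ (hfR z hz).trans (le_max_right _ _)⟩
  obtain ⟨B, hB⟩ := hbounded
  have := Complex.HadamardThreeLines.norm_le_interp_of_mem_verticalClosedStrip'
    (f := fun w ↦ f (Complex.exp w)) (z := Complex.log z) hl
    (by
      rw [Complex.HadamardThreeLines.verticalClosedStrip, Set.mem_preimage, hre]
      exact ⟨Real.log_le_log ha hz.1, Real.log_le_log (norm_pos_iff.2 hz0) hz.2⟩) hdiff
    ⟨B, Set.forall_mem_image.2 fun w hw ↦ hB _ (hmaps hw)⟩
    (fun w hw ↦ hfa _ (by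
      rw [Complex.norm_exp, Set.mem_singleton_iff.1 (Set.mem_preimage.1 hw), Real.exp_log ha]))
    (fun w hw ↦ hfR _ (by
      rw [Complex.norm_exp, Set.mem_singleton_iff.1 (Set.mem_preimage.1 hw), Real.exp_log hR]))
  rw [Complex.exp_log hz0, hre, ← Real.exp_mul, ← Real.exp_mul, ← Real.exp_add] at this
  convert this using 2
  have := (sub_pos.2 hl).ne'
  field_simp
  ring

end Annulus

section Interpolation

open Polynomial

variable {E : Type*} [NormedAddCommGroup E] [NormedSpace ℂ E] {ι : Type*}
  {s : Finset ι} {y : ι → ℂ} {U : Set ℂ} {f : ℂ → E} {a R g g' T : ℝ} {z : ℂ}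

lemma exists_eq_nodal_smul [CompleteSpace E] (hy : Set.InjOn y s) (hU : ∀ j ∈ s, U ∈ nhds (y j))
    (hf : DifferentiableOn ℂ f U) (hzero : ∀ j ∈ s, f (y j) = 0) :
    ∃ Φ : ℂ → E, DifferentiableOn ℂ Φ U ∧ ∀ z, f z = (Lagrange.nodal s y).eval z • Φ z := by
  classical
  induction s using Finset.induction_on generalizing f with
  | empty => exact ⟨f, hf, fun z ↦ by simp⟩
  | insert i s hi ih =>
    have hfactor : ∀ z, f z = (z - y i) • dslope f (y i) z := fun z ↦ by
      rw [sub_smul_dslope, hzero i (s.mem_insert_self i), sub_zero]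
    obtain ⟨Φ, hΦ, hΦeq⟩ := ih (hy.mono (by simp)) (fun j hj ↦ hU j (Finset.mem_insert_of_mem hj))
      ((Complex.differentiableOn_dslope (hU i (s.mem_insert_self i))).2 hf) fun j hj ↦ by
        have hne : y j - y i ≠ 0 := sub_ne_zero.2 fun h ↦
          hi (hy (Finset.mem_insert_of_mem hj) (s.mem_insert_self i) h ▸ hj)
        have := hfactor (y j)
        rw [hzero j (Finset.mem_insert_of_mem hj)] at this
        exact (smul_eq_zero.1 this.symm).resolve_left hne
    refine ⟨Φ, hΦ, fun z ↦ ?_⟩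
    rw [hfactor, hΦeq, Lagrange.nodal_insert_eq_nodal hi, eval_mul, eval_sub, eval_X, eval_C,
      mul_smul]

variable [DecidableEq ι]

lemma norm_sum_basis_smul_le (hg : 0 < g) (hz : ∀ j ∈ s, g ≤ ‖z - y j‖) :
    ‖∑ j ∈ s, (Lagrange.basis s y j).eval z • f (y j)‖ ≤
      ‖(Lagrange.nodal s y).eval z‖ *
        ((∑ j ∈ s, ‖Lagrange.nodalWeight s y j‖ * ‖f (y j)‖) / g) := by
  rw [Finset.sum_div, Finset.mul_sum]
  refine (norm_sum_le _ _).trans (Finset.sum_le_sum fun j hj ↦ ?_)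
  have hzj : z ≠ y j := sub_ne_zero.1 (norm_pos_iff.1 (hg.trans_le (hz j hj)))
  rw [norm_smul, Lagrange.eval_basis_not_at_node hj hzj, norm_mul, norm_mul, norm_inv, mul_assoc,
    mul_right_comm _ _ ‖f (y j)‖, ← div_eq_mul_inv]
  gcongr
  exact hz j hj

/-- The remainder of Lagrange interpolation of `f`, divided by the nodal polynomial, is analytic on
the annulus, so the maximum principle carries the bound on the boundary circles inside. -/
lemma norm_le_norm_nodal_mul [CompleteSpace E] (hf : DifferentiableOn ℂ f (closedAnnulus a R))
    (hy : Set.InjOn y s) (hya : ∀ j ∈ s, a < ‖y j‖) (hyR : ∀ j ∈ s, ‖y j‖ < R) (hg : 0 < g)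
    (hgap : ∀ z : ℂ, ‖z‖ = a ∨ ‖z‖ = R → ∀ j ∈ s, g ≤ ‖z - y j‖)
    (hT : ∀ z : ℂ, ‖z‖ = a ∨ ‖z‖ = R → ‖f z‖ ≤ ‖(Lagrange.nodal s y).eval z‖ * T)
    (hz : z ∈ closedAnnulus a R) (hg' : 0 < g') (hzgap : ∀ j ∈ s, g' ≤ ‖z - y j‖) :
    ‖f z‖ ≤ ‖(Lagrange.nodal s y).eval z‖ *
      (T + (∑ j ∈ s, ‖Lagrange.nodalWeight s y j‖ * ‖f (y j)‖) * (g⁻¹ + g'⁻¹)) := by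
  set W := ∑ j ∈ s, ‖Lagrange.nodalWeight s y j‖ * ‖f (y j)‖
  set P : ℂ → E := fun z ↦ ∑ j ∈ s, (Lagrange.basis s y j).eval z • f (y j) with hP
  have hPnode : ∀ j ∈ s, P (y j) = f (y j) := fun j hj ↦ by
    simp only [hP]
    rw [Finset.sum_eq_single_of_mem j hj fun i _ hij ↦ by
      rw [Lagrange.eval_basis_of_ne hij hj, zero_smul], Lagrange.eval_basis_self hy hj, one_smul]
  obtain ⟨Φ, hΦ, hfΦ⟩ := exists_eq_nodal_smul (f := fun z ↦ f z - P z) hy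
    (fun j hj ↦ closedAnnulus_mem_nhds (hya j hj) (hyR j hj))
    (hf.sub (by rw [hP]; fun_prop)) fun j hj ↦ by rw [hPnode j hj, sub_self]
  have hboundary : ∀ z : ℂ, ‖z‖ = a ∨ ‖z‖ = R → ‖Φ z‖ ≤ T + W / g := fun z hz ↦ by
    have hnodal : 0 < ‖(Lagrange.nodal s y).eval z‖ := norm_pos_iff.2
      (Lagrange.eval_nodal_not_at_node fun j hj ↦
        sub_ne_zero.1 (norm_pos_iff.1 (hg.trans_le (hgap z hz j hj))))
    refine le_of_mul_le_mul_left ?_ hnodal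
    rw [← norm_smul, ← hfΦ z, mul_add]
    exact (norm_sub_le _ _).trans
      (add_le_add (hT z hz) (norm_sum_basis_smul_le hg (hgap z hz)))
  have hΦz := norm_le_of_norm_le_on_circles hΦ (fun z hz ↦ hboundary z (.inl hz))
    (fun z hz ↦ hboundary z (.inr hz)) hz
  calc ‖f z‖ = ‖(Lagrange.nodal s y).eval z • Φ z + P z‖ := by rw [← hfΦ z, sub_add_cancel]
    _ ≤ ‖(Lagrange.nodal s y).eval z‖ * (T + W / g) +
          ‖(Lagrange.nodal s y).eval z‖ * (W / g') :=
        norm_add_le_of_le (by rw [norm_smul]; gcongr) (norm_sum_basis_smul_le hg' hzgap)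
    _ = _ := by ring

end Interpolation

/-! ### Products over orbits of an irrational rotation -/

section OrbitProducts

variable {ρ : ℂ} {β κ : ℝ}

lemma norm_geom_sum_le (hρ : ‖ρ‖ = 1) (hρ1 : ρ ≠ 1) (N : ℕ) :
    ‖∑ i ∈ Finset.range N, ρ ^ i‖ ≤ 2 / ‖ρ - 1‖ := by
  rw [geom_sum_eq hρ1, norm_div]
  gcongr
  exact (norm_sub_le _ _).trans (by rw [norm_pow, hρ, one_pow, norm_one, one_add_one_eq_two])

lemma norm_sum_logTaylor_orbit_le (hρ : ‖ρ‖ = 1) (hρ' : ¬IsOfFinOrder ρ) {γ : ℂ} (hγ : ‖γ‖ ≤ 1)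
    (n N : ℕ) :
    ‖∑ i ∈ Finset.range N, Complex.logTaylor n (-(γ * ρ ^ i))‖ ≤
      ∑ j ∈ Finset.range n, 2 / ‖ρ ^ j - 1‖ := by
  simp only [Complex.logTaylor]
  rw [Finset.sum_comm]
  refine (norm_sum_le _ _).trans (Finset.sum_le_sum fun j _ ↦ ?_)
  rcases j.eq_zero_or_pos with rfl | hj
  · simp
  have hρj : ρ ^ j ≠ 1 := fun h ↦ hρ' (isOfFinOrder_iff_pow_eq_one.2 ⟨j, hj, h⟩)
  have hcoeff : ‖(-1 : ℂ) ^ (j + 1) * (-γ) ^ j / j‖ ≤ 1 := by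
    rw [norm_div, norm_mul, norm_pow, norm_pow, norm_neg, norm_one, one_pow, one_mul, norm_neg,
      Complex.norm_natCast]
    exact div_le_one_of_le₀ ((pow_le_one₀ (norm_nonneg _) hγ).trans (by exact_mod_cast hj))
      (Nat.cast_nonneg _)
  calc ‖∑ i ∈ Finset.range N, (-1 : ℂ) ^ (j + 1) * (-(γ * ρ ^ i)) ^ j / j‖
      = ‖(-1 : ℂ) ^ (j + 1) * (-γ) ^ j / j * ∑ i ∈ Finset.range N, (ρ ^ j) ^ i‖ := by
        rw [Finset.mul_sum]
        congr 1
        refine Finset.sum_congr rfl fun i _ ↦ ?_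
        rw [← neg_mul, mul_pow, pow_right_comm]
        ring
    _ ≤ 1 * (2 / ‖ρ ^ j - 1‖) := by
        rw [norm_mul]
        exact mul_le_mul hcoeff (norm_geom_sum_le (by rw [norm_pow, hρ, one_pow]) hρj N)
          (norm_nonneg _) zero_le_one
    _ = 2 / ‖ρ ^ j - 1‖ := one_mul _

lemma exists_norm_log_sub_logTaylor_le (hβ : β < 1) (hκ : 0 < κ) :
    ∃ n, ∀ w : ℂ, ‖w‖ ≤ β → ‖Complex.log (1 + w) - Complex.logTaylor (n + 1) w‖ ≤ κ := by
  obtain ⟨n, hn⟩ := exists_pow_lt_of_lt_one (show 0 < κ * (1 - β) by nlinarith) hβ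
  refine ⟨n, fun w hw ↦ (Complex.norm_log_sub_logTaylor_le n (hw.trans_lt hβ)).trans ?_⟩
  have hβ0 : 0 ≤ β := (norm_nonneg w).trans hw
  have hβ1 : 0 < 1 - β := sub_pos.2 hβ
  calc ‖w‖ ^ (n + 1) * (1 - ‖w‖)⁻¹ / (n + 1) ≤ ‖w‖ ^ (n + 1) * (1 - ‖w‖)⁻¹ :=
        div_le_self (mul_nonneg (by positivity) (inv_nonneg.2 (by linarith))) (by simp)
    _ ≤ β ^ n * (1 - β)⁻¹ := by
        gcongr ?_ * ?_
        · exact inv_nonneg.2 (by linarith)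
        · exact (pow_le_pow_left₀ (norm_nonneg w) hw _).trans
            (pow_le_pow_of_le_one hβ0 hβ.le n.le_succ)
        · gcongr
    _ ≤ κ := by rw [← div_eq_mul_inv, div_le_iff₀ hβ1]; exact hn.le

lemma exists_abs_sum_log_orbit_le (hρ : ‖ρ‖ = 1) (hρ' : ¬IsOfFinOrder ρ) (hβ : β < 1)
    (hκ : 0 < κ) :
    ∃ K : ℝ, ∀ (N : ℕ) (γ : ℂ), ‖γ‖ ≤ β →
      |∑ i ∈ Finset.range N, Real.log ‖1 - γ * ρ ^ i‖| ≤ κ * N + K := by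
  obtain ⟨n, hn⟩ := exists_norm_log_sub_logTaylor_le hβ hκ
  refine ⟨∑ j ∈ Finset.range (n + 1), 2 / ‖ρ ^ j - 1‖, fun N γ hγ ↦ ?_⟩
  have hre : ∑ i ∈ Finset.range N, Real.log ‖1 - γ * ρ ^ i‖ =
      (∑ i ∈ Finset.range N, Complex.log (1 + -(γ * ρ ^ i))).re := by
    simp only [Complex.re_sum, Complex.log_re, sub_eq_add_neg]
  have htail : ‖∑ i ∈ Finset.range N, (Complex.log (1 + -(γ * ρ ^ i)) -
      Complex.logTaylor (n + 1) (-(γ * ρ ^ i)))‖ ≤ κ * N := by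
    refine (norm_sum_le_of_le _ fun i _ ↦ hn _ ?_).trans_eq (by simp [mul_comm])
    rwa [norm_neg, norm_mul_pow_of_norm_eq_one hρ]
  have hmain := norm_sum_logTaylor_orbit_le hρ hρ' (hγ.trans hβ.le) (n + 1) N
  rw [hre]
  refine (Complex.abs_re_le_norm _).trans ?_
  rw [Finset.sum_sub_distrib] at htail
  calc _ ≤ _ := norm_le_norm_sub_add _ _
    _ ≤ _ := add_le_add htail hmain

lemma exists_prod_norm_one_sub_orbit_bounds (hρ : ‖ρ‖ = 1) (hρ' : ¬IsOfFinOrder ρ) (hβ : β < 1)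
    (hκ : 0 < κ) :
    ∃ K : ℝ, 0 < K ∧ ∀ (N : ℕ) (γ : ℂ), ‖γ‖ ≤ β →
      Real.exp (-κ * N) / K ≤ ∏ j ∈ Finset.range N, ‖1 - γ * ρ ^ j‖ ∧
      ∏ j ∈ Finset.range N, ‖1 - γ * ρ ^ j‖ ≤ K * Real.exp (κ * N) := by
  obtain ⟨K, hK⟩ := exists_abs_sum_log_orbit_le hρ hρ' hβ hκ
  refine ⟨Real.exp K, Real.exp_pos _, fun N γ hγ ↦ ?_⟩
  have hpos : ∀ i, 0 < ‖1 - γ * ρ ^ i‖ := fun i ↦ by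
    have hlt : ‖γ * ρ ^ i‖ < 1 := by rw [norm_mul_pow_of_norm_eq_one hρ]; exact hγ.trans_lt hβ
    exact norm_pos_iff.2 (sub_ne_zero.2 fun h ↦ by simp [← h] at hlt)
  have hexp : ∏ j ∈ Finset.range N, ‖1 - γ * ρ ^ j‖ =
      Real.exp (∑ i ∈ Finset.range N, Real.log ‖1 - γ * ρ ^ i‖) := by
    simp only [Real.exp_sum, Real.exp_log (hpos _)]
  have hsum := abs_le.1 (hK N γ hγ)
  rw [hexp, ← Real.exp_sub, ← Real.exp_add]
  constructor <;> gcongr <;> linarith [hsum.1, hsum.2]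

lemma exists_prod_norm_sub_orbit_bounds (hρ : ‖ρ‖ = 1) (hρ' : ¬IsOfFinOrder ρ) {t : ℝ}
    (ht : t ≠ 1) (hκ : 0 < κ) :
    ∃ K : ℝ, 0 < K ∧ ∀ (N : ℕ) (ξ z : ℂ), ‖ξ‖ = 1 → ‖z‖ = t →
      max t 1 ^ N * (Real.exp (-κ * N) / K) ≤ ∏ j ∈ Finset.range N, ‖z - ξ * ρ ^ j‖ ∧
      ∏ j ∈ Finset.range N, ‖z - ξ * ρ ^ j‖ ≤ max t 1 ^ N * (K * Real.exp (κ * N)) := by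
  have hρ0 : ρ ≠ 0 := norm_ne_zero_iff.1 (by rw [hρ]; exact one_ne_zero)
  rcases ht.lt_or_gt with ht | ht
  · obtain ⟨K, hK, h⟩ := exists_prod_norm_one_sub_orbit_bounds (ρ := ρ⁻¹)
      (by rw [norm_inv, hρ, inv_one])
      (fun h ↦ hρ' <| isOfFinOrder_iff_pow_eq_one.2 <|
        (isOfFinOrder_iff_pow_eq_one.1 h).imp fun n ↦ by simp) ht hκ
    refine ⟨K, hK, fun N ξ z hξ hz ↦ ?_⟩
    have hfactor : ∀ j, ‖z - ξ * ρ ^ j‖ = ‖1 - z / ξ * ρ⁻¹ ^ j‖ := fun j ↦ by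
      have hξ0 : ξ ≠ 0 := norm_ne_zero_iff.1 (by rw [hξ]; exact one_ne_zero)
      have hmul : z - ξ * ρ ^ j = -(ξ * ρ ^ j) * (1 - z / ξ * ρ⁻¹ ^ j) := by
        rw [inv_pow]
        field_simp [pow_ne_zero j hρ0]
        ring
      rw [hmul, norm_mul, norm_neg, norm_mul_pow_of_norm_eq_one hρ, hξ, one_mul]
    simpa only [hfactor, max_eq_right ht.le, one_pow, one_mul] using
      h N (z / ξ) (by rw [norm_div, hξ, hz, div_one])
  · obtain ⟨K, hK, h⟩ := exists_prod_norm_one_sub_orbit_bounds hρ hρ' (inv_lt_one_of_one_lt₀ ht) hκ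
    refine ⟨K, hK, fun N ξ z hξ hz ↦ ?_⟩
    have ht0 : 0 < t := one_pos.trans ht
    have hfactor : ∀ j, ‖z - ξ * ρ ^ j‖ = t * ‖1 - ξ / z * ρ ^ j‖ := fun j ↦ by
      have hz0 : z ≠ 0 := norm_ne_zero_iff.1 (by rw [hz]; exact ht0.ne')
      rw [← hz, ← norm_mul]
      congr 1
      field_simp
    simp only [hfactor, max_eq_left ht.le, Finset.prod_mul_distrib, Finset.prod_const,
      Finset.card_range]
    obtain ⟨hlower, hupper⟩ := h N (ξ / z) (by rw [norm_div, hξ, hz, one_div])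
    exact ⟨by gcongr, by gcongr⟩

end OrbitProducts

section NodeSeparation

/-- A concave function vanishing at `0` and `π` loses at most a factor `1 - δ / dist` towards
either end of `[0, π]` when its argument moves by `δ`. -/
lemma mul_sin_le_sin_add {x e δ : ℝ} (he : |e| ≤ δ) (hx : 0 < x) (hxπ : x < π) (hδ : δ ≤ x)
    (hδπ : δ ≤ π - x) :
    (1 - δ / x) * (1 - δ / (π - x)) * Real.sin x ≤ Real.sin (x + e) := by
  wlog h : e ≤ 0 generalizing x e
  · have := this (x := π - x) (e := -e) (by rwa [abs_neg]) (by linarith) (by linarith) hδπ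
      (by linarith) (by linarith)
    rwa [sub_sub_cancel, Real.sin_pi_sub, ← sub_eq_add_neg, sub_sub, Real.sin_pi_sub,
      mul_comm (1 - _)] at this
  have hδ0 : 0 ≤ δ := (abs_nonneg e).trans he
  have hsin : 0 ≤ Real.sin x := Real.sin_nonneg_of_nonneg_of_le_pi hx.le hxπ.le
  have hex : -e / x ≤ δ / x := by rw [abs_of_nonpos h] at he; gcongr
  have hδx : δ / x ≤ 1 := (div_le_one hx).2 hδ
  have hδπx : δ / (π - x) ≤ 1 := (div_le_one (sub_pos.2 hxπ)).2 hδπ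
  have hδπx0 : 0 ≤ δ / (π - x) := div_nonneg hδ0 (sub_pos.2 hxπ).le
  have hconcave := strictConcaveOn_sin_Icc.concaveOn.2 ⟨hx.le, hxπ.le⟩
    (show (0 : ℝ) ∈ Set.Icc 0 π from ⟨le_rfl, Real.pi_pos.le⟩)
    (show 0 ≤ 1 - -e / x by linarith) (show 0 ≤ -e / x from div_nonneg (by linarith) hx.le)
    (by ring)
  simp only [smul_eq_mul, Real.sin_zero, mul_zero, add_zero] at hconcave
  calc (1 - δ / x) * (1 - δ / (π - x)) * Real.sin x ≤ (1 - -e / x) * 1 * Real.sin x := by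
        gcongr <;> linarith
    _ ≤ Real.sin ((1 - -e / x) * x) := by rwa [mul_one]
    _ = Real.sin (x + e) := by congr 1; field_simp; ring

lemma one_div_le_prod_one_sub {q : ℝ} (hq : 1 ≤ q) {m : ℕ} (hm : 1 ≤ m) :
    1 / (q * m) ≤ ∏ r ∈ Finset.Ico 1 (m + 1), (1 - (q - 1) / (q * r)) := by
  induction m, hm using Nat.le_induction with
  | base =>
    have : q ≠ 0 := by positivity
    simp [sub_div, this]
  | succ m hm ih =>
    have hm0 : (0 : ℝ) < m := by exact_mod_cast hm
    rw [Finset.prod_Ico_succ_top (by omega)]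
    have hfactor : (m : ℝ) / (m + 1) ≤ 1 - (q - 1) / (q * (m + 1 : ℕ)) := by
      push_cast
      rw [le_sub_iff_add_le, div_add_div _ _ (by positivity) (by positivity),
        div_le_one (by positivity)]
      nlinarith
    calc 1 / (q * (m + 1 : ℕ)) = 1 / (q * m) * (m / (m + 1)) := by push_cast; field_simp
      _ ≤ _ := mul_le_mul ih hfactor (by positivity) ((by positivity : 0 ≤ 1 / (q * m)).trans ih)

lemma norm_fourierChar_sub_one (t : ℝ) : ‖(𝐞 t : ℂ) - 1‖ = 2 * |Real.sin (π * t)| := by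
  have := Complex.norm_exp_I_mul_ofReal_sub_one (2 * π * t)
  rw [Real.fourierChar_apply, mul_comm, this, Real.norm_eq_abs, abs_mul, abs_two]
  ring_nf

lemma norm_fourierChar_pow_sub_pow (b : ℝ) (j i : ℕ) :
    ‖(𝐞 b : ℂ) ^ j - (𝐞 b : ℂ) ^ i‖ = 2 * |Real.sin (π * ((j - i) * b))| := by
  have hquot : (𝐞 ((j - i) * b) : ℂ) * (𝐞 b : ℂ) ^ i = (𝐞 b : ℂ) ^ j := by
    rw [← Circle.coe_pow, ← Circle.coe_pow, ← Circle.coe_mul, ← AddChar.map_nsmul_eq_pow,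
      ← AddChar.map_nsmul_eq_pow, ← AddChar.map_add_eq_mul, nsmul_eq_mul, nsmul_eq_mul, sub_mul,
      sub_add_cancel]
  rw [← norm_fourierChar_sub_one, ← hquot, ← sub_one_mul, norm_mul, norm_pow, Circle.norm_coe,
    one_pow, mul_one]

lemma prod_two_mul_sin_pi_div (n : ℕ) :
    ∏ r ∈ Finset.Ico 1 (n + 1), 2 * Real.sin (π * (r / (n + 1 : ℕ))) = (n + 1 : ℕ) := by
  have hprod := congrArg norm
    (Complex.isPrimitiveRoot_exp (n + 1) n.succ_ne_zero).prod_one_sub_pow_eq_order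
  have hcard : ‖(n + 1 : ℂ)‖ = (n + 1 : ℕ) := by exact_mod_cast Complex.norm_natCast (n + 1)
  rw [norm_prod, hcard] at hprod
  rw [Finset.prod_Ico_eq_prod_range, Nat.add_sub_cancel]
  refine (Finset.prod_congr rfl fun k hk ↦ ?_).trans hprod
  have hchar : Complex.exp (2 * π * Complex.I / (n + 1 : ℕ)) ^ (k + 1) =
      𝐞 ((1 + k : ℕ) / (n + 1 : ℕ)) := by
    rw [← Complex.exp_nat_mul, Real.fourierChar_apply]
    push_cast
    ring_nf
  have hle : ((1 + k : ℕ) : ℝ) / (n + 1 : ℕ) ≤ 1 :=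
    div_le_one_of_le₀ (by exact_mod_cast (by have := Finset.mem_range.1 hk; omega)) (by positivity)
  rw [norm_sub_rev, hchar, norm_fourierChar_sub_one, abs_of_nonneg]
  exact Real.sin_nonneg_of_nonneg_of_le_pi (by positivity)
    (mul_le_of_le_one_right Real.pi_pos.le hle)

lemma injOn_emod_toNat {p : ℤ} {q j : ℕ} (hpq : IsCoprime p q) :
    Set.InjOn (fun i : ℕ ↦ ((j - i) * p % q : ℤ).toNat) (Finset.range q) := by
  intro i hi i' hi' h
  have hi : i < q := Finset.mem_range.1 hi
  have hi' : i' < q := Finset.mem_range.1 hi'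
  have hq : (q : ℤ) ≠ 0 := by omega
  have hmod : (j - i) * p ≡ (j - i') * p [ZMOD q] := by
    rw [Int.ModEq, ← Int.toNat_of_nonneg (Int.emod_nonneg ((j - i) * p) hq),
      ← Int.toNat_of_nonneg (Int.emod_nonneg ((j - i') * p) hq)]
    exact congrArg _ h
  have hdvd : (q : ℤ) ∣ i - i' := hpq.symm.dvd_of_dvd_mul_right (by
    have := hmod.dvd
    rwa [show (j - i') * p - (j - i) * p = (i - i') * p by ring] at this)
  have := Int.eq_zero_of_abs_lt_dvd hdvd (by rw [abs_lt]; omega)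
  omega

/-- For fixed `j`, the residues of `(j - i) p` modulo `q` run once through `1, …, q - 1`. -/
lemma image_erase_range_emod_toNat {p : ℤ} {q j : ℕ} (hpq : IsCoprime p q) (hj : j < q) :
    ((Finset.range q).erase j).image (fun i : ℕ ↦ ((j - i) * p % q : ℤ).toNat) =
      Finset.Ico 1 q := by
  have hinj := injOn_emod_toNat (j := j) hpq
  have hq : (0 : ℤ) < q := by omega
  refine Finset.eq_of_subset_of_card_le (fun r hr ↦ ?_) ?_
  · obtain ⟨i, hi, rfl⟩ := Finset.mem_image.1 hr
    obtain ⟨hij, hi⟩ := Finset.mem_erase.1 hi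
    have hne : ((j - i) * p % q : ℤ).toNat ≠ 0 := fun h ↦
      hij (hinj hi (Finset.mem_range.2 hj) (by simpa using h))
    have hnonneg := Int.emod_nonneg ((j - i) * p) hq.ne'
    have hlt := Int.emod_lt_of_pos ((j - i) * p) hq
    exact Finset.mem_Ico.2 ⟨by omega, by omega⟩
  · rw [Finset.card_image_of_injOn (hinj.mono (by simp)),
      Finset.card_erase_of_mem (Finset.mem_range.2 hj)]
    simp

lemma abs_sin_pi_mul_eq_emod {b : ℝ} {q : ℕ} (hq : 0 < q) (p m : ℤ) :
    |Real.sin (π * (m * b))| =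
      |Real.sin (π * ((m * p % q : ℤ).toNat / q) + π * (m * (b - p / q)))| := by
  have hq' : (q : ℝ) ≠ 0 := by positivity
  have hresidue : (((m * p % q : ℤ).toNat : ℤ) : ℝ) + q * (m * p / q : ℤ) = m * p := by
    rw [Int.toNat_of_nonneg (Int.emod_nonneg _ (by omega))]
    exact_mod_cast Int.emod_add_mul_ediv (m * p) q
  have hshift : π * (m * b) =
      π * ((m * p % q : ℤ).toNat / q) + π * (m * (b - p / q)) + (m * p / q : ℤ) * π := by
    rw [Int.cast_natCast] at hresidue
    field_simp
    linear_combination -hresidue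
  rw [hshift, Real.sin_add_int_mul_pi, abs_mul, abs_zpow, abs_neg, abs_one, one_zpow, one_mul]

/-- The chord `2 sin (π r / q)` of a regular `q`-gon inscribed in the unit circle, diminished by the
factors that `mul_sin_le_sin_add` loses when its endpoints are moved by less than `1 / q`. -/
noncomputable def shrunkChord (q r : ℕ) : ℝ :=
  (1 - (q - 1) / (q * r)) * (1 - (q - 1) / (q * (q - r : ℕ))) * (2 * Real.sin (π * (r / q)))

lemma shrunkChord_nonneg {q r : ℕ} (hr : r ∈ Finset.Ico 1 q) : 0 ≤ shrunkChord q r := by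
  obtain ⟨hr1, hrq⟩ := Finset.mem_Ico.1 hr
  have hq : (0 : ℝ) < q := by exact_mod_cast r.zero_le.trans_lt hrq
  have hloss : ∀ s : ℕ, 1 ≤ s → (0 : ℝ) ≤ 1 - (q - 1) / (q * s) := fun s hs ↦ by
    have hs : (1 : ℝ) ≤ s := by exact_mod_cast hs
    rw [sub_nonneg, div_le_one (by positivity)]
    nlinarith
  have hsin : 0 ≤ Real.sin (π * (r / q)) :=
    Real.sin_nonneg_of_nonneg_of_le_pi (by positivity) (mul_le_of_le_one_right Real.pi_pos.le
      (div_le_one_of_le₀ (by exact_mod_cast hrq.le) hq.le))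
  exact mul_nonneg (mul_nonneg (hloss r hr1) (hloss (q - r) (by omega))) (by positivity)

lemma shrunkChord_le_norm_sub {b : ℝ} {p : ℤ} {q : ℕ} (hb : |b - p / q| ≤ 1 / (q : ℝ) ^ 2)
    {i j : ℕ} (hi : i < q) (hj : j < q) {r : ℕ} (hr : r ∈ Finset.Ico 1 q)
    (hir : ((j - i) * p % q : ℤ).toNat = r) :
    shrunkChord q r ≤ ‖(𝐞 b : ℂ) ^ j - (𝐞 b : ℂ) ^ i‖ := by
  obtain ⟨hr1, hrq⟩ := Finset.mem_Ico.1 hr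
  have hq : (0 : ℝ) < q := by exact_mod_cast (by omega : 0 < q)
  have hr0 : (1 : ℝ) ≤ r := by exact_mod_cast hr1
  have hqr : (1 : ℝ) ≤ (q - r : ℕ) := by exact_mod_cast (by omega : 1 ≤ q - r)
  have hqr' : ((q - r : ℕ) : ℝ) = q - r := Nat.cast_sub hrq.le
  have hji : |((j - i : ℤ) : ℝ)| ≤ q - 1 := by
    rw [← Int.cast_abs]
    have : |(j - i : ℤ)| ≤ q - 1 := abs_le.2 ⟨by omega, by omega⟩
    exact_mod_cast this
  have hx' : π - π * (r / q) = π * ((q - r : ℕ) / q) := by rw [hqr']; field_simp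
  have hx0 : 0 < π * (r / q : ℝ) := by positivity
  have hx'0 : 0 < π - π * (r / q : ℝ) := by rw [hx']; positivity
  have herr : |π * ((j - i : ℤ) * (b - p / q))| ≤ π * ((q - 1) / (q : ℝ) ^ 2) := by
    rw [abs_mul, abs_mul, abs_of_pos Real.pi_pos, ← mul_one_div ((q : ℝ) - 1)]
    gcongr
    linarith [abs_nonneg ((j - i : ℤ) : ℝ)]
  have hle : ∀ s : ℝ, 1 ≤ s → π * ((q - 1) / (q : ℝ) ^ 2) ≤ π * (s / q) := fun s hs ↦ by
    gcongr π * ?_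
    rw [div_le_div_iff₀ (by positivity) hq]
    nlinarith [mul_pos hq hq]
  have hdiv : ∀ s : ℝ, 1 ≤ s → π * ((q - 1) / (q : ℝ) ^ 2) / (π * (s / q)) = (q - 1) / (q * s) :=
    fun s hs ↦ by
      have : s ≠ 0 := by positivity
      field_simp
  have hsin := mul_sin_le_sin_add herr hx0 (sub_pos.1 hx'0) (hle r hr0) (by
    rw [hx']; exact hle _ hqr)
  rw [hx', hdiv r hr0, hdiv _ hqr] at hsin
  have hnorm := norm_fourierChar_pow_sub_pow b j i
  rw [show ((j : ℝ) - i) = ((j - i : ℤ) : ℝ) by push_cast; rfl,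
    abs_sin_pi_mul_eq_emod (q := q) (by omega) p, hir] at hnorm
  rw [hnorm, shrunkChord]
  linarith [hsin.trans (le_abs_self _)]

lemma one_div_cube_le_prod_shrunkChord {q : ℕ} (hq : 0 < q) :
    1 / (q : ℝ) ^ 3 ≤ ∏ r ∈ Finset.Ico 1 q, shrunkChord q r := by
  rcases Nat.exists_eq_add_one.2 hq with ⟨n, rfl⟩
  rcases n.eq_zero_or_pos with rfl | hn
  · simp
  set q := n + 1
  have hq1 : (1 : ℝ) ≤ q := by exact_mod_cast hq
  have hn0 : (0 : ℝ) < n := by exact_mod_cast hn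
  have hloss := one_div_le_prod_one_sub hq1 (m := n) hn
  have hreflect : ∏ r ∈ Finset.Ico 1 q, (1 - (q - 1) / (q * (q - r : ℕ) : ℝ)) =
      ∏ r ∈ Finset.Ico 1 q, (1 - (q - 1) / (q * r : ℝ)) := by
    simpa using Finset.prod_Ico_reflect (fun r ↦ 1 - (q - 1) / (q * r : ℝ)) 1 q.le_succ
  calc 1 / (q : ℝ) ^ 3 ≤ 1 / (q * n) * (1 / (q * n)) * q := by
        have hnq : (n : ℝ) ≤ q := by exact_mod_cast n.le_succ
        rw [one_div_mul_one_div, one_div_mul_eq_div,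
          div_le_div_iff₀ (by positivity) (by positivity)]
        nlinarith [mul_le_mul hnq hnq hn0.le (by linarith), pow_pos (hq1.trans_lt' one_pos) 2]
    _ ≤ (∏ r ∈ Finset.Ico 1 q, (1 - (q - 1) / (q * r : ℝ))) *
          (∏ r ∈ Finset.Ico 1 q, (1 - (q - 1) / (q * (q - r : ℕ) : ℝ))) * q := by
        rw [hreflect]
        have hpos : (0 : ℝ) ≤ 1 / (q * n) := by positivity
        exact mul_le_mul_of_nonneg_right (mul_le_mul hloss hloss hpos (hpos.trans hloss))
          (by positivity)
    _ = ∏ r ∈ Finset.Ico 1 q, shrunkChord q r := by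
        simp only [shrunkChord]
        rw [Finset.prod_mul_distrib, Finset.prod_mul_distrib, prod_two_mul_sin_pi_div]

/-- The points `ρⁱ` are compared with the vertices of a regular `q`-gon. -/
lemma one_div_cube_le_prod_norm_sub {b : ℝ} {p : ℤ} {q : ℕ} (hpq : IsCoprime p q)
    (hb : |b - p / q| ≤ 1 / (q : ℝ) ^ 2) {j : ℕ} (hj : j < q) :
    1 / (q : ℝ) ^ 3 ≤ ∏ i ∈ (Finset.range q).erase j, ‖(𝐞 b : ℂ) ^ j - (𝐞 b : ℂ) ^ i‖ := by
  set φ : ℕ → ℕ := fun i ↦ ((j - i) * p % q : ℤ).toNat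
  have hφ : ∀ i ∈ (Finset.range q).erase j, φ i ∈ Finset.Ico 1 q := fun i hi ↦
    image_erase_range_emod_toNat hpq hj ▸ Finset.mem_image_of_mem φ hi
  calc 1 / (q : ℝ) ^ 3 ≤ ∏ r ∈ Finset.Ico 1 q, shrunkChord q r :=
        one_div_cube_le_prod_shrunkChord (by omega)
    _ = ∏ i ∈ (Finset.range q).erase j, shrunkChord q (φ i) := by
        rw [← image_erase_range_emod_toNat hpq hj,
          Finset.prod_image ((injOn_emod_toNat hpq).mono (by simp))]
    _ ≤ ∏ i ∈ (Finset.range q).erase j, ‖(𝐞 b : ℂ) ^ j - (𝐞 b : ℂ) ^ i‖ :=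
        Finset.prod_le_prod (fun i hi ↦ shrunkChord_nonneg (hφ i hi)) fun i hi ↦
          shrunkChord_le_norm_sub hb (Finset.mem_range.1 (Finset.mem_of_mem_erase hi)) hj
            (hφ i hi) rfl

lemma exists_rat_den_gt_abs_sub_le {b : ℝ} (hb : Irrational b) (n : ℕ) :
    ∃ r : ℚ, n < r.den ∧ |b - r| ≤ 1 / (r.den : ℝ) ^ 2 := by
  obtain ⟨ε, hdist, hε⟩ := ((hb.eventually_forall_le_dist_cast_rat_of_den_le n).filter_mono
    nhdsWithin_le_nhds).and (self_mem_nhdsWithin (a := (0 : ℝ)) (s := Set.Ioi 0)) |>.exists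
  obtain ⟨m, hm⟩ := exists_nat_one_div_lt hε
  obtain ⟨r, hr, hden⟩ := Real.exists_rat_abs_sub_le_and_den_le b m.succ_pos
  have hr0 : (0 : ℝ) < r.den := by exact_mod_cast r.den_pos
  refine ⟨r, not_le.1 fun hrn ↦ ?_, hr.trans ?_⟩
  · refine (hdist r hrn).not_gt (lt_of_le_of_lt ?_ hm)
    rw [Real.dist_eq]
    refine hr.trans (one_div_le_one_div_of_le (by positivity) ?_)
    have : (1 : ℝ) ≤ r.den := by exact_mod_cast r.den_pos
    push_cast
    nlinarith
  · refine one_div_le_one_div_of_le (by positivity) ?_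
    have : (r.den : ℝ) ≤ (m.succ : ℕ) := by exact_mod_cast hden
    nlinarith

lemma not_isOfFinOrder_fourierChar {b : ℝ} (hb : Irrational b) : ¬IsOfFinOrder (𝐞 b : ℂ) := by
  rw [isOfFinOrder_iff_pow_eq_one]
  rintro ⟨n, hn, h⟩
  rw [← Circle.coe_pow, ← AddChar.map_nsmul_eq_pow, nsmul_eq_mul, Real.fourierChar_apply,
    Complex.exp_eq_one_iff] at h
  obtain ⟨m, hm⟩ := h
  refine (hb.natCast_mul hn.ne').ne_int m ?_
  have h2π : (2 * π * Complex.I : ℂ) ≠ 0 := Complex.two_pi_I_ne_zero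
  have := mul_right_cancel₀ h2π
    (show ((n * b : ℝ) : ℂ) * (2 * π * Complex.I) = m * (2 * π * Complex.I) by
      rw [← hm]; push_cast; ring)
  exact_mod_cast this

end NodeSeparation

section OrbitInterpolation

variable {A : Type*} [NormedRing A] [NormedAlgebra ℂ A] {F : ℂ → A} {b a R c f τ κ B : ℝ}

lemma exists_pow_four_mul_exp_le (hκ : 0 < κ) :
    ∃ C : ℝ, 0 < C ∧ ∀ (c : ℝ) (k : ℕ), (k : ℝ) ^ 4 * Real.exp (c * k) ≤
      C * Real.exp ((c + κ) * k) := by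
  refine ⟨24 / κ ^ 4, by positivity, fun c k ↦ ?_⟩
  have hpow := Real.pow_div_factorial_le_exp (κ * k) (by positivity) 4
  have hfactorial : (Nat.factorial 4 : ℝ) = 24 := by norm_num [Nat.factorial]
  rw [hfactorial, div_le_iff₀ (by norm_num), mul_pow] at hpow
  rw [add_mul, Real.exp_add, mul_comm (Real.exp (c * k)), ← mul_assoc]
  gcongr
  rw [div_mul_eq_mul_div, le_div_iff₀ (by positivity)]
  linarith

lemma exists_norm_pow_smul_cocycle_le (hb : Irrational b) (hκ : 0 < κ) {t : ℝ} (ht : 0 < t)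
    (ht1 : t ≠ 1) (hF : HasGrowthBound F (𝐞 b) t c) :
    ∃ C : ℝ, 0 < C ∧ ∀ (k N s : ℕ) (ξ z : ℂ), N ≤ k → ‖ξ‖ = 1 → ‖z‖ = t →
      ‖z ^ s • cocycle F (𝐞 b) k z‖ ≤ (∏ j ∈ Finset.range N, ‖z - ξ * (𝐞 b : ℂ) ^ j‖) *
        (C * Real.exp (s * Real.log t - N * Real.log (max t 1) + (c + κ) * k)) := by
  obtain ⟨C, hC, hF⟩ := hF
  obtain ⟨K, hK, hprod⟩ := exists_prod_norm_sub_orbit_bounds (Circle.norm_coe (𝐞 b))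
    (not_isOfFinOrder_fourierChar hb) ht1 hκ
  refine ⟨C * K, by positivity, fun k N s ξ z hN hξ hz ↦ ?_⟩
  have hmax : 0 < max t 1 := lt_max_of_lt_left ht
  calc ‖z ^ s • cocycle F (𝐞 b) k z‖ ≤ t ^ s * (C * Real.exp (c * k)) := by
        rw [norm_smul, norm_pow, hz]
        gcongr
        exact hF k z hz
    _ = C * Real.exp (s * Real.log t + c * k) := by
        rw [Real.exp_add, Real.exp_nat_mul, Real.exp_log ht]
        ring
    _ ≤ C * Real.exp (N * Real.log (max t 1) + -κ * N +
          (s * Real.log t - N * Real.log (max t 1) + (c + κ) * k)) := by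
        have : κ * N ≤ κ * k := by gcongr
        refine mul_le_mul_of_nonneg_left (Real.exp_le_exp.2 ?_) hC.le
        linarith
    _ = max t 1 ^ N * (Real.exp (-κ * N) / K) *
          (C * K * Real.exp (s * Real.log t - N * Real.log (max t 1) + (c + κ) * k)) := by
        rw [Real.exp_add, Real.exp_add, Real.exp_nat_mul, Real.exp_log hmax]
        field_simp
    _ ≤ _ := by
        gcongr
        exact (hprod N ξ z hξ hz).1

lemma norm_nodalWeight_orbit_le {r : ℚ} (hr : |b - r| ≤ 1 / (r.den : ℝ) ^ 2) {ξ : ℂ}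
    (hξ : ‖ξ‖ = 1) {j : ℕ} (hj : j < r.den) :
    ‖Lagrange.nodalWeight (Finset.range r.den) (fun i ↦ ξ * (𝐞 b : ℂ) ^ i) j‖ ≤
      (r.den : ℝ) ^ 3 := by
  have hsep := one_div_cube_le_prod_norm_sub (Int.isCoprime_iff_gcd_eq_one.2 r.reduced)
    (by rwa [← Rat.cast_def]) hj
  simp only [Lagrange.nodalWeight, norm_prod, norm_inv, ← mul_sub, norm_mul, hξ, one_mul,
    Finset.prod_inv_distrib]
  rw [one_div] at hsep
  exact inv_le_of_inv_le₀ (by have := r.den_pos; positivity) hsep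

lemma sum_norm_nodalWeight_orbit_mul_le {r : ℚ} (hr : |b - r| ≤ 1 / (r.den : ℝ) ^ 2) {ξ : ℂ}
    (hξ : ‖ξ‖ = 1) {x : ℕ → ℝ} {M : ℝ} (hx0 : ∀ j, 0 ≤ x j) (hx : ∀ j < r.den, x j ≤ M) :
    ∑ j ∈ Finset.range r.den,
      ‖Lagrange.nodalWeight (Finset.range r.den) (fun i ↦ ξ * (𝐞 b : ℂ) ^ i) j‖ * x j ≤
      (r.den : ℝ) ^ 4 * M := by
  refine (Finset.sum_le_card_nsmul _ _ ((r.den : ℝ) ^ 3 * M) fun j hj ↦ ?_).trans_eq ?_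
  · have hj := Finset.mem_range.1 hj
    exact mul_le_mul (norm_nodalWeight_orbit_le hr hξ hj) (hx j hj) (hx0 j) (by positivity)
  · rw [Finset.card_range, nsmul_eq_mul]
    ring

lemma injOn_orbit (hb : Irrational b) {ξ : ℂ} (hξ : ‖ξ‖ = 1) (s : Set ℕ) :
    Set.InjOn (fun i ↦ ξ * (𝐞 b : ℂ) ^ i) s := by
  have hξ0 : ξ ≠ 0 := norm_ne_zero_iff.1 (by rw [hξ]; exact one_ne_zero)
  have hinj : Function.Injective fun i : ℕ ↦ (𝐞 b : ℂ) ^ i := fun i j hij ↦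
    injective_pow_iff_not_isOfFinOrder (x := (𝐞 b : Circle)).2
      (fun h ↦ not_isOfFinOrder_fourierChar hb (Circle.coeHom.isOfFinOrder h))
      (Circle.ext (by simpa only [Circle.coe_pow] using hij))
  exact ((mul_right_injective₀ hξ0).comp hinj).injOn

lemma exists_prod_norm_sub_orbit_le (hb : Irrational b) (hκ : 0 < κ) :
    ∃ K : ℝ, 0 < K ∧ ∀ (N : ℕ) (ξ z : ℂ), ‖ξ‖ = 1 → ‖z‖ = Real.exp (-κ) ∨ ‖z‖ = Real.exp κ →
      ∏ j ∈ Finset.range N, ‖z - ξ * (𝐞 b : ℂ) ^ j‖ ≤ K * Real.exp (2 * κ * N) := by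
  have hcircle : ∀ x : ℝ, x ≠ 0 → x ≤ κ → ∃ K : ℝ, 0 < K ∧ ∀ (N : ℕ) (ξ z : ℂ), ‖ξ‖ = 1 →
      ‖z‖ = Real.exp x →
      ∏ j ∈ Finset.range N, ‖z - ξ * (𝐞 b : ℂ) ^ j‖ ≤ K * Real.exp (2 * κ * N) := fun x hx hxκ ↦ by
    obtain ⟨K, hK, hprod⟩ := exists_prod_norm_sub_orbit_bounds (Circle.norm_coe (𝐞 b))
      (not_isOfFinOrder_fourierChar hb) (mt (Real.exp_eq_one_iff x).1 hx) hκ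
    refine ⟨K, hK, fun N ξ z hξ hz ↦ (hprod N ξ z hξ hz).2.trans ?_⟩
    have hmax : max (Real.exp x) 1 ≤ Real.exp κ :=
      max_le (Real.exp_le_exp.2 hxκ) (Real.one_le_exp hκ.le)
    calc max (Real.exp x) 1 ^ N * (K * Real.exp (κ * N))
        ≤ Real.exp κ ^ N * (K * Real.exp (κ * N)) := by gcongr
      _ = K * Real.exp (2 * κ * N) := by
        rw [← Real.exp_nat_mul, mul_left_comm, ← Real.exp_add]
        ring_nf
  obtain ⟨K₁, hK₁, h₁⟩ := hcircle (-κ) (by linarith) (by linarith)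
  obtain ⟨K₂, -, h₂⟩ := hcircle κ hκ.ne' le_rfl
  refine ⟨max K₁ K₂, lt_max_of_lt_left hK₁, fun N ξ z hξ hz ↦ ?_⟩
  rcases hz with hz | hz
  · exact (h₁ N ξ z hξ hz).trans (by gcongr; exact le_max_left _ _)
  · exact (h₂ N ξ z hξ hz).trans (by gcongr; exact le_max_right _ _)

lemma exists_norm_pow_smul_cocycle_le_on_circles (hb : Irrational b) (ha : 0 < a) (ha1 : a < 1)
    (hR1 : 1 < R) (hκ : 0 < κ) (hκR : 10 * κ ≤ τ / 4 * Real.log R)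
    (hκa : 10 * κ ≤ τ / 4 * -Real.log a) (hgR : HasGrowthBound F (𝐞 b) R (f + κ))
    (hga : HasGrowthBound F (𝐞 b) a (f - (1 - τ) * Real.log a + κ)) :
    ∃ C : ℝ, 0 < C ∧ ∀ (k s N : ℕ) (ξ z : ℂ), N ≤ k → s + τ / 4 * k ≤ N →
      (1 - τ) * k + τ / 4 * k ≤ s → ‖ξ‖ = 1 → ‖z‖ = a ∨ ‖z‖ = R →
      ‖z ^ s • cocycle F (𝐞 b) k z‖ ≤ (∏ j ∈ Finset.range N, ‖z - ξ * (𝐞 b : ℂ) ^ j‖) *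
        (C * Real.exp ((f - 8 * κ) * k)) := by
  obtain ⟨C₁, hC₁, h₁⟩ := exists_norm_pow_smul_cocycle_le hb hκ ha ha1.ne hga
  obtain ⟨C₂, -, h₂⟩ := exists_norm_pow_smul_cocycle_le hb hκ (by linarith) hR1.ne' hgR
  refine ⟨max C₁ C₂, lt_max_of_lt_left hC₁, fun k s N ξ z hN hsN hsk hξ hz ↦ ?_⟩
  have hprod : 0 ≤ ∏ j ∈ Finset.range N, ‖z - ξ * (𝐞 b : ℂ) ^ j‖ := by positivity
  rcases hz with hz | hz
  · refine (h₁ k N s ξ z hN hξ hz).trans (mul_le_mul_of_nonneg_left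
      (mul_le_mul (le_max_left _ _) (Real.exp_le_exp.2 ?_) (by positivity) (by positivity)) hprod)
    have hloga : 0 ≤ -Real.log a := neg_nonneg.2 (Real.log_nonpos ha.le ha1.le)
    have hs : ((1 - τ) * k + τ / 4 * k) * -Real.log a ≤ s * -Real.log a := by gcongr
    have hk : 10 * κ * k ≤ τ / 4 * -Real.log a * k := by gcongr
    rw [max_eq_right ha1.le, Real.log_one]
    linarith
  · refine (h₂ k N s ξ z hN hξ hz).trans (mul_le_mul_of_nonneg_left
      (mul_le_mul (le_max_right _ _) (Real.exp_le_exp.2 ?_) (by positivity) (by positivity)) hprod)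
    have hlogR : 0 ≤ Real.log R := Real.log_nonneg hR1.le
    have hs : τ / 4 * k * Real.log R ≤ (N - s) * Real.log R := by gcongr; linarith
    have hk : 10 * κ * k ≤ τ / 4 * Real.log R * k := by gcongr
    rw [max_eq_left hR1.le]
    linarith

section AnalyticInterpolation

variable {E : Type*} [NormedAddCommGroup E] [NormedSpace ℂ E] [CompleteSpace E] {h : ℂ → E}

lemma norm_le_norm_nodal_mul_of_norm_eq_one {ι : Type*} [DecidableEq ι] {s : Finset ι} {y : ι → ℂ}
    {T : ℝ} {z : ℂ} (ha1 : a < 1) (hR1 : 1 < R) (hh : DifferentiableOn ℂ h (closedAnnulus a R))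
    (hinj : Set.InjOn y s) (hy : ∀ j, ‖y j‖ = 1)
    (hT : ∀ z : ℂ, ‖z‖ = a ∨ ‖z‖ = R → ‖h z‖ ≤ ‖(Lagrange.nodal s y).eval z‖ * T)
    (hz : z ∈ closedAnnulus a R) (hz1 : ‖z‖ ≠ 1) :
    ‖h z‖ ≤ ‖(Lagrange.nodal s y).eval z‖ * (T +
      (∑ j ∈ s, ‖Lagrange.nodalWeight s y j‖ * ‖h (y j)‖) *
        ((min (1 - a) (R - 1))⁻¹ + |‖z‖ - 1|⁻¹)) := by
  have hgap : ∀ (z : ℂ) (j : ι), |‖z‖ - 1| ≤ ‖z - y j‖ := fun z j ↦ by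
    simpa only [hy j] using abs_norm_sub_norm_le z (y j)
  refine norm_le_norm_nodal_mul hh hinj (fun j _ ↦ by rwa [hy j]) (fun j _ ↦ by rwa [hy j])
    (lt_min (by linarith) (by linarith)) (fun w hw j _ ↦ (hgap w j).trans' ?_) hT hz
    (abs_pos.2 (sub_ne_zero.2 hz1)) fun j _ ↦ hgap z j
  rcases hw with hw | hw
  · rw [hw, abs_sub_comm]
    exact (min_le_left _ _).trans (le_abs_self _)
  · rw [hw]
    exact (min_le_right _ _).trans (le_abs_self _)

lemma exists_norm_le_of_norm_le_on_orbit (hb : Irrational b) (ha1 : a < 1) (hR1 : 1 < R)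
    (hκ : 0 < κ) (hκa : a ≤ Real.exp (-κ)) (hκR : Real.exp κ ≤ R) :
    ∃ C : ℝ, 0 < C ∧ ∀ (r : ℚ) (ξ : ℂ) (h : ℂ → E) (M T : ℝ), |b - r| ≤ 1 / (r.den : ℝ) ^ 2 →
      ‖ξ‖ = 1 → DifferentiableOn ℂ h (closedAnnulus a R) → 0 ≤ T →
      (∀ j < r.den, ‖h (ξ * (𝐞 b : ℂ) ^ j)‖ ≤ M) →
      (∀ z : ℂ, ‖z‖ = a ∨ ‖z‖ = R →
        ‖h z‖ ≤ (∏ j ∈ Finset.range r.den, ‖z - ξ * (𝐞 b : ℂ) ^ j‖) * T) →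
      ∀ X : ℂ, ‖X‖ = 1 → ‖h X‖ ≤ C * Real.exp (2 * κ * r.den) * (T + (r.den : ℝ) ^ 4 * M) := by
  obtain ⟨K, hK, hnodal⟩ := exists_prod_norm_sub_orbit_le hb hκ
  have hg' : 0 < 1 - Real.exp (-κ) := sub_pos.2 (Real.exp_lt_one_iff.2 (by linarith))
  set δ := (min (1 - a) (R - 1))⁻¹ + (1 - Real.exp (-κ))⁻¹
  have hδ : 0 < δ :=
    add_pos (inv_pos.2 (lt_min (by linarith) (by linarith))) (inv_pos.2 hg')
  refine ⟨K * (1 + δ), by positivity, fun r ξ h M T hr hξ hh hT0 horbit hT X hX ↦ ?_⟩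
  have hM : 0 ≤ M := (norm_nonneg _).trans (horbit 0 r.den_pos)
  have hcircles : ∀ z : ℂ, ‖z‖ = Real.exp (-κ) ∨ ‖z‖ = Real.exp κ → z ∈ closedAnnulus a R →
      1 - Real.exp (-κ) ≤ |‖z‖ - 1| →
      ‖h z‖ ≤ K * (1 + δ) * Real.exp (2 * κ * r.den) * (T + (r.den : ℝ) ^ 4 * M) := by
    intro z hz hmem hz1
    have hinterp := norm_le_norm_nodal_mul_of_norm_eq_one ha1 hR1 hh (injOn_orbit hb hξ _)
      (fun j ↦ by rw [norm_mul_pow_of_norm_eq_one (Circle.norm_coe _), hξ])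
      (fun w hw ↦ by rw [Lagrange.eval_nodal, norm_prod]; exact hT w hw) hmem
      (sub_ne_zero.1 (abs_pos.1 (hg'.trans_le hz1)))
    rw [Lagrange.eval_nodal, norm_prod] at hinterp
    calc ‖h z‖ ≤ K * Real.exp (2 * κ * r.den) * (T + (r.den : ℝ) ^ 4 * M * δ) := by
          refine hinterp.trans (mul_le_mul (hnodal r.den ξ z hξ hz) ?_ ?_ (by positivity))
          · gcongr
            · exact sum_norm_nodalWeight_orbit_mul_le hr hξ (fun _ ↦ norm_nonneg _) horbit
            · exact add_le_add_right (inv_anti₀ hg' hz1) _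
          · positivity
      _ ≤ K * Real.exp (2 * κ * r.den) * ((1 + δ) * (T + (r.den : ℝ) ^ 4 * M)) := by
          gcongr
          nlinarith [mul_nonneg hδ.le hT0, mul_nonneg (pow_nonneg r.den.cast_nonneg 4) hM]
      _ = _ := by ring
  have hexp : Real.exp (-κ) ≤ Real.exp κ := Real.exp_le_exp.2 (by linarith)
  refine norm_le_of_norm_le_on_circles (hh.mono fun z hz ↦ ⟨hκa.trans hz.1, hz.2.trans hκR⟩)
    (fun z hz ↦ hcircles z (.inl hz) ⟨hz ▸ hκa, hz ▸ hexp.trans hκR⟩ ?_)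
    (fun z hz ↦ hcircles z (.inr hz) ⟨hz ▸ hκa.trans hexp, hz ▸ hκR⟩ ?_)
    ⟨by rw [hX]; exact Real.exp_le_one_iff.2 (by linarith), by rw [hX]; exact Real.one_le_exp hκ.le⟩
  · rw [hz, abs_sub_comm]
    exact le_abs_self _
  · rw [hz]
    linarith [le_abs_self (Real.exp κ - 1), Real.add_one_le_exp κ, Real.add_one_le_exp (-κ)]

end AnalyticInterpolation

/-- Interpolation of `zˢ Fₖ(z)` at the nodes `ξρʲ`. The choice of `s` makes the remainder
exponentially small on both boundary circles, as the total change of slope of the growth rate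
across the unit circle is at most `1 - τ`. -/
lemma exists_norm_cocycle_le_of_norm_le_on_orbit [CompleteSpace A] (hb : Irrational b) (ha : 0 < a)
    (ha1 : a < 1) (hR1 : 1 < R) (hF : DifferentiableOn ℂ F (closedAnnulus a R)) (hκ : 0 < κ)
    (hτ1 : τ < 1) (hκR : 10 * κ ≤ τ / 4 * Real.log R) (hκa : 10 * κ ≤ τ / 4 * -Real.log a)
    (hgR : HasGrowthBound F (𝐞 b) R (f + κ))
    (hga : HasGrowthBound F (𝐞 b) a (f - (1 - τ) * Real.log a + κ)) :
    ∃ C : ℝ, ∀ (k s : ℕ) (r : ℚ), r.den ≤ k → |b - r| ≤ 1 / (r.den : ℝ) ^ 2 →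
      s + τ / 4 * k ≤ r.den → (1 - τ) * k + τ / 4 * k ≤ s → ∀ ξ : ℂ, ‖ξ‖ = 1 →
      (∀ j < r.den, ‖cocycle F (𝐞 b) k (ξ * (𝐞 b : ℂ) ^ j)‖ ≤ Real.exp ((f - 10 * κ) * k)) →
      ∀ X : ℂ, ‖X‖ = 1 → ‖cocycle F (𝐞 b) k X‖ ≤ C * Real.exp ((f - 6 * κ) * k) := by
  have hlogR : κ ≤ Real.log R := by nlinarith [Real.log_pos hR1]
  have hloga : κ ≤ -Real.log a := by nlinarith [Real.log_neg ha ha1]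
  obtain ⟨C₁, hC₁, hcircles⟩ :=
    exists_norm_pow_smul_cocycle_le_on_circles hb ha ha1 hR1 hκ hκR hκa hgR hga
  obtain ⟨C₂, hC₂, hpow⟩ := exists_pow_four_mul_exp_le hκ
  obtain ⟨C, hC, hinterp⟩ := exists_norm_le_of_norm_le_on_orbit (E := A) hb ha1 hR1 hκ
    ((Real.le_exp_log a).trans (Real.exp_le_exp.2 (by linarith)))
    ((Real.exp_le_exp.2 hlogR).trans_eq (Real.exp_log (by linarith)))
  refine ⟨C * (C₁ + C₂), fun k s r hrk hr hsN hsk ξ hξ horbit X hX ↦ ?_⟩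
  have hunit : ∀ z : ℂ, ‖z‖ = 1 → ‖z ^ s • cocycle F (𝐞 b) k z‖ = ‖cocycle F (𝐞 b) k z‖ :=
    fun z hz ↦ by rw [norm_smul, norm_pow, hz, one_pow, one_mul]
  have hFk := cocycle.differentiableOn (mapsTo_mul_closedAnnulus (Circle.norm_coe (𝐞 b))) hF k
  have hbound := hinterp r ξ (fun z ↦ z ^ s • cocycle F (𝐞 b) k z) (Real.exp ((f - 10 * κ) * k))
    (C₁ * Real.exp ((f - 8 * κ) * k)) hr hξ (by fun_prop) (by positivity)
    (fun j hj ↦ (hunit _ (by rw [norm_mul_pow_of_norm_eq_one (Circle.norm_coe _), hξ])).trans_le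
      (horbit j hj))
    (fun z hz ↦ hcircles k s r.den ξ z hrk hsN hsk hξ hz) X hX
  calc ‖cocycle F (𝐞 b) k X‖ ≤ C * Real.exp (2 * κ * r.den) * (C₁ * Real.exp ((f - 8 * κ) * k) +
          (r.den : ℝ) ^ 4 * Real.exp ((f - 10 * κ) * k)) := by rwa [← hunit X hX]
    _ ≤ C * Real.exp (2 * κ * k) * (C₁ * Real.exp ((f - 8 * κ) * k) +
          C₂ * Real.exp ((f - 8 * κ) * k)) := by
        have hnodes : (r.den : ℝ) ^ 4 * Real.exp ((f - 10 * κ) * k) ≤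
            C₂ * Real.exp ((f - 8 * κ) * k) :=
          calc _ ≤ (k : ℝ) ^ 4 * Real.exp ((f - 10 * κ) * k) := by gcongr
            _ ≤ C₂ * Real.exp ((f - 10 * κ + κ) * k) := hpow _ k
            _ ≤ C₂ * Real.exp ((f - 8 * κ) * k) := by gcongr; linarith
        gcongr
    _ = C * (C₁ + C₂) * (Real.exp (2 * κ * k) * Real.exp ((f - 8 * κ) * k)) := by ring
    _ = C * (C₁ + C₂) * Real.exp ((f - 6 * κ) * k) := by rw [← Real.exp_add]; ring_nf

lemma exists_rat_floor_bounds (hb : Irrational b) (hτ : 0 < τ) (hτ1 : τ < 1) (n : ℕ) :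
    ∃ (k s : ℕ) (r : ℚ), n ≤ k ∧ (r.den : ℝ) ≤ (1 - τ / 3) * k ∧
      |b - r| ≤ 1 / (r.den : ℝ) ^ 2 ∧ s + τ / 4 * k ≤ r.den ∧ (1 - τ) * k + τ / 4 * k ≤ s := by
  obtain ⟨m, hm⟩ := exists_nat_gt (24 / τ)
  obtain ⟨r, hden, hr⟩ := exists_rat_den_gt_abs_sub_le hb (max n m)
  have hτ3 : 0 < 1 - τ / 3 := by linarith
  set k := ⌈(r.den : ℝ) / (1 - τ / 3)⌉₊
  set s := ⌈(1 - 2 * τ / 3) * (k : ℝ)⌉₊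
  have hle : (r.den : ℝ) ≤ (1 - τ / 3) * k := by
    rw [mul_comm, ← div_le_iff₀ hτ3]
    exact Nat.le_ceil _
  have hlt : (1 - τ / 3) * k < r.den + (1 - τ / 3) := by
    have : (k : ℝ) - 1 < r.den / (1 - τ / 3) := by
      linarith [Nat.ceil_lt_add_one (show 0 ≤ (r.den : ℝ) / (1 - τ / 3) by positivity)]
    rw [lt_div_iff₀ hτ3] at this
    linarith
  have hk : max n m ≤ k := by
    have : (r.den : ℝ) ≤ k := by nlinarith [(Nat.cast_nonneg k : (0 : ℝ) ≤ k)]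
    exact hden.le.trans (by exact_mod_cast this)
  have hτk : 24 ≤ τ * k := by
    have hmk : (m : ℝ) ≤ k := by exact_mod_cast (le_max_right n m).trans hk
    linarith [(div_lt_iff₀ hτ).1 (hm.trans_le hmk)]
  have hs : (1 - 2 * τ / 3) * (k : ℝ) ≤ s := Nat.le_ceil _
  have hs' : (s : ℝ) < (1 - 2 * τ / 3) * (k : ℝ) + 1 :=
    Nat.ceil_lt_add_one (mul_nonneg (by linarith) k.cast_nonneg)
  exact ⟨k, s, r, (le_max_left n m).trans hk, hle, hr, by linarith, by linarith⟩

lemma exists_le_norm_cocycle_orbit [NormOneClass A] [CompleteSpace A] (hb : Irrational b)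
    (ha : 0 < a) (ha1 : a < 1) (hR1 : 1 < R) (hF : DifferentiableOn ℂ F (closedAnnulus a R))
    (hB : ∀ X : ℂ, ‖X‖ = 1 → ‖F X‖ ≤ B) (hτ : 0 < τ) (hτ1 : τ < 1) (hκ : 0 < κ)
    (hκR : 10 * κ ≤ τ / 4 * Real.log R) (hκa : 10 * κ ≤ τ / 4 * -Real.log a)
    (hgR : HasGrowthBound F (𝐞 b) R (f + κ))
    (hga : HasGrowthBound F (𝐞 b) a (f - (1 - τ) * Real.log a + κ))
    (hlower : ∀ c < f, ¬HasGrowthBound F (𝐞 b) 1 c) (n : ℕ) :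
    ∃ k ≥ n, ∃ N : ℕ, (N : ℝ) ≤ (1 - τ / 3) * k ∧ ∀ X : ℂ, ‖X‖ = 1 →
      ∃ j < N, Real.exp ((f - 10 * κ) * k) ≤ ‖cocycle F (𝐞 b) k (X * (𝐞 b : ℂ) ^ j)‖ := by
  obtain ⟨C, hC⟩ :=
    exists_norm_cocycle_le_of_norm_le_on_orbit hb ha ha1 hR1 hF hκ hτ1 hκR hκa hgR hga
  by_contra! hsmall
  refine hlower (f - 5 * κ) (by linarith) (.of_frequently (c := f - 6 * κ) (C := C)
    (Circle.norm_coe _) (by linarith) hB (Filter.frequently_atTop.2 fun m ↦ ?_))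
  obtain ⟨k, s, r, hk, hrk, hr, hsr, hks⟩ := exists_rat_floor_bounds hb hτ hτ1 (max n m)
  obtain ⟨ξ, hξ, horbit⟩ := hsmall k ((le_max_left n m).trans hk) r.den hrk
  have hrk' : r.den ≤ k := by
    have : (r.den : ℝ) ≤ k := by nlinarith [(Nat.cast_nonneg k : (0 : ℝ) ≤ k)]
    exact_mod_cast this
  exact ⟨k, (le_max_right n m).trans hk,
    hC k s r hrk' hr hsr hks ξ hξ fun j hj ↦ (horbit j hj).le⟩

end OrbitInterpolation

section PlaneArea

/-- The area form on `ℂ²`, which matrices of determinant one preserve. -/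
def wedge (Y W : Fin 2 → ℂ) : ℂ := Y 0 * W 1 - Y 1 * W 0

variable (Y W : Fin 2 → ℂ) {A A' : Matrix (Fin 2) (Fin 2) ℂ}

lemma wedge_add_left (Y' : Fin 2 → ℂ) : wedge (Y + Y') W = wedge Y W + wedge Y' W := by
  simp only [wedge, Pi.add_apply]
  ring

lemma wedge_mulVec : wedge (A.mulVec Y) (A.mulVec W) = A.det * wedge Y W := by
  simp only [wedge, Matrix.mulVec, dotProduct, Fin.sum_univ_two, Matrix.det_fin_two]
  ring

lemma norm_wedge_le : ‖wedge Y W‖ ≤ 2 * ‖Y‖ * ‖W‖ :=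
  calc ‖wedge Y W‖ ≤ ‖Y 0‖ * ‖W 1‖ + ‖Y 1‖ * ‖W 0‖ := by
        rw [← norm_mul, ← norm_mul]; exact norm_sub_le _ _
    _ ≤ ‖Y‖ * ‖W‖ + ‖Y‖ * ‖W‖ := by gcongr <;> exact norm_le_pi_norm _ _
    _ = 2 * ‖Y‖ * ‖W‖ := by ring

lemma norm_smul_sub_smul_le_norm_wedge (i : Fin 2) : ‖Y i • W - W i • Y‖ ≤ ‖wedge Y W‖ := by
  refine (pi_norm_le_iff_of_nonneg (norm_nonneg _)).2 fun j ↦ ?_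
  fin_cases i <;> fin_cases j <;> simp [wedge, mul_comm, ← norm_sub_rev (Y 0 * W 1)]

lemma norm_mulVec_mul_norm_le (A : Matrix (Fin 2) (Fin 2) ℂ) :
    ‖A.mulVec W‖ * ‖Y‖ ≤ ‖W‖ * ‖A.mulVec Y‖ + ‖A‖ * ‖wedge Y W‖ := by
  obtain ⟨i, hi⟩ : ∃ i, ‖Y‖ ≤ ‖Y i‖ := by
    by_contra! h
    exact lt_irrefl _ ((pi_norm_lt_iff ((norm_nonneg _).trans_lt (h 0))).2 h)
  calc ‖A.mulVec W‖ * ‖Y‖ ≤ ‖Y i‖ * ‖A.mulVec W‖ := by rw [mul_comm]; gcongr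
    _ = ‖W i • A.mulVec Y + A.mulVec (Y i • W - W i • Y)‖ := by
        rw [Matrix.mulVec_sub, Matrix.mulVec_smul, Matrix.mulVec_smul, add_sub_cancel, norm_smul]
    _ ≤ ‖W i‖ * ‖A.mulVec Y‖ + ‖A‖ * ‖Y i • W - W i • Y‖ := by
        rw [← norm_smul]
        exact (norm_add_le _ _).trans (by gcongr; exact Matrix.linfty_opNorm_mulVec _ _)
    _ ≤ ‖W‖ * ‖A.mulVec Y‖ + ‖A‖ * ‖wedge Y W‖ := by
        gcongr
        exacts [norm_le_pi_norm W i, norm_smul_sub_smul_le_norm_wedge Y W i]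

lemma exists_norm_le_two_mul_norm_mulVec (A : Matrix (Fin 2) (Fin 2) ℂ) :
    ∃ p : Fin 2 → ℂ, ‖p‖ ≤ 1 ∧ ‖A‖ ≤ 2 * ‖A.mulVec p‖ := by
  by_contra! h
  have hcol : ∀ j, ‖A.col j‖ < ‖A‖ / 2 := fun j ↦ by
    have := h (Pi.single j 1) (by rw [Pi.norm_single, norm_one])
    rw [Matrix.mulVec_single_one] at this
    linarith
  have hmax : max ‖A.col 0‖ ‖A.col 1‖ < ‖A‖ / 2 := max_lt (hcol 0) (hcol 1)
  have hentry : ∀ i j, ‖A i j‖ ≤ max ‖A.col 0‖ ‖A.col 1‖ := fun i j ↦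
    (norm_le_pi_norm (A.col j) i).trans (by fin_cases j <;> simp)
  linarith [linfty_opNorm_le_two_mul hentry]

/-- If `A' A` is much larger than `A` and `A'`, an approximate orbit `Y₀ ↦ Y ↦ Y₁` of `A` and `A'`
that is moderate at both ends is small in the middle. -/
lemma mul_norm_le_of_det_eq_one {a e μ : ℝ} {Y₀ Y Y₁ : Fin 2 → ℂ} (hdet : A.det = 1)
    (hA : ‖A‖ ≤ a) (hA' : ‖A'‖ ≤ a) (hμ : μ ≤ ‖A' * A‖) (hY₀ : ‖Y - A.mulVec Y₀‖ ≤ e)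
    (hY₁ : ‖Y₁ - A'.mulVec Y‖ ≤ e) :
    μ * ‖Y‖ ≤ 2 * a * (‖Y₁‖ + 2 * ‖Y₀‖ + (1 + 2 * a) * e) := by
  obtain ⟨p, hp, hAp⟩ := exists_norm_le_two_mul_norm_mulVec (A' * A)
  rw [← Matrix.mulVec_mulVec] at hAp
  have ha : 0 ≤ a := (norm_nonneg _).trans hA
  have he : 0 ≤ e := (norm_nonneg _).trans hY₀
  have hW : ‖A.mulVec p‖ ≤ a :=
    ((Matrix.linfty_opNorm_mulVec A p).trans (mul_le_of_le_one_right (norm_nonneg _) hp)).trans hA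
  have hend : ‖A'.mulVec Y‖ ≤ ‖Y₁‖ + e := by
    linarith [norm_le_norm_add_norm_sub Y₁ (A'.mulVec Y)]
  have harea : ‖wedge Y (A.mulVec p)‖ ≤ 2 * ‖Y₀‖ + 2 * e * a :=
    calc ‖wedge Y (A.mulVec p)‖ = ‖wedge Y₀ p + wedge (Y - A.mulVec Y₀) (A.mulVec p)‖ := by
          rw [← one_mul (wedge Y₀ p), ← hdet, ← wedge_mulVec, ← wedge_add_left, add_sub_cancel]
      _ ≤ 2 * ‖Y₀‖ * ‖p‖ + 2 * ‖Y - A.mulVec Y₀‖ * ‖A.mulVec p‖ :=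
          (norm_add_le _ _).trans (add_le_add (norm_wedge_le _ _) (norm_wedge_le _ _))
      _ ≤ 2 * ‖Y₀‖ * 1 + 2 * e * a := by gcongr
      _ = 2 * ‖Y₀‖ + 2 * e * a := by rw [mul_one]
  calc μ * ‖Y‖ ≤ 2 * (‖A'.mulVec (A.mulVec p)‖ * ‖Y‖) := by
        rw [← mul_assoc]; gcongr; exact hμ.trans hAp
    _ ≤ 2 * (‖A.mulVec p‖ * ‖A'.mulVec Y‖ + ‖A'‖ * ‖wedge Y (A.mulVec p)‖) := by
        gcongr; exact norm_mulVec_mul_norm_le _ _ _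
    _ ≤ 2 * (a * (‖Y₁‖ + e) + a * (2 * ‖Y₀‖ + 2 * e * a)) := by gcongr
    _ = 2 * a * (‖Y₁‖ + 2 * ‖Y₀‖ + (1 + 2 * a) * e) := by ring

end PlaneArea

section SquareSummable

variable {E F : Type*} [NormedAddCommGroup E] [NormedAddCommGroup F]

/-- The sequence `n ↦ u (σ n)`. -/
def l2Reindex (u : ℓ²(ℤ, E)) (σ : Equiv.Perm ℤ) : ℓ²(ℤ, E) :=
  ⟨fun n ↦ u (σ n), (memℓp_gen_iff (by simp)).2
    (((lp.memℓp u).summable (by simp)).comp_injective σ.injective)⟩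

@[simp] lemma l2Reindex_apply (u : ℓ²(ℤ, E)) (σ : Equiv.Perm ℤ) (n : ℤ) :
    l2Reindex u σ n = u (σ n) := rfl

lemma norm_l2Reindex (u : ℓ²(ℤ, E)) (σ : Equiv.Perm ℤ) : ‖l2Reindex u σ‖ = ‖u‖ := by
  rw [lp.norm_eq_tsum_rpow (by simp), lp.norm_eq_tsum_rpow (by simp)]
  congr 1
  exact σ.tsum_eq fun n ↦ ‖u n‖ ^ (2 : ENNReal).toReal

lemma norm_le_of_norm_apply_le_sum {y : ℓ²(ℤ, E)} {g : ℓ²(ℤ, F)} {s : Finset ℤ} {δ K : ℝ}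
    (hδ : 0 ≤ δ) (hK : 0 ≤ K) (hs : 2 * δ * s.card ≤ 1)
    (h : ∀ n, ‖y n‖ ≤ δ * ∑ i ∈ s, ‖y (n + i)‖ + K * ∑ i ∈ s, ‖g (n + i)‖) :
    ‖y‖ ≤ 2 * K * s.card * ‖g‖ := by
  have hsum : ‖y‖ ≤ ‖δ • ∑ i ∈ s, l2Reindex (lp.toNorm y) (Equiv.addRight i) +
      K • ∑ i ∈ s, l2Reindex (lp.toNorm g) (Equiv.addRight i)‖ := by
    refine lp.norm_mono (by simp) fun n ↦ (h n).trans (le_of_eq ?_)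
    simp only [lp.coeFn_add, lp.coeFn_smul, lp.coeFn_sum, Pi.add_apply, Pi.smul_apply,
      Finset.sum_apply, l2Reindex_apply, Equiv.coe_addRight, lp.toNorm_coe, smul_eq_mul]
    rw [Real.norm_of_nonneg (by positivity)]
  have htranslates : ∀ x : ℓ²(ℤ, ℝ), ‖∑ i ∈ s, l2Reindex x (Equiv.addRight i)‖ ≤ s.card * ‖x‖ :=
      fun x ↦ by
    simpa only [nsmul_eq_mul] using
      (norm_sum_le _ _).trans (Finset.sum_le_card_nsmul s _ ‖x‖ fun i _ ↦ (norm_l2Reindex x _).le)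
  have : ‖y‖ ≤ δ * (s.card * ‖y‖) + K * (s.card * ‖g‖) := by
    refine hsum.trans ((norm_add_le _ _).trans ?_)
    rw [norm_smul, norm_smul, Real.norm_of_nonneg hδ, Real.norm_of_nonneg hK,
      ← lp.norm_toNorm (x := y), ← lp.norm_toNorm (x := g)]
    gcongr <;> exact htranslates _
  nlinarith [mul_le_mul_of_nonneg_right hs (norm_nonneg y)]

end SquareSummable

section Evolution

/-- The one-step transfer matrix `(u n, u (n - 1)) ↦ (u (n + 1), u n)` of the difference equation
`u (n + 1) + u (n - 1) = w X * u n`. -/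
def schrodingerMatrix (w : ℂ → ℂ) (X : ℂ) : Matrix (Fin 2) (Fin 2) ℂ := !![w X, -1; 1, 0]

/-- The state vector `(u n, u (n - 1))` on which transfer matrices act. -/
def stateVector (u : ℤ → ℂ) (n : ℤ) : Fin 2 → ℂ := ![u n, u (n - 1)]

variable {w : ℂ → ℂ} {ρ X : ℂ} {r B : ℝ} {u g : ℤ → ℂ}

lemma det_schrodingerMatrix (w : ℂ → ℂ) (X : ℂ) : (schrodingerMatrix w X).det = 1 := by
  simp [schrodingerMatrix]

lemma schrodingerMatrix_eq (w : ℂ → ℂ) (X : ℂ) :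
    schrodingerMatrix w X = w X • !![1, 0; 0, 0] + !![0, -1; 1, 0] := by
  simp [schrodingerMatrix]

lemma differentiableOn_schrodingerMatrix {S : Set ℂ} (hw : DifferentiableOn ℂ w S) :
    DifferentiableOn ℂ (schrodingerMatrix w) S := by
  simp only [funext (schrodingerMatrix_eq w)]
  exact (hw.smul_const _).add_const _

lemma stateVector_add_one (hrec : ∀ n, u (n + 1) + u (n - 1) - w (X * ρ ^ n) * u n = g n) (n : ℤ) :
    stateVector u (n + 1) =
      (schrodingerMatrix w (X * ρ ^ n)).mulVec (stateVector u n) + ![g n, 0] := by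
  rw [← hrec n]
  ext i
  fin_cases i
  · simp [stateVector, schrodingerMatrix]
    ring
  · simp [stateVector, schrodingerMatrix]

lemma norm_stateVector_sub_cocycle_mulVec_le (hρ : ‖ρ‖ = 1) (hB1 : 1 ≤ B)
    (hB : ∀ Z : ℂ, ‖Z‖ = r → ‖schrodingerMatrix w Z‖ ≤ B) (hX : ‖X‖ = r)
    (hrec : ∀ n, u (n + 1) + u (n - 1) - w (X * ρ ^ n) * u n = g n) (n : ℤ) (l : ℕ) :
    ‖stateVector u (n + l) -
        (cocycle (schrodingerMatrix w) ρ l (X * ρ ^ n)).mulVec (stateVector u n)‖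
      ≤ B ^ l * ∑ i ∈ Finset.range l, ‖g (n + i)‖ := by
  have hρ0 : ρ ≠ 0 := norm_ne_zero_iff.1 (by rw [hρ]; exact one_ne_zero)
  induction l with
  | zero => simp
  | succ l ih =>
    set M := schrodingerMatrix w (X * ρ ^ (n + l))
    set Y := (cocycle (schrodingerMatrix w) ρ l (X * ρ ^ n)).mulVec (stateVector u n) with hY
    have hstep : stateVector u (n + (l + 1 : ℕ)) -
        (cocycle (schrodingerMatrix w) ρ (l + 1) (X * ρ ^ n)).mulVec (stateVector u n) =
        M.mulVec (stateVector u (n + l) - Y) + ![g (n + l), 0] := by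
      rw [cocycle.succ, ← Matrix.mulVec_mulVec, ← hY, mul_assoc, ← zpow_natCast ρ l,
        ← zpow_add₀ hρ0, Nat.cast_succ, ← add_assoc, stateVector_add_one hrec, Matrix.mulVec_sub]
      abel
    have hsource : ‖![g (n + l), 0]‖ ≤ B ^ (l + 1) * ‖g (n + l)‖ :=
      ((pi_norm_le_iff_of_nonneg (norm_nonneg _)).2 fun i ↦ by fin_cases i <;> simp).trans
        (le_mul_of_one_le_left (norm_nonneg _) (one_le_pow₀ hB1))
    calc _ ≤ ‖M‖ * ‖stateVector u (n + l) - Y‖ + ‖![g (n + l), 0]‖ := by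
          rw [hstep]
          exact (norm_add_le _ _).trans (by gcongr; exact Matrix.linfty_opNorm_mulVec _ _)
      _ ≤ B * (B ^ l * ∑ i ∈ Finset.range l, ‖g (n + i)‖) + B ^ (l + 1) * ‖g (n + l)‖ := by
          gcongr
          exact hB _ (by rwa [norm_mul_zpow_of_norm_eq_one hρ])
      _ = B ^ (l + 1) * ∑ i ∈ Finset.range (l + 1), ‖g (n + i)‖ := by
          rw [Finset.sum_range_succ]; ring

lemma sum_range_le_sum_Icc {x : ℤ → ℝ} (hx : ∀ n, 0 ≤ x n) {k : ℕ} {m n : ℤ} {l : ℕ}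
    (hm : n - k ≤ m) (hl : m + l ≤ n + k) :
    ∑ i ∈ Finset.range l, x (m + i) ≤ ∑ i ∈ Finset.Icc (-k : ℤ) k, x (n + i) := by
  classical
  calc ∑ i ∈ Finset.range l, x (m + i)
      = ∑ i ∈ (Finset.range l).image fun i : ℕ ↦ m - n + i, x (n + i) := by
        rw [Finset.sum_image fun i _ j _ h ↦ by simpa using h]
        exact Finset.sum_congr rfl fun i _ ↦ by congr 1; ring
    _ ≤ ∑ i ∈ Finset.Icc (-k : ℤ) k, x (n + i) :=
        Finset.sum_le_sum_of_subset_of_nonneg (fun i hi ↦ by simp at hi ⊢; omega)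
          fun _ _ _ ↦ hx _

lemma le_sum_Icc {x : ℤ → ℝ} (hx : ∀ n, 0 ≤ x n) {k : ℕ} {m n : ℤ} (hm : n - k ≤ m)
    (hm' : m ≤ n + k) : x m ≤ ∑ i ∈ Finset.Icc (-k : ℤ) k, x (n + i) := by
  simpa using Finset.single_le_sum (f := fun i ↦ x (n + i)) (fun i _ ↦ hx _)
    (Finset.mem_Icc.2 (⟨by omega, by omega⟩ : -(k : ℤ) ≤ m - n ∧ m - n ≤ k))

lemma mul_norm_stateVector_le {Λ μ : ℝ} {N d k : ℕ} (hρ : ‖ρ‖ = 1) (hB1 : 1 ≤ B)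
    (hB : ∀ Z : ℂ, ‖Z‖ = r → ‖schrodingerMatrix w Z‖ ≤ B) (hX : ‖X‖ = r)
    (hrec : ∀ n, u (n + 1) + u (n - 1) - w (X * ρ ^ n) * u n = g n) (hk : N + 2 * d ≤ k)
    (hΛ : ∀ l, l + d ≤ k → ∀ Z : ℂ, ‖Z‖ = r → ‖cocycle (schrodingerMatrix w) ρ l Z‖ ≤ Λ)
    (hμ : ∀ Z : ℂ, ‖Z‖ = r → ∃ j < N, μ ≤ ‖cocycle (schrodingerMatrix w) ρ k (Z * ρ ^ j)‖) (n : ℤ) :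
    μ * ‖stateVector u n‖ ≤ 6 * Λ * ∑ i ∈ Finset.Icc (-k : ℤ) k, ‖stateVector u (n + i)‖ +
      2 * Λ * (1 + 2 * Λ) * B ^ k * ∑ i ∈ Finset.Icc (-k : ℤ) k, ‖g (n + i)‖ := by
  have hρ0 : ρ ≠ 0 := norm_ne_zero_iff.1 (by rw [hρ]; exact one_ne_zero)
  have hcircle : ∀ m : ℤ, ‖X * ρ ^ m‖ = r := fun m ↦ by rwa [norm_mul_zpow_of_norm_eq_one hρ]
  obtain ⟨j, hj, hjμ⟩ := hμ _ (hcircle (n - k + d))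
  set m : ℤ := n - k + d + j with hm
  obtain ⟨l, hl⟩ : ∃ l : ℕ, l + (d + j) = k := ⟨k - (d + j), by omega⟩
  have hml : m + l = n := by omega
  have hΛ0 : 0 ≤ Λ := (norm_nonneg _).trans (hΛ 0 (by omega) X hX)
  set S := ∑ i ∈ Finset.Icc (-k : ℤ) k, ‖stateVector u (n + i)‖
  set G := ∑ i ∈ Finset.Icc (-k : ℤ) k, ‖g (n + i)‖
  have hsplit : μ ≤ ‖cocycle (schrodingerMatrix w) ρ (d + j) (X * ρ ^ n) *
      cocycle (schrodingerMatrix w) ρ l (X * ρ ^ m)‖ := by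
    have hXm : X * ρ ^ (n - k + d) * ρ ^ j = X * ρ ^ m := by
      rw [mul_assoc, ← zpow_natCast, ← zpow_add₀ hρ0]
    rwa [hXm, ← hl, add_comm l, cocycle.add, mul_assoc, ← zpow_natCast ρ l, ← zpow_add₀ hρ0,
      hml] at hjμ
  have herror : ∀ (a : ℤ) (p : ℕ), p ≤ k → n - k ≤ a → a + p ≤ n + k →
      ‖stateVector u (a + p) -
        (cocycle (schrodingerMatrix w) ρ p (X * ρ ^ a)).mulVec (stateVector u a)‖ ≤ B ^ k * G :=
    fun a p hp ha hap ↦ by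
      refine (norm_stateVector_sub_cocycle_mulVec_le hρ hB1 hB hX hrec a p).trans ?_
      gcongr
      exact sum_range_le_sum_Icc (x := fun i ↦ ‖g i‖) (fun _ ↦ norm_nonneg _) ha hap
  have hleft := herror m l (by omega) (by omega) (by omega)
  rw [hml] at hleft
  calc μ * ‖stateVector u n‖
      ≤ 2 * Λ * (‖stateVector u (n + (d + j : ℕ))‖ + 2 * ‖stateVector u m‖ +
          (1 + 2 * Λ) * (B ^ k * G)) :=
        mul_norm_le_of_det_eq_one (cocycle.det (det_schrodingerMatrix w) ρ _ l)
          (hΛ l (by omega) _ (hcircle m)) (hΛ _ (by omega) _ (hcircle n)) hsplit hleft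
          (herror n (d + j) (by omega) (by omega) (by omega))
    _ ≤ 2 * Λ * (S + 2 * S + (1 + 2 * Λ) * (B ^ k * G)) := by
        gcongr <;>
          exact le_sum_Icc (x := fun i ↦ ‖stateVector u i‖) (fun _ ↦ norm_nonneg _)
            (by omega) (by omega)
    _ = 6 * Λ * S + 2 * Λ * (1 + 2 * Λ) * B ^ k * G := by ring

/-- The state vectors of a square-summable sequence, as a square-summable sequence. -/
def l2StateVector (u : ℓ²(ℤ, ℂ)) : ℓ²(ℤ, Fin 2 → ℂ) :=
  ⟨stateVector u, (lp.memℓp (lp.toNorm u + lp.toNorm (l2Reindex u (Equiv.addRight (-1))))).mono'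
    fun n ↦
    (pi_norm_le_iff_of_nonneg (by positivity)).2 fun i ↦ by
      fin_cases i
      · exact (le_add_of_nonneg_right (norm_nonneg _)).trans (le_abs_self _)
      · exact (le_add_of_nonneg_left (norm_nonneg _)).trans (le_abs_self _)⟩

lemma norm_le_norm_l2StateVector (u : ℓ²(ℤ, ℂ)) : ‖u‖ ≤ ‖l2StateVector u‖ :=
  lp.norm_mono (by simp) fun n ↦ norm_le_pi_norm (stateVector u n) 0

/-- The Schrödinger operator `u ↦ u (n + 1) + u (n - 1) - v n * u n` on `ℓ²(ℤ)` is bounded below by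
`1 / K`. -/
def SchrodingerBoundedBelow (v : ℤ → ℂ) (K : ℝ) : Prop :=
  ∀ u g : ℓ²(ℤ, ℂ), (∀ n, u (n + 1) + u (n - 1) - v n * u n = g n) → ‖u‖ ≤ K * ‖g‖

lemma schrodingerBoundedBelow_of_le_norm_cocycle {Λ μ : ℝ} {N d k : ℕ} (hρ : ‖ρ‖ = 1)
    (hB1 : 1 ≤ B) (hB : ∀ Z : ℂ, ‖Z‖ = r → ‖schrodingerMatrix w Z‖ ≤ B) (hX : ‖X‖ = r)
    (hk : N + 2 * d ≤ k)
    (hΛ : ∀ l, l + d ≤ k → ∀ Z : ℂ, ‖Z‖ = r → ‖cocycle (schrodingerMatrix w) ρ l Z‖ ≤ Λ)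
    (hμ : ∀ Z : ℂ, ‖Z‖ = r → ∃ j < N, μ ≤ ‖cocycle (schrodingerMatrix w) ρ k (Z * ρ ^ j)‖)
    (hμ0 : 0 < μ) (hΛμ : 2 * (6 * Λ / μ) * (2 * k + 1) ≤ 1) :
    SchrodingerBoundedBelow (fun n ↦ w (X * ρ ^ n))
      (2 * (2 * Λ * (1 + 2 * Λ) * B ^ k / μ) * (2 * k + 1)) := by
  intro u g hrec
  have hΛ0 : 0 ≤ Λ := (norm_nonneg _).trans (hΛ 0 (by omega) X hX)
  have hcard : ((Finset.Icc (-k : ℤ) k).card : ℝ) = 2 * k + 1 := by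
    rw [Int.card_Icc, show (k + 1 - -k : ℤ).toNat = 2 * k + 1 by omega]
    push_cast
    rfl
  rw [← hcard] at hΛμ ⊢
  refine (norm_le_norm_l2StateVector u).trans (norm_le_of_norm_apply_le_sum
    (δ := 6 * Λ / μ) (by positivity) (by positivity) hΛμ fun n ↦ ?_)
  rw [div_mul_eq_mul_div, div_mul_eq_mul_div, ← add_div, le_div_iff₀' hμ0]
  exact mul_norm_stateVector_le hρ hB1 hB hX hrec hk hΛ hμ n

lemma eventually_mul_exp_neg_mul_le_one {c : ℝ} (hc : 0 < c) (D : ℝ) :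
    ∀ᶠ k : ℕ in Filter.atTop, D * Real.exp (-c * k) * (2 * k + 1) ≤ 1 := by
  have hlim : Filter.Tendsto
      (fun k : ℕ ↦ D * (2 * (k * Real.exp (-c) ^ k) + Real.exp (-c) ^ k)) Filter.atTop
      (nhds (D * (2 * 0 + 0))) :=
    (((tendsto_self_mul_const_pow_of_lt_one (Real.exp_nonneg _) (by simpa)).const_mul 2).add
      (tendsto_pow_atTop_nhds_zero_of_lt_one (Real.exp_nonneg _) (by simpa))).const_mul D
  filter_upwards [hlim.eventually_le_const (u := 1) (by norm_num)] with k hk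
  rw [mul_comm (-c), Real.exp_nat_mul]
  linarith

end Evolution

section BoundedBelow

variable {w : ℂ → ℂ} {a b R f τ κ C : ℝ}

lemma exists_norm_schrodingerMatrix_le (ha1 : a < 1) (hR1 : 1 < R)
    (hw : DifferentiableOn ℂ w (closedAnnulus a R)) :
    ∃ B, 1 ≤ B ∧ ∀ X : ℂ, ‖X‖ = 1 → ‖schrodingerMatrix w X‖ ≤ B := by
  obtain ⟨B, hB⟩ :=
    exists_norm_le_of_norm_eq (differentiableOn_schrodingerMatrix hw) ha1.le hR1.le
  exact ⟨max 1 B, le_max_left _ _, fun X hX ↦ (hB X hX).trans (le_max_right _ _)⟩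

lemma exp_mul_sub_floor_div_exp_le (hC : 0 < C) (hκ : 0 < κ) (hf : 0 < f)
    (hκf : 11 * κ ≤ f * τ / 18) (k : ℕ) :
    2 * (6 * (C * Real.exp ((f + κ) * (k - ⌊τ * k / 9⌋₊))) / Real.exp ((f - 10 * κ) * k)) ≤
      12 * C * Real.exp f * Real.exp (-(f * τ / 18) * k) := by
  set d := ⌊τ * k / 9⌋₊
  have hκk : 11 * κ * k ≤ f * τ / 18 * k := by gcongr
  have hfd : f * (τ * k / 9) ≤ f * (d + 1) := by gcongr; exact (Nat.lt_floor_add_one _).le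
  calc _ = 12 * C * Real.exp ((f + κ) * (k - d) - (f - 10 * κ) * k) := by rw [Real.exp_sub]; ring
    _ ≤ 12 * C * Real.exp (f + -(f * τ / 18) * k) := by
        gcongr
        linarith [mul_nonneg hκ.le d.cast_nonneg]
    _ = _ := by rw [Real.exp_add, mul_assoc _ (Real.exp f)]

lemma exists_schrodingerBoundedBelow (hb : Irrational b) (ha : 0 < a) (ha1 : a < 1) (hR1 : 1 < R)
    (hw : DifferentiableOn ℂ w (closedAnnulus a R)) (hf : 0 < f) (hτ : 0 < τ) (hτ1 : τ < 1)
    (hg1 : ∀ κ > 0, HasGrowthBound (schrodingerMatrix w) (𝐞 b) 1 (f + κ))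
    (hgR : ∀ κ > 0, HasGrowthBound (schrodingerMatrix w) (𝐞 b) R (f + κ))
    (hga : HasGrowthBound (schrodingerMatrix w) (𝐞 b) a (f - (1 - τ) * Real.log a))
    (hlower : ∀ c < f, ¬HasGrowthBound (schrodingerMatrix w) (𝐞 b) 1 c) :
    ∃ K > 0, ∀ X : ℂ, ‖X‖ = 1 → SchrodingerBoundedBelow (fun n ↦ w (X * (𝐞 b : ℂ) ^ n)) K := by
  obtain ⟨B, hB1, hB⟩ := exists_norm_schrodingerMatrix_le ha1 hR1 hw
  have hR0 := Real.log_pos hR1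
  have ha0 := neg_pos.2 (Real.log_neg ha ha1)
  obtain ⟨κ, hκ, hκle⟩ : ∃ κ > 0, 11 * κ ≤
      min (f * τ / 18) (min (τ / 4 * Real.log R) (τ / 4 * -Real.log a)) :=
    ⟨min (f * τ / 18) (min (τ / 4 * Real.log R) (τ / 4 * -Real.log a)) / 11,
      by positivity, by linarith⟩
  obtain ⟨hκf, hκR, hκa⟩ := by simpa only [le_min_iff] using hκle
  obtain ⟨C, hC, hg⟩ := hg1 κ hκ
  obtain ⟨k₀, hk₀⟩ := Filter.eventually_atTop.1
    (eventually_mul_exp_neg_mul_le_one (c := f * τ / 18) (by positivity) (12 * C * Real.exp f))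
  obtain ⟨k, hk, N, hN, hN'⟩ := exists_le_norm_cocycle_orbit hb ha ha1 hR1
    (differentiableOn_schrodingerMatrix hw) (fun X hX ↦ hB X hX) hτ hτ1 hκ (by linarith)
    (by linarith) (hgR κ hκ) (hga.mono (by linarith)) hlower k₀
  set d := ⌊τ * k / 9⌋₊
  have hNd : N + 2 * d ≤ k := by
    have hd : (d : ℝ) ≤ τ * k / 9 := Nat.floor_le (by positivity)
    have : (N : ℝ) + 2 * d ≤ k := by nlinarith [(Nat.cast_nonneg k : (0 : ℝ) ≤ k)]
    exact_mod_cast this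
  refine ⟨_, ?_, fun X hX ↦ schrodingerBoundedBelow_of_le_norm_cocycle
    (Λ := C * Real.exp ((f + κ) * (k - d))) (Circle.norm_coe _) hB1 hB hX hNd
    (fun l hl Z hZ ↦ (hg l Z hZ).trans ?_) hN' (Real.exp_pos _)
    ((mul_le_mul_of_nonneg_right (exp_mul_sub_floor_div_exp_le hC hκ hf hκf k)
      (by positivity)).trans (hk₀ k hk))⟩
  · positivity
  · have : (l : ℝ) + d ≤ k := by exact_mod_cast hl
    gcongr
    linarith

end BoundedBelow

/-! ### The potential on the punctured plane -/

/-- The denominator `1 - α cos(2πx)` of the potential in the coordinate `X = e^{2πix}`. -/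
noncomputable def potDenominator (α : ℝ) (X : ℂ) : ℂ := 1 - α * ((X + X⁻¹) / 2)

/-- The potential `2λ cos(2πx) / (1 - α cos(2πx))` in the coordinate `X = e^{2πix}`, which extends
it to complex phases. -/
noncomputable def complexPotential (α lam : ℝ) (X : ℂ) : ℂ :=
  lam * (X + X⁻¹) / potDenominator α X

/-- The transfer matrix at energy `z` in the coordinate `X = e^{2πix}`. -/
noncomputable abbrev transferMatrix (α lam : ℝ) (z : ℂ) : ℂ → Matrix (Fin 2) (Fin 2) ℂ :=
  schrodingerMatrix fun X ↦ z - complexPotential α lam X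

/-- The number `β` for which `1 - α cos(2πx)` is a multiple of `(1 - β X) (1 - β X⁻¹)`; the poles of
the potential are `β` and `β⁻¹`. -/
noncomputable def potPole (α : ℝ) : ℝ := α / (1 + √(1 - α ^ 2))

/-- The constant `c` with `1 - α cos(2πx) = c (1 - β X) (1 - β X⁻¹)`; by Jensen's formula `log c` is
the mean of `log (1 - α cos(2πx))`. -/
noncomputable def potConst (α : ℝ) : ℝ := (1 + √(1 - α ^ 2)) / 2

/-- The polynomial `X (1 - α cos(2πx))`. -/
noncomputable def clearedDenominator (α : ℝ) (X : ℂ) : ℂ := X - α * ((X ^ 2 + 1) / 2)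

/-- The transfer matrix at energy `z` multiplied by `X (1 - α cos(2πx))`. It is polynomial in `X`,
so that the cocycle extends across the poles of the potential down to `X = 0`. -/
noncomputable def clearedTransferMatrix (α lam : ℝ) (z X : ℂ) : Matrix (Fin 2) (Fin 2) ℂ :=
  !![z * clearedDenominator α X - lam * (X ^ 2 + 1), -clearedDenominator α X;
    clearedDenominator α X, 0]

section Potential

variable {α : ℝ} {X : ℂ} {r : ℝ}

lemma potConst_pos (α : ℝ) : 0 < potConst α := by
  unfold potConst
  positivity

lemma potConst_mul_potPole (α : ℝ) : potConst α * potPole α = α / 2 := by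
  have : 0 < 1 + √(1 - α ^ 2) := by positivity
  unfold potConst potPole
  field_simp

lemma potConst_mul_one_add_potPole_sq (hα : |α| < 1) : potConst α * (1 + potPole α ^ 2) = 1 := by
  have hs : √(1 - α ^ 2) ^ 2 = 1 - α ^ 2 :=
    Real.sq_sqrt (sub_nonneg.2 ((sq_lt_one_iff_abs_lt_one α).2 hα).le)
  have : 0 < 1 + √(1 - α ^ 2) := by positivity
  unfold potConst potPole
  field_simp
  linear_combination hs

lemma abs_potPole_lt_one (hα : |α| < 1) : |potPole α| < 1 := by
  have hs : 0 < 1 + √(1 - α ^ 2) := by positivity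
  rw [potPole, abs_div, abs_of_pos hs, div_lt_one hs]
  linarith [Real.sqrt_nonneg (1 - α ^ 2)]

lemma potDenominator_eq (hα : |α| < 1) (hX : X ≠ 0) :
    potDenominator α X = potConst α * (1 - potPole α * X) * (1 - potPole α * X⁻¹) := by
  have hone : (potConst α : ℂ) * (1 + potPole α ^ 2) = 1 := by
    exact_mod_cast potConst_mul_one_add_potPole_sq hα
  have hhalf : (potConst α : ℂ) * potPole α = α / 2 := by exact_mod_cast potConst_mul_potPole α
  unfold potDenominator
  linear_combination (-1 : ℂ) * hone + (X + X⁻¹) * hhalf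
    - (potConst α : ℂ) * potPole α ^ 2 * mul_inv_cancel₀ hX

lemma norm_potPole_mul (X : ℂ) : ‖(potPole α : ℂ) * X‖ = |potPole α| * ‖X‖ := by
  rw [norm_mul, Complex.norm_real, Real.norm_eq_abs]

lemma one_sub_potPole_mul_ne_zero (hX : |potPole α| * ‖X‖ < 1) : 1 - potPole α * X ≠ 0 := fun h ↦ by
  rw [← norm_potPole_mul, ← sub_eq_zero.1 h, norm_one] at hX
  exact hX.false

lemma potDenominator_ne_zero (hα : |α| < 1) (hX : |potPole α| < ‖X‖) (hX' : |potPole α| * ‖X‖ < 1) :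
    potDenominator α X ≠ 0 := by
  have hX0 : 0 < ‖X‖ := (abs_nonneg _).trans_lt hX
  rw [potDenominator_eq hα (norm_pos_iff.1 hX0)]
  refine mul_ne_zero (mul_ne_zero (by exact_mod_cast (potConst_pos α).ne')
    (one_sub_potPole_mul_ne_zero hX')) (one_sub_potPole_mul_ne_zero ?_)
  rwa [norm_inv, ← div_eq_mul_inv, div_lt_one hX0]

lemma potDenominator_inv (α : ℝ) (X : ℂ) : potDenominator α X⁻¹ = potDenominator α X := by
  rw [potDenominator, inv_inv, add_comm, potDenominator]

lemma complexPotential_inv (α lam : ℝ) (X : ℂ) :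
    complexPotential α lam X⁻¹ = complexPotential α lam X := by
  rw [complexPotential, potDenominator_inv, inv_inv, add_comm, complexPotential]

lemma prod_norm_potDenominator (hα : |α| < 1) {ρ : ℂ} (hX : X ≠ 0) (hρ : ρ ≠ 0) (N : ℕ) :
    ∏ j ∈ Finset.range N, ‖potDenominator α (X * ρ ^ j)‖ = potConst α ^ N *
      ((∏ j ∈ Finset.range N, ‖1 - potPole α * X * ρ ^ j‖) *
        ∏ j ∈ Finset.range N, ‖1 - potPole α * X⁻¹ * ρ⁻¹ ^ j‖) := by
  rw [Finset.pow_eq_prod_const, ← Finset.prod_mul_distrib, ← Finset.prod_mul_distrib]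
  refine Finset.prod_congr rfl fun j _ ↦ ?_
  rw [potDenominator_eq hα (mul_ne_zero hX (pow_ne_zero j hρ)), norm_mul, norm_mul,
    Complex.norm_of_nonneg (potConst_pos α).le, mul_inv, inv_pow, mul_assoc, mul_assoc, mul_assoc]

lemma exists_prod_norm_potDenominator_bounds (hα : |α| < 1) {ρ : ℂ} (hρ : ‖ρ‖ = 1)
    (hρ' : ¬IsOfFinOrder ρ) (hr : |potPole α| < r) (hr' : |potPole α| * r < 1) {κ : ℝ}
    (hκ : 0 < κ) :
    ∃ K : ℝ, 0 < K ∧ ∀ (N : ℕ) (X : ℂ), ‖X‖ = r →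
      Real.exp ((Real.log (potConst α) - κ) * N) / K
        ≤ ∏ j ∈ Finset.range N, ‖potDenominator α (X * ρ ^ j)‖ ∧
      ∏ j ∈ Finset.range N, ‖potDenominator α (X * ρ ^ j)‖
        ≤ K * Real.exp ((Real.log (potConst α) + κ) * N) := by
  have hr0 : 0 < r := (abs_nonneg _).trans_lt hr
  have hinv : ¬IsOfFinOrder ρ⁻¹ := by
    simpa only [isOfFinOrder_iff_pow_eq_one, inv_pow, inv_eq_one] using hρ'
  obtain ⟨K₁, hK₁, h₁⟩ := exists_prod_norm_one_sub_orbit_bounds hρ hρ' hr' (half_pos hκ)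
  obtain ⟨K₂, hK₂, h₂⟩ := exists_prod_norm_one_sub_orbit_bounds (ρ := ρ⁻¹)
    (by rw [norm_inv, hρ, inv_one]) hinv (β := |potPole α| * r⁻¹)
    (by rwa [← div_eq_mul_inv, div_lt_one hr0]) (half_pos hκ)
  refine ⟨K₁ * K₂, by positivity, fun N X hX ↦ ?_⟩
  obtain ⟨hlo₁, hup₁⟩ := h₁ N (potPole α * X) (by rw [norm_potPole_mul, hX])
  obtain ⟨hlo₂, hup₂⟩ := h₂ N (potPole α * X⁻¹) (by rw [norm_potPole_mul, norm_inv, hX])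
  have hpow : potConst α ^ N = Real.exp (N * Real.log (potConst α)) := by
    rw [Real.exp_nat_mul, Real.exp_log (potConst_pos α)]
  rw [prod_norm_potDenominator hα (norm_pos_iff.1 (hX ▸ hr0))
    (norm_pos_iff.1 (hρ ▸ one_pos)), hpow]
  constructor
  · calc Real.exp ((Real.log (potConst α) - κ) * N) / (K₁ * K₂)
        = Real.exp (N * Real.log (potConst α)) *
            (Real.exp (-(κ / 2) * N) / K₁ * (Real.exp (-(κ / 2) * N) / K₂)) := by
          rw [div_mul_div_comm, ← Real.exp_add, ← mul_div_assoc, ← Real.exp_add]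
          ring_nf
      _ ≤ _ := by gcongr
  · calc _ ≤ Real.exp (N * Real.log (potConst α)) *
            (K₁ * Real.exp (κ / 2 * N) * (K₂ * Real.exp (κ / 2 * N))) := by gcongr
      _ = K₁ * K₂ * Real.exp ((Real.log (potConst α) + κ) * N) := by
          rw [mul_mul_mul_comm, ← Real.exp_add, mul_left_comm, ← Real.exp_add]
          ring_nf

end Potential

section ClearedCocycle

variable {α lam : ℝ} {z X ρ : ℂ} {r c κ : ℝ}

lemma clearedTransferMatrix_eq (hX : X ≠ 0) (hden : potDenominator α X ≠ 0) :
    clearedTransferMatrix α lam z X =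
      (X * potDenominator α X) • transferMatrix α lam z X := by
  have hp : X * potDenominator α X = clearedDenominator α X := by
    unfold potDenominator clearedDenominator
    field_simp
  have hv : X * potDenominator α X * complexPotential α lam X = lam * (X ^ 2 + 1) := by
    unfold complexPotential
    field_simp
  rw [clearedTransferMatrix, transferMatrix, schrodingerMatrix, ← hp, ← hv]
  ext i j
  fin_cases i <;> fin_cases j <;> simp [mul_sub, mul_comm z]

lemma cocycle_clearedTransferMatrix (hX : X ≠ 0) (hρ : ρ ≠ 0)
    (hden : ∀ j : ℕ, potDenominator α (X * ρ ^ j) ≠ 0) (k : ℕ) :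
    cocycle (clearedTransferMatrix α lam z) ρ k X =
      (∏ j ∈ Finset.range k, X * ρ ^ j * potDenominator α (X * ρ ^ j)) •
        cocycle (transferMatrix α lam z) ρ k X :=
  cocycle.eq_prod_smul (s := fun Y ↦ Y * potDenominator α Y)
    (fun j ↦ clearedTransferMatrix_eq (mul_ne_zero hX (pow_ne_zero j hρ)) (hden j)) k

lemma norm_cocycle_clearedTransferMatrix (hα : |α| < 1) (hρ : ‖ρ‖ = 1) (hX : |potPole α| < ‖X‖)
    (hX' : |potPole α| * ‖X‖ < 1) (k : ℕ) :
    ‖cocycle (clearedTransferMatrix α lam z) ρ k X‖ =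
      ‖X‖ ^ k * (∏ j ∈ Finset.range k, ‖potDenominator α (X * ρ ^ j)‖) *
        ‖cocycle (transferMatrix α lam z) ρ k X‖ := by
  have hden : ∀ j : ℕ, potDenominator α (X * ρ ^ j) ≠ 0 := fun j ↦ by
    have hXj := norm_mul_pow_of_norm_eq_one hρ X j
    exact potDenominator_ne_zero hα (by rwa [hXj]) (by rwa [hXj])
  rw [cocycle_clearedTransferMatrix (norm_pos_iff.1 ((abs_nonneg _).trans_lt hX))
    (norm_pos_iff.1 (hρ ▸ one_pos)) hden, norm_smul, norm_prod]
  simp only [norm_mul, Finset.prod_mul_distrib, norm_pow, hρ, one_pow, mul_one, Finset.prod_const,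
    Finset.card_range]

lemma hasGrowthBound_clearedTransferMatrix (hα : |α| < 1) (hρ : ‖ρ‖ = 1) (hρ' : ¬IsOfFinOrder ρ)
    (hr : |potPole α| < r) (hr' : |potPole α| * r < 1) (hκ : 0 < κ)
    (h : HasGrowthBound (transferMatrix α lam z) ρ r c) :
    HasGrowthBound (clearedTransferMatrix α lam z) ρ r
      (Real.log r + Real.log (potConst α) + c + κ) := by
  obtain ⟨C, hC, h⟩ := h
  obtain ⟨K, hK, hprod⟩ := exists_prod_norm_potDenominator_bounds hα hρ hρ' hr hr' hκ
  have hr0 : 0 < r := (abs_nonneg _).trans_lt hr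
  refine ⟨K * C, by positivity, fun n X hX ↦ ?_⟩
  have hpow : r ^ n = Real.exp (n * Real.log r) := by rw [Real.exp_nat_mul, Real.exp_log hr0]
  rw [norm_cocycle_clearedTransferMatrix hα hρ (by rwa [hX]) (by rwa [hX]), hX, hpow]
  calc _ ≤ Real.exp (n * Real.log r) * (K * Real.exp ((Real.log (potConst α) + κ) * n))
        * (C * Real.exp (c * n)) := by gcongr; exacts [(hprod n X hX).2, h n X hX]
    _ = K * C * (Real.exp (n * Real.log r) * Real.exp ((Real.log (potConst α) + κ) * n)
        * Real.exp (c * n)) := by ring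
    _ = K * C * Real.exp ((Real.log r + Real.log (potConst α) + c + κ) * n) := by
      rw [← Real.exp_add, ← Real.exp_add]
      ring_nf

lemma hasGrowthBound_of_clearedTransferMatrix (hα : |α| < 1) (hρ : ‖ρ‖ = 1) (hρ' : ¬IsOfFinOrder ρ)
    (hr : |potPole α| < r) (hr' : |potPole α| * r < 1) (hκ : 0 < κ)
    (h : HasGrowthBound (clearedTransferMatrix α lam z) ρ r
      (Real.log r + Real.log (potConst α) + c)) :
    HasGrowthBound (transferMatrix α lam z) ρ r (c + κ) := by
  obtain ⟨C, hC, h⟩ := h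
  obtain ⟨K, hK, hprod⟩ := exists_prod_norm_potDenominator_bounds hα hρ hρ' hr hr' hκ
  have hr0 : 0 < r := (abs_nonneg _).trans_lt hr
  refine ⟨K * C, by positivity, fun n X hX ↦ ?_⟩
  have hpow : r ^ n = Real.exp (n * Real.log r) := by rw [Real.exp_nat_mul, Real.exp_log hr0]
  set d := Real.exp (n * Real.log r) * (Real.exp ((Real.log (potConst α) - κ) * n) / K) with hd
  refine le_of_mul_le_mul_left ?_ (show 0 < d by positivity)
  calc d * ‖cocycle (transferMatrix α lam z) ρ n X‖
      ≤ ‖cocycle (clearedTransferMatrix α lam z) ρ n X‖ := by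
        rw [norm_cocycle_clearedTransferMatrix hα hρ (by rwa [hX]) (by rwa [hX]), hX, hpow]
        rw [hd]
        gcongr
        exact (hprod n X hX).1
    _ ≤ C * Real.exp ((Real.log r + Real.log (potConst α) + c) * n) := h n X hX
    _ = C * (Real.exp (n * Real.log r) * Real.exp ((Real.log (potConst α) - κ) * n)
        * Real.exp ((c + κ) * n)) := by
      rw [← Real.exp_add, ← Real.exp_add]
      ring_nf
    _ = d * (K * C * Real.exp ((c + κ) * n)) := by rw [hd]; field_simp

end ClearedCocycle

section GrowthNearZero

lemma HasGrowthBound.eventually_of_norm_pow_lt {R : Type*} [NormedRing R] [NormOneClass R]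
    {F : ℂ → R} {ρ : ℂ} {c : ℝ} {k : ℕ} (hF : Continuous F) (hρ : ‖ρ‖ = 1) (hk : 0 < k)
    (h : ‖F 0 ^ k‖ < Real.exp (c * k)) : ∀ᶠ r : ℝ in nhds 0, HasGrowthBound F ρ r c := by
  have hlim := ((cocycle.continuous ρ hF k).norm).tendsto 0
  rw [cocycle.at_zero] at hlim
  obtain ⟨ε, hε, hball⟩ := Metric.eventually_nhds_iff.1 (hlim.eventually (gt_mem_nhds h))
  filter_upwards [gt_mem_nhds hε] with r hr
  obtain ⟨B, hB⟩ := (isCompact_sphere (0 : ℂ) r).exists_bound_of_continuousOn hF.continuousOn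
  exact of_norm_le_exp hρ (fun X hX ↦ hB X (by simpa using hX)) hk fun X hX ↦
    (hball (by rwa [dist_zero_right, hX])).le

lemma norm_pow_le_of_sub_mul_sub_eq_zero {A : Type*} [NormedRing A] [NormedAlgebra ℂ A]
    [NormOneClass A] {M : A} {t₁ t₂ : ℂ} {T : ℝ} (hT : 0 < T) (h₁ : ‖t₁‖ ≤ T) (h₂ : ‖t₂‖ ≤ T)
    (hM : (M - t₂ • (1 : A)) * (M - t₁ • (1 : A)) = 0) (k : ℕ) :
    ‖M ^ k‖ ≤ T ^ k * (1 + k * (‖M - t₁ • (1 : A)‖ / T)) := by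
  have heigen : ∀ k : ℕ, M ^ k * (M - t₁ • (1 : A)) = t₂ ^ k • (M - t₁ • (1 : A)) := fun k ↦ by
    rw [sub_mul, smul_one_mul, sub_eq_zero] at hM
    induction k with
    | zero => simp
    | succ k ih => rw [pow_succ, mul_assoc, hM, mul_smul_comm, ih, smul_smul, pow_succ']
  induction k with
  | zero => simp
  | succ k ih =>
    have hrec : M ^ (k + 1) = t₁ • M ^ k + t₂ ^ k • (M - t₁ • (1 : A)) := by
      rw [← heigen, mul_sub, pow_succ, mul_smul_comm, mul_one, add_sub_cancel]
    calc ‖M ^ (k + 1)‖ ≤ ‖t₁‖ * ‖M ^ k‖ + ‖t₂‖ ^ k * ‖M - t₁ • (1 : A)‖ := by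
          rw [hrec, ← norm_pow, ← norm_smul, ← norm_smul]
          exact norm_add_le _ _
      _ ≤ T * (T ^ k * (1 + k * (‖M - t₁ • (1 : A)‖ / T))) + T ^ k * ‖M - t₁ • (1 : A)‖ := by
          gcongr
      _ = T ^ (k + 1) * (1 + (k + 1 : ℕ) * (‖M - t₁ • (1 : A)‖ / T)) := by
          push_cast
          field_simp
          ring

variable {α D : ℝ}

lemma norm_le_potConst_of_quadratic_eq_zero (hα : |α| < 1) (hD : |D| ≤ 2) {t : ℂ}
    (ht : t ^ 2 + D / 2 * t + α ^ 2 / 4 = 0) : ‖t‖ ≤ potConst α := by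
  have hsq : α ^ 2 < 1 := (sq_lt_one_iff_abs_lt_one α).2 hα
  have hsqrt : √(1 - α ^ 2) ^ 2 = 1 - α ^ 2 := Real.sq_sqrt (by linarith)
  by_contra! hlt
  have hhalf : 1 / 2 < ‖t‖ := lt_of_le_of_lt
    (by unfold potConst; linarith [Real.sqrt_nonneg (1 - α ^ 2)]) hlt
  have hre : t.re ^ 2 - t.im ^ 2 + D / 2 * t.re + α ^ 2 / 4 = 0 := by
    simpa [pow_two] using congrArg Complex.re ht
  have him : 2 * t.re * t.im + D / 2 * t.im = 0 := by
    linarith [show t.re * t.im + t.im * t.re + D / 2 * t.im = 0 by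
      simpa [pow_two] using congrArg Complex.im ht]
  have hreal : t.im = 0 := by
    have hnorm : ‖t‖ ^ 2 = t.re ^ 2 + t.im ^ 2 := by
      rw [Complex.sq_norm, Complex.normSq_apply, sq, sq]
    have hprod : (‖t‖ ^ 2 - α ^ 2 / 4) * t.im = 0 := by
      linear_combination t.im * hnorm - t.im * hre + t.re * him
    exact (mul_eq_zero.1 hprod).resolve_left (by nlinarith)
  have hnorm : ‖t‖ = |t.re| := (Complex.abs_re_eq_norm.2 hreal).symm
  have hquad : ‖t‖ ^ 2 + α ^ 2 / 4 ≤ ‖t‖ := by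
    rw [hreal] at hre
    have := mul_le_mul_of_nonneg_right hD (abs_nonneg t.re)
    rw [← abs_mul] at this
    rw [hnorm, sq_abs]
    linarith [neg_abs_le (D * t.re)]
  unfold potConst at hlt
  nlinarith [Real.sqrt_nonneg (1 - α ^ 2)]

lemma exists_roots_norm_le_potConst (hα : |α| < 1) (hD : |D| ≤ 2) :
    ∃ t₁ t₂ : ℂ, t₁ + t₂ = -D / 2 ∧ t₁ * t₂ = α ^ 2 / 4 ∧
      ‖t₁‖ ≤ potConst α ∧ ‖t₂‖ ≤ potConst α := by
  obtain ⟨s, hs⟩ := IsAlgClosed.exists_eq_mul_self ((D : ℂ) ^ 2 / 4 - α ^ 2)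
  refine ⟨(-D / 2 + s) / 2, (-D / 2 - s) / 2, by ring, by linear_combination hs / 4,
    norm_le_potConst_of_quadratic_eq_zero hα hD ?_, norm_le_potConst_of_quadratic_eq_zero hα hD ?_⟩
  all_goals linear_combination -hs / 4

variable {lam E : ℝ}

lemma differentiable_clearedTransferMatrix (α lam : ℝ) (z : ℂ) :
    Differentiable ℂ (clearedTransferMatrix α lam z) := by
  have h : clearedTransferMatrix α lam z = fun X ↦
      (z * clearedDenominator α X - lam * (X ^ 2 + 1)) • !![1, 0; 0, 0]
        + clearedDenominator α X • !![0, -1; 1, 0] := by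
    funext X
    simp [clearedTransferMatrix]
  rw [h]
  unfold clearedDenominator
  fun_prop

lemma norm_clearedTransferMatrix_zero_pow_le (hα : |α| < 1) (hD : |α * E + 2 * lam| ≤ 2) :
    ∃ D : ℝ, 0 ≤ D ∧ ∀ k : ℕ,
      ‖clearedTransferMatrix α lam E 0 ^ k‖ ≤ potConst α ^ k * (1 + k * D) := by
  obtain ⟨t₁, t₂, hsum, hprod, h₁, h₂⟩ := exists_roots_norm_le_potConst hα hD
  push_cast at hsum
  have hc := potConst_pos α
  refine ⟨_, by positivity, norm_pow_le_of_sub_mul_sub_eq_zero hc h₁ h₂ ?_⟩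
  ext i j
  fin_cases i <;> fin_cases j <;>
    simp [clearedTransferMatrix, clearedDenominator, Matrix.mul_apply, Fin.sum_univ_two,
      Matrix.one_apply]
  · linear_combination (E * α / 2 + lam : ℂ) * hsum + hprod
  · linear_combination (-α / 2 : ℂ) * hsum
  · linear_combination (α / 2 : ℂ) * hsum
  · linear_combination hprod

/-- At `X = 0` the cleared transfer matrix has trace `-(αE + 2λ) / 2` and determinant `α² / 4`, so
`|αE + 2λ| ≤ 2` says exactly that its spectral radius is at most `potConst α`. -/
lemma exists_hasGrowthBound_clearedTransferMatrix (hα : |α| < 1) (hD : |α * E + 2 * lam| ≤ 2)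
    {ρ : ℂ} (hρ : ‖ρ‖ = 1) {κ : ℝ} (hκ : 0 < κ) :
    ∃ r : ℝ, 0 < r ∧ r ≤ 1 / 2 ∧
      HasGrowthBound (clearedTransferMatrix α lam E) ρ r (Real.log (potConst α) + κ) := by
  obtain ⟨D, hD, hpow⟩ := norm_clearedTransferMatrix_zero_pow_le hα hD
  obtain ⟨k, hk, hk0⟩ := ((eventually_mul_exp_neg_mul_le_one hκ (1 + D)).and
    (Filter.eventually_gt_atTop 0)).exists
  have hexp : 1 + k * D < Real.exp (κ * k) := by
    rw [neg_mul, Real.exp_neg, mul_right_comm, ← div_eq_mul_inv, div_le_one (Real.exp_pos _)] at hk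
    have : (0 : ℝ) < k := by exact_mod_cast hk0
    nlinarith
  have hlt : ‖clearedTransferMatrix α lam E 0 ^ k‖ <
      Real.exp ((Real.log (potConst α) + κ) * k) := by
    refine (hpow k).trans_lt ?_
    rw [add_mul, Real.exp_add, mul_comm (Real.log _), Real.exp_nat_mul,
      Real.exp_log (potConst_pos α)]
    have := potConst_pos α
    gcongr
  have hgrowth := HasGrowthBound.eventually_of_norm_pow_lt
    (differentiable_clearedTransferMatrix α lam E).continuous hρ hk0 hlt
  obtain ⟨r, hgrowth, hr0, hr⟩ := ((hgrowth.filter_mono nhdsWithin_le_nhds).and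
    (Ioc_mem_nhdsGT (show (0 : ℝ) < 1 / 2 by norm_num))).exists
  exact ⟨r, hr0, hr, hgrowth⟩

end GrowthNearZero

/-! ### Transporting growth bounds between circles and energies -/

/-- Transposing the transfer matrix and changing the sign of its off-diagonal entries reverses the
order of the factors, which reverses the orbit. -/
lemma cocycle_schrodingerMatrix_inv {w : ℂ → ℂ} {ρ : ℂ} (hw : ∀ X, w X⁻¹ = w X) (hρ : ρ ≠ 0)
    (n : ℕ) (X : ℂ) :
    cocycle (schrodingerMatrix w) ρ n (X⁻¹ * ρ * (ρ ^ n)⁻¹) =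
      !![cocycle (schrodingerMatrix w) ρ n X 0 0, -cocycle (schrodingerMatrix w) ρ n X 1 0;
        -cocycle (schrodingerMatrix w) ρ n X 0 1, cocycle (schrodingerMatrix w) ρ n X 1 1] := by
  induction n with
  | zero => simp [Matrix.one_fin_two]
  | succ n ih =>
    have hlast : X⁻¹ * ρ * (ρ ^ (n + 1))⁻¹ = (X * ρ ^ n)⁻¹ := by
      rw [pow_succ']
      field_simp
    have hrest : (X * ρ ^ n)⁻¹ * ρ = X⁻¹ * ρ * (ρ ^ n)⁻¹ := by field_simp
    rw [hlast, cocycle.succ', hrest, ih, cocycle.succ]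
    ext i j
    fin_cases i <;> fin_cases j <;>
      simp [schrodingerMatrix, hw, -mul_inv_rev, Matrix.mul_apply, Fin.sum_univ_two] <;> ring

namespace HasGrowthBound

section NormedRing

variable {R : Type*} [NormedRing R] {F : ℂ → R} {ρ t : ℂ} {a b r c s κ B : ℝ}

lemma comp_mul_left_iff (ht : t ≠ 0) :
    HasGrowthBound (fun X ↦ F (t * X)) ρ r c ↔ HasGrowthBound F ρ (‖t‖ * r) c := by
  have hcocycle : ∀ (n : ℕ) (X : ℂ), cocycle (fun X ↦ F (t * X)) ρ n X = cocycle F ρ n (t * X) :=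
    fun n X ↦ by
      induction n with
      | zero => rfl
      | succ n ih => rw [cocycle.succ, cocycle.succ, ih, mul_assoc]
  simp only [HasGrowthBound, hcocycle]
  refine exists_congr fun C ↦ and_congr_right fun _ ↦ forall_congr' fun n ↦
    ⟨fun h X hX ↦ ?_, fun h X hX ↦ h _ (by rw [norm_mul, hX])⟩
  have := h (t⁻¹ * X) (by rw [norm_mul, norm_inv, hX, inv_mul_cancel_left₀ (norm_ne_zero_iff.2 ht)])
  rwa [mul_inv_cancel_left₀ ht] at this

lemma interpolate [NormedAlgebra ℂ R] (hρ : ‖ρ‖ = 1) (ha : 0 < a) (hab : a < b)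
    (hF : DifferentiableOn ℂ F (closedAnnulus a b))
    (hFa : HasGrowthBound F ρ a (c + s * Real.log a))
    (hFb : HasGrowthBound F ρ b (c + s * Real.log b)) (hr : r ∈ Set.Icc a b) :
    HasGrowthBound F ρ r (c + s * Real.log r) := by
  obtain ⟨C₁, hC₁, hFa⟩ := hFa
  obtain ⟨C₂, -, hFb⟩ := hFb
  have hC : 0 < max C₁ C₂ := lt_max_of_lt_left hC₁
  have hexp : ∀ (l : ℝ) (n : ℕ), max C₁ C₂ * Real.exp ((c + s * l) * n) =
      Real.exp (Real.log (max C₁ C₂) + c * n + s * n * l) := fun l n ↦ by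
    rw [add_assoc, Real.exp_add, Real.exp_log hC]
    ring_nf
  refine ⟨max C₁ C₂, hC, fun n X hX ↦ ?_⟩
  rw [hexp, ← hX]
  refine norm_le_exp_add_mul_log ha hab
    (cocycle.differentiableOn (mapsTo_mul_closedAnnulus hρ) hF n) (fun Y hY ↦ ?_) (fun Y hY ↦ ?_)
    (by rwa [closedAnnulus, Set.mem_ofPred_eq, hX])
  · rw [← hexp]
    exact (hFa n Y hY).trans (by gcongr; exact le_max_left _ _)
  · rw [← hexp]
    exact (hFb n Y hY).trans (by gcongr; exact le_max_right _ _)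

lemma exists_of_norm_sub_le [NormOneClass R] (hρ : ‖ρ‖ = 1) (hF : ∀ X : ℂ, ‖X‖ = r → ‖F X‖ ≤ B)
    (h : HasGrowthBound F ρ r c) (hκ : 0 < κ) :
    ∃ δ > 0, ∀ G : ℂ → R, (∀ X : ℂ, ‖X‖ = r → ‖G X - F X‖ ≤ δ) →
      HasGrowthBound G ρ r (c + κ) := by
  obtain ⟨C, hC, h⟩ := h
  obtain ⟨n, hn, hn0⟩ := ((eventually_mul_exp_neg_mul_le_one hκ (2 * C)).and
    (Filter.eventually_gt_atTop 0)).exists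
  have hn1 : (1 : ℝ) ≤ n := by exact_mod_cast hn0
  have hsmall : C * Real.exp (c * n) ≤ Real.exp ((c + κ) * n) / 2 := by
    have hle : 2 * C * Real.exp (-κ * n) ≤ 1 :=
      (le_mul_of_one_le_right (by positivity) (by linarith)).trans hn
    calc C * Real.exp (c * n) = 2 * C * Real.exp (-κ * n) * (Real.exp ((c + κ) * n) / 2) := by
          rw [show c * n = -κ * n + (c + κ) * n by ring, Real.exp_add]
          ring
      _ ≤ Real.exp ((c + κ) * n) / 2 := mul_le_of_le_one_left (by positivity) hle
  have hB' : ∀ X : ℂ, ‖X‖ = r → ‖F X‖ ≤ max B 1 + 1 := fun X hX ↦ by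
    linarith [hF X hX, le_max_left B 1]
  refine ⟨min 1 (Real.exp ((c + κ) * n) / 2 / (n * (max B 1 + 1) ^ n)), by positivity,
    fun G hG ↦ ?_⟩
  have hGB : ∀ X : ℂ, ‖X‖ = r → ‖G X‖ ≤ max B 1 + 1 := fun X hX ↦ by
    linarith [norm_le_norm_add_norm_sub' (G X) (F X), hF X hX, le_max_left B 1,
      (hG X hX).trans (min_le_left _ _)]
  refine of_norm_le_exp hρ hGB hn0 fun X hX ↦ ?_
  calc ‖cocycle G ρ n X‖
      ≤ ‖cocycle F ρ n X‖ + ‖cocycle G ρ n X - cocycle F ρ n X‖ := norm_le_norm_add_norm_sub' _ _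
    _ ≤ Real.exp ((c + κ) * n) / 2 + n * (max B 1 + 1) ^ n *
          (Real.exp ((c + κ) * n) / 2 / (n * (max B 1 + 1) ^ n)) :=
        add_le_add ((h n X hX).trans hsmall) (cocycle.norm_sub_le hρ
          (by linarith [le_max_right B 1]) hB' hGB (fun Y hY ↦ (hG Y hY).trans (min_le_right _ _))
          hX n)
    _ = Real.exp ((c + κ) * n) := by field_simp; ring

lemma add_of_isGLB {f : ℝ} (hf : IsGLB {c | HasGrowthBound F ρ r c} f) (hκ : 0 < κ) :
    HasGrowthBound F ρ r (f + κ) := by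
  obtain ⟨c, hc, -, hcf⟩ := hf.exists_between (lt_add_of_pos_right f hκ)
  exact HasGrowthBound.mono hc hcf.le

end NormedRing

section Schrodinger

variable {w : ℂ → ℂ} {ρ : ℂ} {r c B : ℝ}

lemma exists_isGLB_schrodingerMatrix (hρ : ‖ρ‖ = 1) (hr : 0 ≤ r)
    (hw : ∀ X : ℂ, ‖X‖ = r → ‖schrodingerMatrix w X‖ ≤ B) :
    ∃ f, IsGLB {c | HasGrowthBound (schrodingerMatrix w) ρ r c} f :=
  ⟨_, isGLB_csInf (exists_of_norm_le hρ hw)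
    ⟨0, fun _ hc ↦ nonneg_of_det_eq_one (det_schrodingerMatrix w) hr hc⟩⟩

lemma schrodingerMatrix_inv (hw : ∀ X, w X⁻¹ = w X) (hρ : ‖ρ‖ = 1)
    (h : HasGrowthBound (schrodingerMatrix w) ρ r c) :
    HasGrowthBound (schrodingerMatrix w) ρ r⁻¹ c := by
  obtain ⟨C, hC, h⟩ := h
  have hρ0 : ρ ≠ 0 := norm_ne_zero_iff.1 (hρ ▸ one_ne_zero)
  refine ⟨2 * C, by positivity, fun n X hX ↦ ?_⟩
  have hreflected := h n (X⁻¹ * ρ * (ρ ^ n)⁻¹) (by simp [hρ, hX])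
  rw [cocycle_schrodingerMatrix_inv hw hρ0] at hreflected
  rw [mul_assoc]
  refine linfty_opNorm_le_two_mul fun i j ↦
    le_trans (le_of_eq ?_) ((norm_entry_le_linfty_opNorm _ j i).trans hreflected)
  fin_cases i <;> fin_cases j <;> simp

end Schrodinger

end HasGrowthBound

/-! ### Growth of the transfer matrices off the real axis and off the unit circle -/

section Potential

variable {α lam a R : ℝ}

lemma differentiableOn_complexPotential (hα : |α| < 1) (ha : |potPole α| < a)
    (hR : |potPole α| * R < 1) :
    DifferentiableOn ℂ (complexPotential α lam) (closedAnnulus a R) := fun X hX ↦ by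
  have hX0 : X ≠ 0 := norm_pos_iff.1 (((abs_nonneg _).trans_lt ha).trans_le hX.1)
  have hden : potDenominator α X ≠ 0 := potDenominator_ne_zero hα (ha.trans_le hX.1)
    ((mul_le_mul_of_nonneg_left hX.2 (abs_nonneg _)).trans_lt hR)
  unfold complexPotential
  refine DifferentiableAt.differentiableWithinAt (.fun_div ?_ ?_ hden)
  · fun_prop (disch := assumption)
  · unfold potDenominator
    fun_prop (disch := assumption)

lemma differentiableOn_transferMatrix (hα : |α| < 1) (ha : |potPole α| < a)
    (hR : |potPole α| * R < 1) (z : ℂ) :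
    DifferentiableOn ℂ (transferMatrix α lam z) (closedAnnulus a R) :=
  differentiableOn_schrodingerMatrix ((differentiableOn_complexPotential hα ha hR).const_sub z)

lemma complexPotential_im_eq_zero {X : ℂ} (hX : ‖X‖ = 1) : (complexPotential α lam X).im = 0 := by
  have hadd : X + X⁻¹ = ((2 * X.re : ℝ) : ℂ) := by
    rw [Complex.inv_eq_conj hX, Complex.add_conj]
  have hreal : complexPotential α lam X =
      ((lam * (2 * X.re) / (1 - α * ((2 * X.re) / 2)) : ℝ) : ℂ) := by
    unfold complexPotential potDenominator
    rw [hadd]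
    push_cast
    ring
  rw [hreal, Complex.ofReal_im]

end Potential

/-- The cleared cocycle has no pole at `X = 0`, where its growth rate is at most that of the
denominators; the three circles inequality then beats the slope `1` that the potential alone
gives. -/
lemma exists_hasGrowthBound_transferMatrix_of_lt_one {α lam E : ℝ} (hα : |α| < 1)
    (hD : |α * E + 2 * lam| ≤ 2) {ρ : ℂ} (hρ : ‖ρ‖ = 1) (hρ' : ¬IsOfFinOrder ρ) {L : ℝ} (hL : 0 < L)
    (h : ∀ κ > 0, HasGrowthBound (transferMatrix α lam E) ρ 1 (L + κ)) :
    ∃ τ : ℝ, 0 < τ ∧ τ < 1 ∧ ∀ r ∈ Set.Icc (1 / 2 : ℝ) 1, |potPole α| < r → ∀ κ > 0,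
      HasGrowthBound (transferMatrix α lam E) ρ r (L + κ - (1 - τ) * Real.log r) := by
  obtain ⟨r₀, hr₀, hr₀', h₀⟩ := exists_hasGrowthBound_clearedTransferMatrix hα hD hρ (half_pos hL)
  have hlog : 0 < -Real.log r₀ := neg_pos.2 (Real.log_neg hr₀ (by linarith))
  set τ := min (1 / 2) (L / 2 / -Real.log r₀)
  have hτlog : τ * -Real.log r₀ ≤ L / 2 := by
    rw [← le_div_iff₀ hlog]
    exact min_le_right _ _
  have hβ := abs_potPole_lt_one hα
  refine ⟨τ, by positivity, (min_le_left _ _).trans_lt (by norm_num), fun r hr hβr κ hκ ↦ ?_⟩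
  have h₁ := hasGrowthBound_clearedTransferMatrix hα hρ hρ' hβ (by rwa [mul_one])
    (show 0 < κ / 4 by positivity) (h (κ / 4) (by positivity))
  have hinner : HasGrowthBound (clearedTransferMatrix α lam E) ρ r₀
      (Real.log (potConst α) + L + κ / 2 + τ * Real.log r₀) := h₀.mono (by linarith)
  have houter : HasGrowthBound (clearedTransferMatrix α lam E) ρ 1
      (Real.log (potConst α) + L + κ / 2 + τ * Real.log 1) :=
    h₁.mono (by rw [Real.log_one]; linarith)
  have hr' := HasGrowthBound.interpolate hρ hr₀ (by linarith)
    (differentiable_clearedTransferMatrix α lam E).differentiableOn hinner houter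
    (show r ∈ Set.Icc r₀ 1 from ⟨hr₀'.trans hr.1, hr.2⟩)
  refine (hasGrowthBound_of_clearedTransferMatrix hα hρ hρ' hβr
    (by nlinarith [abs_nonneg (potPole α), hr.1, hr.2]) (half_pos hκ)
    (hr'.mono (le_of_eq ?_) :
      HasGrowthBound _ ρ r (Real.log r + Real.log (potConst α) +
        (L + κ / 2 - (1 - τ) * Real.log r)))).mono (le_of_eq ?_)
  · ring
  · ring

section Columns

variable {V : ℂ → ℂ} {ρ X : ℂ}

lemma im_conj_mul_cocycle_schrodingerMatrix (hV : ∀ j : ℕ, (V (X * ρ ^ j)).im = 0) (z : ℂ)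
    (k : ℕ) :
    (starRingEnd ℂ (cocycle (schrodingerMatrix fun X ↦ z - V X) ρ k X 1 0) *
      cocycle (schrodingerMatrix fun X ↦ z - V X) ρ k X 0 0).im =
    z.im * ∑ j ∈ Finset.range k,
      Complex.normSq (cocycle (schrodingerMatrix fun X ↦ z - V X) ρ j X 0 0) := by
  induction k with
  | zero => simp
  | succ k ih =>
    rw [Finset.sum_range_succ, mul_add, ← ih, cocycle.succ]
    simp [schrodingerMatrix, Matrix.mul_apply, Fin.sum_univ_two, Complex.normSq_apply, hV k]
    ring

lemma im_eq_zero_of_cocycle_schrodingerMatrix_eq_zero (hV : ∀ j : ℕ, (V (X * ρ ^ j)).im = 0)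
    {z : ℂ} {k : ℕ} (hz : cocycle (schrodingerMatrix fun X ↦ z - V X) ρ k X 0 0 = 0) :
    z.im = 0 := by
  have hk : 0 < k := Nat.pos_of_ne_zero fun h0 ↦ by simp [h0] at hz
  have h := im_conj_mul_cocycle_schrodingerMatrix hV z k
  rw [hz, mul_zero, Complex.zero_im] at h
  refine (mul_eq_zero.1 h.symm).resolve_right (ne_of_gt ?_)
  refine Finset.sum_pos' (fun j _ ↦ Complex.normSq_nonneg _) ⟨0, Finset.mem_range.2 hk, ?_⟩
  simp

lemma exists_polynomial_cocycle_schrodingerMatrix (V : ℂ → ℂ) (ρ X : ℂ) (k : ℕ) :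
    ∃ p q : Polynomial ℂ, ∀ z : ℂ,
      p.eval z = cocycle (schrodingerMatrix fun X ↦ z - V X) ρ k X 0 0 ∧
      q.eval z = cocycle (schrodingerMatrix fun X ↦ z - V X) ρ k X 1 0 := by
  induction k with
  | zero => exact ⟨1, 0, fun z ↦ by simp⟩
  | succ k ih =>
    obtain ⟨p, q, h⟩ := ih
    refine ⟨(Polynomial.X - Polynomial.C (V (X * ρ ^ k))) * p - q, p, fun z ↦ ?_⟩
    rw [cocycle.succ]
    simp [schrodingerMatrix, Matrix.mul_apply, Fin.sum_univ_two, (h z).1, (h z).2]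
    ring

lemma norm_eval_le_norm_eval_add_mul_I {p : Polynomial ℂ} (hp : ∀ z ∈ p.roots, z.im = 0)
    (E η : ℝ) : ‖p.eval (E : ℂ)‖ ≤ ‖p.eval (E + η * Complex.I)‖ := by
  have hroot : ∀ z ∈ p.roots, ‖(E : ℂ) - z‖ ≤ ‖(E + η * Complex.I : ℂ) - z‖ := fun z hz ↦ by
    rw [Complex.norm_eq_sqrt_sq_add_sq, Complex.norm_eq_sqrt_sq_add_sq]
    refine Real.sqrt_le_sqrt ?_
    simp [hp z hz, sq_nonneg]
  rw [(IsAlgClosed.splits p).eval_eq_prod_roots, (IsAlgClosed.splits p).eval_eq_prod_roots,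
    norm_mul, norm_mul]
  gcongr
  have hnorm : ∀ x : ℂ, ‖(p.roots.map (x - ·)).prod‖ = (p.roots.map (‖x - ·‖)).prod := fun x ↦
    (map_multiset_prod (normHom : ℂ →*₀ ℝ) _).trans (by rw [Multiset.map_map]; rfl)
  rw [hnorm, hnorm]
  exact Multiset.prod_map_le_prod_map₀ _ _ (fun _ _ ↦ norm_nonneg _) hroot

lemma HasGrowthBound.of_norm_entry_le {w : ℂ → ℂ} {r c C : ℝ} (hρ : ‖ρ‖ = 1) (hC : 0 ≤ C)
    (hc : 0 ≤ c) (h : ∀ (n : ℕ) (X : ℂ), ‖X‖ = r →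
      ‖cocycle (schrodingerMatrix w) ρ n X 0 0‖ ≤ C * Real.exp (c * n)) :
    HasGrowthBound (schrodingerMatrix w) ρ r c := by
  have hmono : ∀ n : ℕ, C * Real.exp (c * n) ≤ C * Real.exp (c * (n + 1 : ℕ)) := fun n ↦ by
    gcongr
    omega
  have hcol : ∀ (i : Fin 2) (n : ℕ) (X : ℂ), ‖X‖ = r →
      ‖cocycle (schrodingerMatrix w) ρ n X i 0‖ ≤ C * Real.exp (c * n) := fun i n X hX ↦ by
    fin_cases i
    · exact h n X hX
    · rcases n with - | n
      · simpa using hC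
      · simpa [cocycle.succ, schrodingerMatrix, Matrix.mul_apply, Fin.sum_univ_two]
          using (h n X hX).trans (hmono n)
  refine ⟨2 * (C + 1), by positivity, fun n X hX ↦ ?_⟩
  have hle : C * Real.exp (c * n) ≤ (C + 1) * Real.exp (c * n) := by
    gcongr
    linarith
  rw [mul_assoc]
  refine linfty_opNorm_le_two_mul fun i j ↦ ?_
  fin_cases j
  · exact (hcol i n X hX).trans hle
  rcases n with - | n
  · fin_cases i <;> simp [hC, add_nonneg]
  · refine le_trans (le_of_eq ?_)
      (((hcol i n (X * ρ) (by rw [norm_mul, hX, hρ, mul_one])).trans (hmono n)).trans hle)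
    simp [cocycle.succ', schrodingerMatrix, Matrix.mul_apply, Fin.sum_univ_two]

/-- The upper left entry is a polynomial in the energy whose roots, the eigenvalues of a Dirichlet
problem, are real, so its modulus increases away from the real axis. -/
lemma HasGrowthBound.of_add_mul_I {E η c : ℝ} (hρ : ‖ρ‖ = 1)
    (hV : ∀ X : ℂ, ‖X‖ = 1 → (V X).im = 0)
    (h : HasGrowthBound (schrodingerMatrix fun X ↦ (E + η * Complex.I) - V X) ρ 1 c) :
    HasGrowthBound (schrodingerMatrix fun X ↦ (E : ℂ) - V X) ρ 1 c := by
  have hc : 0 ≤ c := nonneg_of_det_eq_one (det_schrodingerMatrix _) zero_le_one h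
  obtain ⟨C, hC, h⟩ := h
  refine of_norm_entry_le hρ hC.le hc fun n X hX ↦ ?_
  have hreal : ∀ j : ℕ, (V (X * ρ ^ j)).im = 0 := fun j ↦
    hV _ (by rw [norm_mul_pow_of_norm_eq_one hρ, hX])
  obtain ⟨p, _, hp⟩ := exists_polynomial_cocycle_schrodingerMatrix V ρ X n
  have hroots : ∀ z ∈ p.roots, z.im = 0 := fun z hz ↦
    im_eq_zero_of_cocycle_schrodingerMatrix_eq_zero hreal
      ((hp z).1.symm.trans (Polynomial.isRoot_of_mem_roots hz))
  calc _ ≤ ‖p.eval (E + η * Complex.I)‖ := by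
        rw [← (hp E).1]
        exact norm_eval_le_norm_eval_add_mul_I hroots E η
    _ ≤ C * Real.exp (c * n) := by
        rw [(hp _).1]
        exact (norm_entry_le_linfty_opNorm _ 0 0).trans (h n X hX)

end Columns

section Circle

variable {w : ℂ → ℂ} {b a r R f τ K : ℝ}

lemma exists_schrodingerBoundedBelow_of_norm_eq (hb : Irrational b) (ha : 0 < a) (har : a < r)
    (hrR : r < R) (hw : DifferentiableOn ℂ w (closedAnnulus a R)) (hf : 0 < f) (hτ : 0 < τ)
    (hτ1 : τ < 1) (hglb : IsGLB {c | HasGrowthBound (schrodingerMatrix w) (𝐞 b) r c} f)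
    (hgR : ∀ κ > 0, HasGrowthBound (schrodingerMatrix w) (𝐞 b) R (f + κ))
    (hga : HasGrowthBound (schrodingerMatrix w) (𝐞 b) a (f - (1 - τ) * Real.log (a / r))) :
    ∃ K > 0, ∀ X : ℂ, ‖X‖ = r → SchrodingerBoundedBelow (fun n ↦ w (X * (𝐞 b : ℂ) ^ n)) K := by
  have hr : 0 < r := ha.trans har
  have hr0 : (r : ℂ) ≠ 0 := Complex.ofReal_ne_zero.2 hr.ne'
  have hscale : ∀ x c : ℝ, HasGrowthBound (schrodingerMatrix fun X ↦ w (r * X)) (𝐞 b) (x / r) c ↔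
      HasGrowthBound (schrodingerMatrix w) (𝐞 b) x c := fun x c ↦ by
    have h := HasGrowthBound.comp_mul_left_iff (F := schrodingerMatrix w) (ρ := 𝐞 b) (r := x / r)
      (c := c) hr0
    rwa [Complex.norm_of_nonneg hr.le, mul_div_cancel₀ x hr.ne'] at h
  have hone : ∀ c, HasGrowthBound (schrodingerMatrix fun X ↦ w (r * X)) (𝐞 b) 1 c ↔
      HasGrowthBound (schrodingerMatrix w) (𝐞 b) r c := fun c ↦ by
    rw [← hscale, div_self hr.ne']
  have hw' : DifferentiableOn ℂ (fun X ↦ w (r * X)) (closedAnnulus (a / r) (R / r)) := by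
    refine hw.comp (by fun_prop) fun X hX ↦ ?_
    rw [closedAnnulus, Set.mem_ofPred_eq, norm_mul, Complex.norm_of_nonneg hr.le]
    exact ⟨(div_le_iff₀' hr).1 hX.1, (le_div_iff₀' hr).1 hX.2⟩
  obtain ⟨K, hK, h⟩ := exists_schrodingerBoundedBelow hb (div_pos ha hr) ((div_lt_one hr).2 har)
    ((one_lt_div hr).2 hrR) hw' hf hτ hτ1 (fun κ hκ ↦ (hone _).2 (.add_of_isGLB hglb hκ))
    (fun κ hκ ↦ (hscale _ _).2 (hgR κ hκ)) ((hscale _ _).2 hga)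
    (fun c hc h ↦ hc.not_ge (hglb.1 ((hone c).1 h)))
  refine ⟨K, hK, fun X hX ↦ ?_⟩
  have := h (X / r) (by rw [norm_div, hX, Complex.norm_of_nonneg hr.le, div_self hr.ne'])
  simpa only [← mul_assoc, mul_div_cancel₀ X hr0] using this

lemma SchrodingerBoundedBelow.comp_neg {v : ℤ → ℂ} (h : SchrodingerBoundedBelow v K) :
    SchrodingerBoundedBelow (fun n ↦ v (-n)) K := fun u g hug ↦ by
  rw [← norm_l2Reindex u (Equiv.neg ℤ), ← norm_l2Reindex g (Equiv.neg ℤ)]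
  refine h _ _ fun n ↦ ?_
  have hn := hug (-n)
  simp only [l2Reindex_apply, Equiv.neg_apply, neg_neg] at hn ⊢
  rw [← hn, neg_add', neg_sub', sub_neg_eq_add, add_comm (u (-n - 1))]

end Circle

lemma norm_schrodingerMatrix_sub_le (w w' : ℂ → ℂ) (X : ℂ) :
    ‖schrodingerMatrix w X - schrodingerMatrix w' X‖ ≤ 2 * ‖w X - w' X‖ := by
  refine linfty_opNorm_le_two_mul fun i j ↦ ?_
  fin_cases i <;> fin_cases j <;> simp [schrodingerMatrix]

section ComplexEnergy

variable {α lam b E L r : ℝ}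

lemma exists_hasGrowthBound_transferMatrix_add_mul_I (hα : |α| < 1) (hD : |α * E + 2 * lam| ≤ 2)
    {ρ : ℂ} (hρ : ‖ρ‖ = 1) (hρ' : ¬IsOfFinOrder ρ) (hL : 0 < L)
    (h : ∀ κ > 0, HasGrowthBound (transferMatrix α lam E) ρ 1 (L + κ)) :
    ∃ r τ η₀ : ℝ, |potPole α| < r ∧ r < 1 ∧ 0 < τ ∧ τ < 1 ∧ 0 < η₀ ∧ ∀ η ∈ Set.Icc 0 η₀,
      HasGrowthBound (transferMatrix α lam (E + η * Complex.I)) ρ r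
        (L - (1 - τ) * Real.log r) := by
  obtain ⟨τ, hτ, hτ1, hgrowth⟩ :=
    exists_hasGrowthBound_transferMatrix_of_lt_one hα hD hρ hρ' hL h
  obtain ⟨r, hr, hr1⟩ := exists_between
    (max_lt (abs_potPole_lt_one hα) (show (1 / 2 : ℝ) < 1 by norm_num))
  obtain ⟨hβr, hr2⟩ := max_lt_iff.1 hr
  have hlog : 0 < -Real.log r := neg_pos.2 (Real.log_neg (by linarith) hr1)
  have hκ : 0 < τ / 4 * -Real.log r := by positivity
  obtain ⟨B, hB⟩ := exists_norm_le_of_norm_eq (differentiableOn_transferMatrix (lam := lam) hα hβr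
    (R := r) (by nlinarith [abs_nonneg (potPole α)]) E) le_rfl le_rfl
  obtain ⟨δ, hδ, hpert⟩ := (hgrowth r ⟨hr2.le, hr1.le⟩ hβr _ hκ).exists_of_norm_sub_le hρ hB hκ
  refine ⟨r, τ / 2, δ / 2, hβr, hr1, half_pos hτ, by linarith, half_pos hδ, fun η hη ↦ ?_⟩
  refine (hpert _ fun X _ ↦ (norm_schrodingerMatrix_sub_le _ _ X).trans ?_).mono (by linarith)
  rw [sub_sub_sub_cancel_right, add_sub_cancel_left, norm_mul, Complex.norm_I, mul_one,
    Complex.norm_of_nonneg hη.1]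
  linarith [hη.2]

lemma le_of_hasGrowthBound_transferMatrix_add_mul_I {η c : ℝ} {ρ : ℂ} (hα : |α| < 1) (hρ : ‖ρ‖ = 1)
    (hL : L ∈ lowerBounds {c | HasGrowthBound (transferMatrix α lam E) ρ 1 c})
    (hr : |potPole α| < r) (hr1 : r < 1)
    (h : HasGrowthBound (transferMatrix α lam (E + η * Complex.I)) ρ r c) : L ≤ c := by
  have hr0 : 0 < r := (abs_nonneg _).trans_lt hr
  have hone : (1 : ℝ) < r⁻¹ := (one_lt_inv₀ hr0).2 hr1
  have hinv : HasGrowthBound (transferMatrix α lam (E + η * Complex.I)) ρ r⁻¹ c :=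
    h.schrodingerMatrix_inv (fun X ↦ by rw [complexPotential_inv]) hρ
  have hcircle := HasGrowthBound.interpolate (s := 0) (c := c) hρ hr0 (hr1.trans hone)
    (differentiableOn_transferMatrix hα hr (by rwa [← div_eq_mul_inv, div_lt_one hr0]) _)
    (by simpa using h) (by simpa using hinv) ⟨hr1.le, hone.le⟩
  rw [zero_mul, add_zero] at hcircle
  exact hL (hcircle.of_add_mul_I hρ fun X hX ↦ complexPotential_im_eq_zero hX)

theorem exists_schrodingerBoundedBelow_complexPotential (hα : |α| < 1) (hb : Irrational b)
    (hD : |α * E + 2 * lam| ≤ 2) (hL : 0 < L)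
    (hglb : IsGLB {c | HasGrowthBound (transferMatrix α lam E) (𝐞 b) 1 c} L) :
    ∃ r₀ η₀ : ℝ, |potPole α| < r₀ ∧ r₀ < 1 ∧ 0 < η₀ ∧
      ∀ η ∈ Set.Icc 0 η₀, ∀ r ∈ Set.Ico r₀ 1, ∃ K > 0, ∀ X : ℂ, ‖X‖ = r ∨ ‖X‖ = r⁻¹ →
        SchrodingerBoundedBelow (fun n ↦ (E + η * Complex.I) -
          complexPotential α lam (X * (𝐞 b : ℂ) ^ n)) K := by
  have hρ : ‖(𝐞 b : ℂ)‖ = 1 := Circle.norm_coe _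
  obtain ⟨a, τ, η₀, hβa, ha1, hτ, hτ1, hη₀, hgrowth⟩ :=
    exists_hasGrowthBound_transferMatrix_add_mul_I hα hD hρ (not_isOfFinOrder_fourierChar hb) hL
      fun κ hκ ↦ .add_of_isGLB hglb hκ
  have ha : 0 < a := (abs_nonneg _).trans_lt hβa
  have hlog : Real.log a < 0 := Real.log_neg ha ha1
  have har₀ : a < Real.exp (τ / 2 * Real.log a) := by
    rw [← Real.log_lt_iff_lt_exp ha]
    nlinarith
  refine ⟨Real.exp (τ / 2 * Real.log a), η₀, hβa.trans har₀,
    Real.exp_lt_one_iff.2 (mul_neg_of_pos_of_neg (half_pos hτ) hlog), hη₀, fun η hη r hr ↦ ?_⟩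
  have har : a < r := har₀.trans_le hr.1
  have hβr : |potPole α| < r := hβa.trans har
  have hr0 : 0 < r := ha.trans har
  have hβr' : |potPole α| * r⁻¹ < 1 := by rwa [← div_eq_mul_inv, div_lt_one hr0]
  have hrinv : r < r⁻¹ := hr.2.trans ((one_lt_inv₀ hr0).2 hr.2)
  have heven : ∀ X, (E + η * Complex.I) - complexPotential α lam X⁻¹ =
      (E + η * Complex.I) - complexPotential α lam X := fun X ↦ by rw [complexPotential_inv]
  obtain ⟨B, hB⟩ := exists_norm_le_of_norm_eq
    (differentiableOn_transferMatrix (lam := lam) hα hβr hβr' (E + η * Complex.I)) le_rfl hrinv.le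
  obtain ⟨f, hf⟩ := HasGrowthBound.exists_isGLB_schrodingerMatrix hρ hr0.le hB
  have hLf : L ≤ f := (le_isGLB_iff hf).2 fun c hc ↦
    le_of_hasGrowthBound_transferMatrix_add_mul_I hα hρ hglb.1 hβr hr.2 hc
  have hslope : L - (1 - τ) * Real.log a ≤ f - (1 - τ / 2) * Real.log (a / r) := by
    have hlogr : τ / 2 * Real.log a ≤ Real.log r := (Real.le_log_iff_exp_le hr0).2 hr.1
    rw [Real.log_div ha.ne' hr0.ne']
    nlinarith [mul_pos hτ hτ]
  obtain ⟨K, hK, hbound⟩ := exists_schrodingerBoundedBelow_of_norm_eq hb ha har hrinv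
    ((differentiableOn_complexPotential hα hβa hβr').const_sub _) (hL.trans_le hLf) (half_pos hτ)
    (by linarith) hf
    (fun κ hκ ↦ (HasGrowthBound.add_of_isGLB hf hκ).schrodingerMatrix_inv heven hρ)
    ((hgrowth η hη).mono hslope)
  refine ⟨K, hK, fun X hX ↦ hX.elim (hbound X) fun hX ↦ ?_⟩
  have hneg := (hbound X⁻¹ (by rw [norm_inv, hX, inv_inv])).comp_neg
  refine (congrArg (SchrodingerBoundedBelow · K) (funext fun n ↦ ?_)).mp hneg
  rw [zpow_neg, ← mul_inv, complexPotential_inv]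

end ComplexEnergy

/-! ### The Lyapunov exponent -/

/-- The identification of `2 × 2` matrices with operators on the Euclidean plane, as a bounded
linear map for the `ℓ^∞` operator norm on matrices. -/
noncomputable def euclideanOperator :
    Matrix (Fin 2) (Fin 2) ℂ →L[ℂ] EuclideanSpace ℂ (Fin 2) →L[ℂ] EuclideanSpace ℂ (Fin 2) :=
  LinearMap.toContinuousLinearMap (Matrix.toEuclideanCLM (𝕜 := ℂ)).toAlgEquiv.toLinearMap

section OpNorm2

variable (M : Matrix (Fin 2) (Fin 2) ℂ)

lemma opNorm2_eq_norm_euclideanOperator : opNorm2 M = ‖euclideanOperator M‖ := rfl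

lemma opNorm2_smul (a : ℂ) : opNorm2 (a • M) = ‖a‖ * opNorm2 M := by
  rw [opNorm2_eq_norm_euclideanOperator, map_smul, norm_smul, ← opNorm2_eq_norm_euclideanOperator]

lemma continuous_opNorm2 : Continuous opNorm2 := euclideanOperator.continuous.norm

lemma sum_norm_entry_sq_le_opNorm2_sq (j : Fin 2) : ∑ i, ‖M i j‖ ^ 2 ≤ opNorm2 M ^ 2 := by
  have hcol := (euclideanOperator M).le_opNorm (EuclideanSpace.single j 1)
  rw [PiLp.norm_single, norm_one, mul_one] at hcol
  have hsq := pow_le_pow_left₀ (norm_nonneg _) hcol 2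
  rw [EuclideanSpace.norm_sq_eq, ← opNorm2_eq_norm_euclideanOperator] at hsq
  simpa [euclideanOperator, Matrix.ofLp_toEuclideanCLM] using hsq

lemma norm_det_le_opNorm2_sq : ‖M.det‖ ≤ opNorm2 M ^ 2 := by
  have h₀ := sum_norm_entry_sq_le_opNorm2_sq M 0
  have h₁ := sum_norm_entry_sq_le_opNorm2_sq M 1
  rw [Fin.sum_univ_two] at h₀ h₁
  rw [Matrix.det_fin_two]
  refine (norm_sub_le _ _).trans ?_
  rw [norm_mul, norm_mul]
  nlinarith [sq_nonneg (‖M 0 0‖ - ‖M 1 1‖), sq_nonneg (‖M 0 1‖ - ‖M 1 0‖)]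

variable {M} in
lemma one_le_opNorm2 (hM : ‖M.det‖ = 1) : 1 ≤ opNorm2 M :=
  one_le_sq_iff₀ (norm_nonneg _) |>.1 (hM ▸ norm_det_le_opNorm2_sq M)

end OpNorm2

section TProd

variable {V : ℝ → ℝ} {b c C : ℝ} {z : ℂ}

lemma tProd_zero (V : ℝ → ℝ) (b x : ℝ) (z : ℂ) : tProd V b 0 x z = 1 := by simp [tProd]

lemma tProd_succ (V : ℝ → ℝ) (b : ℝ) (n : ℕ) (x : ℝ) (z : ℂ) :
    tProd V b (n + 1) x z = tMat V (x + n * b) z * tProd V b n x z := by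
  simp [tProd, List.range_succ]

lemma det_tProd (V : ℝ → ℝ) (b : ℝ) (n : ℕ) (x : ℝ) (z : ℂ) : (tProd V b n x z).det = 1 := by
  induction n with
  | zero => simp [tProd_zero]
  | succ n ih => rw [tProd_succ, Matrix.det_mul, ih]; simp [tMat, Matrix.det_fin_two]

lemma one_le_opNorm2_tProd (V : ℝ → ℝ) (b : ℝ) (n : ℕ) (x : ℝ) (z : ℂ) :
    1 ≤ opNorm2 (tProd V b n x z) :=
  one_le_opNorm2 (by rw [det_tProd, norm_one])

lemma continuous_tProd (hV : Continuous V) (b : ℝ) (n : ℕ) (z : ℂ) :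
    Continuous fun x ↦ tProd V b n x z := by
  induction n with
  | zero => simp only [tProd_zero, continuous_const]
  | succ n ih =>
    have hentry : Continuous fun x ↦ z - (V (x + n * b) : ℂ) := by fun_prop
    simp_rw [tProd_succ]
    refine Continuous.matrix_mul (continuous_matrix ?_) ih
    exact Fin.forall_fin_two.2 ⟨Fin.forall_fin_two.2 ⟨hentry, continuous_const⟩,
      Fin.forall_fin_two.2 ⟨continuous_const, continuous_const⟩⟩

lemma continuous_log_opNorm2_tProd (hV : Continuous V) (b : ℝ) (n : ℕ) (z : ℂ) :
    Continuous fun x ↦ Real.log (opNorm2 (tProd V b n x z)) :=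
  (continuous_opNorm2.comp (continuous_tProd hV b n z)).log
    fun x ↦ (zero_lt_one.trans_le (one_le_opNorm2_tProd V b n x z)).ne'

lemma bddBelow_lyap (V : ℝ → ℝ) (b : ℝ) (z : ℂ) :
    BddBelow (Set.range fun n : ℕ+ ↦
      (n : ℝ)⁻¹ * ∫ x in (0 : ℝ)..1, Real.log (opNorm2 (tProd V b n x z))) := by
  refine ⟨0, Set.forall_mem_range.2 fun n ↦ mul_nonneg (by positivity) ?_⟩
  exact intervalIntegral.integral_nonneg zero_le_one
    fun x _ ↦ Real.log_nonneg (one_le_opNorm2_tProd V b n x z)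

lemma lyap_le_of_forall_opNorm2_le (hV : Continuous V) (hC : 0 < C)
    (h : ∀ n x, opNorm2 (tProd V b n x z) ≤ C * Real.exp (c * n)) : lyap V b z ≤ c := by
  have hlog : ∀ n x, Real.log (opNorm2 (tProd V b n x z)) ≤ Real.log C + c * n := fun n x ↦ by
    rw [← Real.log_exp (c * n), ← Real.log_mul hC.ne' (Real.exp_pos _).ne']
    exact Real.log_le_log (zero_lt_one.trans_le (one_le_opNorm2_tProd V b n x z)) (h n x)
  have hle : ∀ n : ℕ, lyap V b z ≤ Real.log C * ((n + 1 : ℕ) : ℝ)⁻¹ + c := fun n ↦ by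
    have hlog_int : ∫ x in (0 : ℝ)..1, Real.log (opNorm2 (tProd V b (n + 1) x z)) ≤
        Real.log C + c * (n + 1 : ℕ) := by
      simpa only [intervalIntegral.integral_const, sub_zero, one_smul] using
        intervalIntegral.integral_mono_on (μ := MeasureTheory.volume) zero_le_one
          ((continuous_log_opNorm2_tProd hV b (n + 1) z).intervalIntegrable 0 1)
          (intervalIntegrable_const (c := Real.log C + c * (n + 1 : ℕ))) fun x _ ↦ hlog (n + 1) x
    calc lyap V b z ≤ ((n + 1 : ℕ) : ℝ)⁻¹ * _ := ciInf_le (bddBelow_lyap V b z) n.succPNat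
      _ ≤ ((n + 1 : ℕ) : ℝ)⁻¹ * (Real.log C + c * (n + 1 : ℕ)) := by gcongr; exact hlog_int
      _ = Real.log C * ((n + 1 : ℕ) : ℝ)⁻¹ + c := by field_simp
  have hlim := ((tendsto_inv_atTop_nhds_zero_nat (𝕜 := ℝ)).comp
    (Filter.tendsto_add_atTop_nat 1)).const_mul (Real.log C) |>.add_const c
  rw [mul_zero, zero_add] at hlim
  exact ge_of_tendsto' hlim hle

end TProd

section PotV

variable {α lam b c : ℝ} {z : ℂ}

lemma potV_eq_complexPotential (α lam x : ℝ) :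
    (potV α lam x : ℂ) = complexPotential α lam (𝐞 x) := by
  have hcos : (𝐞 x : ℂ) + (𝐞 x : ℂ)⁻¹ = 2 * Complex.cos (2 * π * x) := by
    rw [Real.fourierChar_apply, ← Complex.exp_neg, Complex.two_cos, ← neg_mul]
    push_cast
    rfl
  rw [complexPotential, potDenominator, hcos, potV]
  push_cast
  ring

lemma continuous_potV (hα : |α| < 1) (lam : ℝ) : Continuous (potV α lam) := by
  refine Continuous.div (by fun_prop) (by fun_prop) fun x ↦ (sub_pos.2 ?_).ne'
  calc α * Real.cos (2 * π * x) ≤ |α| * |Real.cos (2 * π * x)| := by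
        rw [← abs_mul]
        exact le_abs_self _
    _ ≤ |α| * 1 := by gcongr; exact Real.abs_cos_le_one _
    _ < 1 := by rwa [mul_one]

lemma tProd_potV (α lam b : ℝ) (n : ℕ) (x : ℝ) (z : ℂ) :
    tProd (potV α lam) b n x z = cocycle (transferMatrix α lam z) (𝐞 b) n (𝐞 x) := by
  induction n with
  | zero => rw [tProd_zero, cocycle.zero]
  | succ n ih =>
    have hphase : (𝐞 (x + n * b) : ℂ) = 𝐞 x * (𝐞 b : ℂ) ^ n := by
      rw [AddChar.map_add_eq_mul, ← nsmul_eq_mul, AddChar.map_nsmul_eq_pow, Circle.coe_mul,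
        Circle.coe_pow]
    rw [tProd_succ, cocycle.succ, ih, tMat, potV_eq_complexPotential, hphase]
    rfl

lemma lyap_le_of_hasGrowthBound (hα : |α| < 1)
    (h : HasGrowthBound (transferMatrix α lam z) (𝐞 b) 1 c) : lyap (potV α lam) b z ≤ c := by
  obtain ⟨C, hC, h⟩ := h
  obtain ⟨K, hK, hop⟩ := euclideanOperator.bound
  refine lyap_le_of_forall_opNorm2_le (continuous_potV hα lam) (mul_pos hK hC) fun n x ↦ ?_
  rw [tProd_potV, mul_assoc]
  exact (hop _).trans (mul_le_mul_of_nonneg_left (h n _ (Circle.norm_coe _)) hK.le)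

end PotV

section LowerBound

open Metric

lemma log_norm_le_circleAverage_log {f : ℂ → ℂ} {M : ℂ → ℝ} {c : ℂ} {R : ℝ} (hR : R ≠ 0)
    (hf : AnalyticOnNhd ℂ f (closedBall c |R|)) (hfc : f c ≠ 0)
    (hM : CircleIntegrable (fun X ↦ Real.log (M X)) c R) (hM₁ : ∀ X ∈ sphere c |R|, 1 ≤ M X)
    (hfM : ∀ X ∈ sphere c |R|, ‖f X‖ ≤ M X) :
    Real.log ‖f c‖ ≤ Real.circleAverage (fun X ↦ Real.log (M X)) c R := by
  have hzeros : 0 ≤ ∑ᶠ u, MeromorphicOn.divisor f (closedBall c |R|) u *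
      Real.log (R * ‖c - u‖⁻¹) := finsum_nonneg fun u ↦ by
    by_cases hu : u ∈ closedBall c |R|
    · refine mul_nonneg (by exact_mod_cast MeromorphicOn.AnalyticOnNhd.divisor_nonneg hf u) ?_
      rcases eq_or_ne u c with rfl | huc
      · simp
      have hdist : 0 < ‖c - u‖ := norm_pos_iff.2 (sub_ne_zero.2 huc.symm)
      rw [← Real.log_abs, abs_mul, abs_inv, abs_norm]
      rw [mem_closedBall, dist_comm, dist_eq_norm] at hu
      exact Real.log_nonneg ((one_le_div hdist).2 hu)
    · simp [hu]
  have hmono : Real.circleAverage (fun X ↦ Real.log ‖f X‖) c R ≤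
      Real.circleAverage (fun X ↦ Real.log (M X)) c R := by
    refine Real.circleAverage_mono
      (hf.mono sphere_subset_closedBall).meromorphicOn.circleIntegrable_log_norm hM fun X hX ↦ ?_
    rcases eq_or_ne (f X) 0 with h0 | h0
    · simpa [h0] using Real.log_nonneg (hM₁ X hX)
    · exact Real.log_le_log (norm_pos_iff.2 h0) (hfM X hX)
  rw [hf.circleAverage_log_norm hR hfc] at hmono
  linarith

lemma exists_euclideanOperator_pow_apply_eq_smul {M : Matrix (Fin 2) (Fin 2) ℂ} {μ : ℂ}
    (hμ : μ ∈ spectrum ℂ M) :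
    ∃ v : EuclideanSpace ℂ (Fin 2), v ≠ 0 ∧ ∀ n : ℕ, euclideanOperator (M ^ n) v = μ ^ n • v := by
  rw [← Matrix.spectrum_toLin', ← Module.End.hasEigenvalue_iff_mem_spectrum] at hμ
  obtain ⟨v, hv⟩ := hμ.exists_hasEigenvector
  refine ⟨WithLp.toLp 2 v, (WithLp.toLp_eq_zero 2).not.2 hv.2, fun n ↦ ?_⟩
  have hpow := hv.pow_apply n
  rw [← Matrix.toLin'_pow, Matrix.toLin'_apply] at hpow
  exact (Matrix.toEuclideanCLM_toLp _ _).trans (congrArg (WithLp.toLp 2) hpow)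

lemma mul_log_norm_le_circleAverage_log_opNorm2 {F : ℂ → Matrix (Fin 2) (Fin 2) ℂ} {ρ μ : ℂ}
    {R : ℝ} (hR : 1 < R) (hF : DifferentiableOn ℂ F (ball 0 R)) (hρ : ‖ρ‖ = 1) (hμ : μ ≠ 0)
    (hspec : μ ∈ spectrum ℂ (F 0)) {n : ℕ}
    (hone : ∀ X : ℂ, ‖X‖ = 1 → 1 ≤ opNorm2 (cocycle F ρ n X)) :
    n * Real.log ‖μ‖ ≤
      Real.circleAverage (fun X ↦ Real.log (opNorm2 (cocycle F ρ n X))) 0 1 := by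
  obtain ⟨v, hv, hpow⟩ := exists_euclideanOperator_pow_apply_eq_smul hspec
  have hv2 : (‖v‖ : ℂ) ^ 2 ≠ 0 := pow_ne_zero 2 (by exact_mod_cast norm_ne_zero_iff.2 hv)
  let f : ℂ → ℂ := fun X ↦ inner ℂ v (euclideanOperator (cocycle F ρ n X) v) / ‖v‖ ^ 2
  have hmaps : Set.MapsTo (· * ρ) (ball 0 R) (ball 0 R) := fun X hX ↦ by
    simpa [hρ] using hX
  have hdiff : DifferentiableOn ℂ (cocycle F ρ n) (ball 0 R) := cocycle.differentiableOn hmaps hF n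
  have hfdiff : DifferentiableOn ℂ f (ball 0 R) := by
    have hop := euclideanOperator.differentiable.comp_differentiableOn hdiff
    exact ((innerSL ℂ v).differentiable.comp_differentiableOn
      (hop.clm_apply (differentiableOn_const v))).div_const _
  have hf0 : f 0 = μ ^ n := by
    simp only [f, cocycle.at_zero, hpow, inner_smul_right, inner_self_eq_norm_sq_to_K]
    exact mul_div_cancel_right₀ _ hv2
  have hfle : ∀ X, ‖f X‖ ≤ opNorm2 (cocycle F ρ n X) := fun X ↦ by
    rw [norm_div, norm_pow, Complex.norm_real, norm_norm, div_le_iff₀ (by positivity)]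
    calc _ ≤ ‖v‖ * ‖euclideanOperator (cocycle F ρ n X) v‖ := norm_inner_le_norm _ _
      _ ≤ ‖v‖ * (opNorm2 (cocycle F ρ n X) * ‖v‖) := by
        gcongr
        exact ContinuousLinearMap.le_opNorm _ _
      _ = _ := by ring
  have hcircle : CircleIntegrable (fun X ↦ Real.log (opNorm2 (cocycle F ρ n X))) 0 1 := by
    refine ContinuousOn.circleIntegrable zero_le_one (ContinuousOn.log ?_ fun X hX ↦ ?_)
    · exact continuous_opNorm2.comp_continuousOn (hdiff.continuousOn.mono
        (sphere_subset_closedBall.trans (closedBall_subset_ball hR)))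
    · exact (zero_lt_one.trans_le (hone X (mem_sphere_zero_iff_norm.1 hX))).ne'
  have hjensen := log_norm_le_circleAverage_log one_ne_zero
    ((hfdiff.analyticOnNhd isOpen_ball).mono (by simpa using closedBall_subset_ball hR))
    (by rw [hf0]; exact pow_ne_zero n hμ) hcircle (by simpa using hone) (fun X _ ↦ hfle X)
  rwa [hf0, norm_pow, Real.log_pow] at hjensen

end LowerBound

section RegularizedTransferMatrix

variable {α lam b D E : ℝ} {X z : ℂ}

/-- The transfer matrix at energy `z` multiplied by the Blaschke factor `(X - β) / (1 - β X)`, which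
has modulus one on the unit circle and removes the pole inside the disc. -/
noncomputable def regularizedTransferMatrix (α lam : ℝ) (z X : ℂ) : Matrix (Fin 2) (Fin 2) ℂ :=
  (potConst α * (1 - potPole α * X) ^ 2)⁻¹ • clearedTransferMatrix α lam z X

lemma regularizedTransferMatrix_eq (hα : |α| < 1) (hX : ‖X‖ = 1) :
    regularizedTransferMatrix α lam z X =
      ((X - potPole α) / (1 - potPole α * X)) • transferMatrix α lam z X := by
  have hβ := abs_potPole_lt_one hα
  have hX0 : X ≠ 0 := norm_pos_iff.1 (hX ▸ one_pos)
  have hden := potDenominator_ne_zero hα (by rwa [hX]) (by rwa [hX, mul_one])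
  have hone : 1 - potPole α * X ≠ 0 := one_sub_potPole_mul_ne_zero (by rwa [hX, mul_one])
  have hc : (potConst α : ℂ) ≠ 0 := by exact_mod_cast (potConst_pos α).ne'
  rw [regularizedTransferMatrix, clearedTransferMatrix_eq hX0 hden, smul_smul,
    potDenominator_eq hα hX0]
  congr 1
  field_simp

lemma norm_sub_potPole_div (hα : |α| < 1) (hX : ‖X‖ = 1) :
    ‖(X - potPole α) / (1 - potPole α * X)‖ = 1 := by
  have hone : 1 - potPole α * X ≠ 0 :=
    one_sub_potPole_mul_ne_zero (by rw [hX, mul_one]; exact abs_potPole_lt_one hα)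
  have hconj : X - potPole α = X * starRingEnd ℂ (1 - potPole α * X) := by
    have hXX : X * starRingEnd ℂ X = 1 := by rw [Complex.mul_conj', hX]; norm_num
    simp only [map_sub, map_one, map_mul, Complex.conj_ofReal]
    linear_combination (potPole α : ℂ) * hXX
  rw [norm_div, hconj, norm_mul, hX, one_mul, RCLike.norm_conj, div_self (norm_ne_zero_iff.2 hone)]

lemma opNorm2_cocycle_regularizedTransferMatrix (hα : |α| < 1) {ρ : ℂ} (hρ : ‖ρ‖ = 1)
    (hX : ‖X‖ = 1) (n : ℕ) :
    opNorm2 (cocycle (regularizedTransferMatrix α lam z) ρ n X) =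
      opNorm2 (cocycle (transferMatrix α lam z) ρ n X) := by
  have horbit : ∀ j : ℕ, ‖X * ρ ^ j‖ = 1 := fun j ↦ by rw [norm_mul_pow_of_norm_eq_one hρ, hX]
  rw [cocycle.eq_prod_smul (s := fun Y ↦ (Y - potPole α) / (1 - potPole α * Y))
    (fun j ↦ regularizedTransferMatrix_eq hα (horbit j)), opNorm2_smul, norm_prod,
    Finset.prod_congr rfl fun j _ ↦ norm_sub_potPole_div hα (horbit j), Finset.prod_const_one,
    one_mul]

lemma exists_differentiableOn_regularizedTransferMatrix (hα : |α| < 1) (lam : ℝ) (z : ℂ) :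
    ∃ R > 1, DifferentiableOn ℂ (regularizedTransferMatrix α lam z) (Metric.ball 0 R) := by
  obtain ⟨s, hβs, hs⟩ := exists_between (abs_potPole_lt_one hα)
  have hs0 : 0 < s := (abs_nonneg _).trans_lt hβs
  refine ⟨s⁻¹, (one_lt_inv₀ hs0).2 hs, fun X hX ↦ ?_⟩
  have hX' : |potPole α| * ‖X‖ < 1 := by
    rw [mem_ball_zero_iff] at hX
    calc |potPole α| * ‖X‖ ≤ |potPole α| * s⁻¹ := by gcongr
      _ < 1 := (mul_inv_lt_iff₀ hs0).2 (by rwa [one_mul])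
  have hden : potConst α * (1 - potPole α * X) ^ 2 ≠ 0 :=
    mul_ne_zero (by exact_mod_cast (potConst_pos α).ne')
      (pow_ne_zero 2 (one_sub_potPole_mul_ne_zero hX'))
  exact ((by fun_prop : DifferentiableAt ℂ (fun X : ℂ ↦ potConst α * (1 - potPole α * X) ^ 2) X).inv
    hden |>.smul (differentiable_clearedTransferMatrix α lam z X)).differentiableWithinAt

lemma mem_spectrum_regularizedTransferMatrix_zero {t : ℝ}
    (ht : t ^ 2 + (α * E + 2 * lam) / 2 * t + α ^ 2 / 4 = 0) :
    (t / potConst α : ℂ) ∈ spectrum ℂ (regularizedTransferMatrix α lam E 0) := by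
  have ht' : (t : ℂ) ^ 2 + (α * E + 2 * lam) / 2 * t + α ^ 2 / 4 = 0 := by exact_mod_cast ht
  have hc : (potConst α : ℂ) ≠ 0 := by exact_mod_cast (potConst_pos α).ne'
  have htrace : (regularizedTransferMatrix α lam E 0).trace =
      -((α * E + 2 * lam) / 2) / potConst α := by
    simp [regularizedTransferMatrix, clearedTransferMatrix, clearedDenominator,
      Matrix.trace_fin_two]
    ring
  have hdet : (regularizedTransferMatrix α lam E 0).det = α ^ 2 / 4 / potConst α ^ 2 := by
    simp [regularizedTransferMatrix, clearedTransferMatrix, clearedDenominator,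
      Matrix.det_fin_two]
    ring
  rw [Matrix.mem_spectrum_iff_isRoot_charpoly, Polynomial.IsRoot, Matrix.charpoly_fin_two]
  rw [htrace, hdet]
  simp only [Polynomial.eval_add, Polynomial.eval_sub, Polynomial.eval_mul, Polynomial.eval_pow,
    Polynomial.eval_X, Polynomial.eval_C]
  field_simp
  linear_combination 8 * ht'

lemma exists_root_potConst_lt (hα : |α| < 1) (hD : 2 < |D|) :
    ∃ t : ℝ, potConst α < |t| ∧ t ^ 2 + D / 2 * t + α ^ 2 / 4 = 0 := by
  have hα2 : α ^ 2 < 1 := (sq_lt_one_iff_abs_lt_one α).2 hα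
  have hD2 : 2 ^ 2 < D ^ 2 := sq_lt_sq.2 (by rwa [abs_two])
  have hs : √(D ^ 2 - 4 * α ^ 2) ^ 2 = D ^ 2 - 4 * α ^ 2 := Real.sq_sqrt (by linarith)
  have hle : 2 * √(1 - α ^ 2) ≤ √(D ^ 2 - 4 * α ^ 2) := Real.le_sqrt_of_sq_le (by
    rw [mul_pow, Real.sq_sqrt (by linarith)]
    linarith)
  unfold potConst
  rcases le_total 0 D with h | h
  · rw [abs_of_nonneg h] at hD
    refine ⟨-(D + √(D ^ 2 - 4 * α ^ 2)) / 4, lt_abs.2 (.inr (by linarith)), ?_⟩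
    linear_combination hs / 16
  · rw [abs_of_nonpos h] at hD
    refine ⟨(-D + √(D ^ 2 - 4 * α ^ 2)) / 4, lt_abs.2 (.inl (by linarith)), ?_⟩
    linear_combination hs / 16

lemma integral_comp_fourierChar (f : ℂ → ℝ) :
    ∫ x in (0 : ℝ)..1, f (𝐞 x) = Real.circleAverage f 0 1 := by
  have hphase : ∀ x : ℝ, (𝐞 x : ℂ) = circleMap 0 1 (2 * π * x) := fun x ↦ by
    rw [Real.fourierChar_apply, circleMap_zero, Complex.ofReal_one, one_mul]
  simp only [hphase]
  rw [intervalIntegral.integral_comp_mul_left (fun x ↦ f (circleMap 0 1 x)) Real.two_pi_pos.ne',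
    mul_zero, mul_one, Real.circleAverage_def]

theorem lyap_pos_of_two_lt (hα : |α| < 1) (b : ℝ) (hD : 2 < |α * E + 2 * lam|) :
    0 < lyap (potV α lam) b E := by
  obtain ⟨t, hct, ht⟩ := exists_root_potConst_lt hα hD
  obtain ⟨R, hR, hdiff⟩ := exists_differentiableOn_regularizedTransferMatrix hα lam (E : ℂ)
  have hc := potConst_pos α
  have hnorm : ‖(t / potConst α : ℂ)‖ = |t| / potConst α := by
    rw [norm_div, Complex.norm_real, Complex.norm_real, Real.norm_eq_abs, Real.norm_of_nonneg hc.le]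
  have hone : 1 < ‖(t / potConst α : ℂ)‖ := by rwa [hnorm, one_lt_div hc]
  refine (Real.log_pos hone).trans_le (le_ciInf fun n ↦ ?_)
  rw [inv_mul_eq_div, le_div_iff₀ (by exact_mod_cast n.pos), mul_comm]
  have hop : ∀ X : ℂ, ‖X‖ = 1 →
      opNorm2 (cocycle (regularizedTransferMatrix α lam E) (𝐞 b) n X) =
        opNorm2 (cocycle (transferMatrix α lam E) (𝐞 b) n X) := fun X hX ↦
    opNorm2_cocycle_regularizedTransferMatrix hα (Circle.norm_coe _) hX n
  simp_rw [tProd_potV, ← hop _ (Circle.norm_coe _)]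
  rw [integral_comp_fourierChar fun X ↦
    Real.log (opNorm2 (cocycle (regularizedTransferMatrix α lam E) (𝐞 b) n X))]
  refine mul_log_norm_le_circleAverage_log_opNorm2 hR hdiff (Circle.norm_coe _)
    (norm_pos_iff.1 (one_pos.trans hone)) (mem_spectrum_regularizedTransferMatrix_zero ht)
    fun X hX ↦ (one_le_opNorm2 ?_).trans_eq (hop X hX).symm
  rw [cocycle.det (det_schrodingerMatrix _), norm_one]

end RegularizedTransferMatrix

/-! ### The spectrum -/

section Schrodinger

variable {v : ℤ → ℂ} {T : ℓ²(ℤ, ℂ) →L[ℂ] ℓ²(ℤ, ℂ)} {K : ℝ}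

/-- `T` is the discrete Schrödinger operator `u ↦ u (n + 1) + u (n - 1) - v n * u n` on `ℓ²(ℤ)`,
with the sign of `v` as in `SchrodingerBoundedBelow`: for the potential `V` and the energy `z`, the
operator `H - z` has `v n = z - V n`. -/
def IsSchrodinger (v : ℤ → ℂ) (T : ℓ²(ℤ, ℂ) →L[ℂ] ℓ²(ℤ, ℂ)) : Prop :=
  ∀ u n, T u n = u (n + 1) + u (n - 1) - v n * u n

lemma SchrodingerBoundedBelow.add_const {c : ℂ} (h : SchrodingerBoundedBelow v K)
    (hK : 0 ≤ K) (hc : ‖c‖ * K ≤ 1 / 2) : SchrodingerBoundedBelow (fun n ↦ v n + c) (2 * K) :=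
  fun u g hug ↦ by
    have hu := h u (g + c • u) fun n ↦ by
      rw [lp.coeFn_add, Pi.add_apply, ← hug n, lp.coeFn_smul, Pi.smul_apply, smul_eq_mul]
      ring
    have hsum : K * ‖g + c • u‖ ≤ K * ‖g‖ + ‖c‖ * K * ‖u‖ := by
      have := mul_le_mul_of_nonneg_left (norm_add_le g (c • u)) hK
      rw [norm_smul] at this
      linarith
    have := mul_le_mul_of_nonneg_right hc (norm_nonneg u)
    linarith

lemma SchrodingerBoundedBelow.eq_zero {u : ℓ²(ℤ, ℂ)} (h : SchrodingerBoundedBelow v K)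
    (hu : ∀ n, u (n + 1) + u (n - 1) - v n * u n = 0) : u = 0 := by
  simpa using h u 0 hu

namespace IsSchrodinger

lemma add_smul_one (hT : IsSchrodinger v T) (c : ℂ) :
    IsSchrodinger (fun n ↦ v n - c) (T + c • 1) := fun u n ↦ by
  rw [add_apply, lp.coeFn_add, Pi.add_apply, hT, smul_apply, lp.coeFn_smul, Pi.smul_apply,
    one_apply_eq_self, smul_eq_mul]
  ring

lemma apply_single (hT : IsSchrodinger v T) (m : ℤ) :
    T (lp.single 2 m 1) =
      lp.single 2 (m - 1) 1 + lp.single 2 (m + 1) 1 - v m • lp.single 2 m (1 : ℂ) := by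
  ext n
  rw [hT]
  simp only [lp.coeFn_sub, lp.coeFn_add, lp.coeFn_smul, Pi.sub_apply, Pi.add_apply, Pi.smul_apply,
    lp.single_apply, Pi.single_apply, smul_eq_mul, ← eq_sub_iff_add_eq, sub_eq_iff_eq_add]
  rcases eq_or_ne n m with rfl | h <;> simp [*]

lemma adjoint (hT : IsSchrodinger v T) :
    IsSchrodinger (fun n ↦ star (v n)) (ContinuousLinearMap.adjoint T) := fun u n ↦ by
  have hinner : ∀ (w : ℓ²(ℤ, ℂ)) m, w m = inner ℂ (lp.single 2 m (1 : ℂ)) w := fun w m ↦ by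
    rw [lp.inner_single_left]
    simp
  rw [hinner (ContinuousLinearMap.adjoint T u), ContinuousLinearMap.adjoint_inner_right,
    hT.apply_single, inner_sub_left, inner_add_left, inner_smul_left, ← hinner, ← hinner, ← hinner,
    starRingEnd_apply]
  ring

lemma ext {T' : ℓ²(ℤ, ℂ) →L[ℂ] ℓ²(ℤ, ℂ)} (hT : IsSchrodinger v T) (hT' : IsSchrodinger v T') :
    T = T' := by
  ext u n
  rw [hT, hT']

lemma norm_le (hT : IsSchrodinger v T) (h : SchrodingerBoundedBelow v K) (u : ℓ²(ℤ, ℂ)) :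
    ‖u‖ ≤ K * ‖T u‖ :=
  h u (T u) fun n ↦ (hT u n).symm

lemma isUnit (hT : IsSchrodinger v T) (h : SchrodingerBoundedBelow v K) (hK : 0 ≤ K) :
    IsUnit T := by
  rw [ContinuousLinearMap.isUnit_iff_bijective,
    ContinuousLinearMap.bijective_iff_dense_range_and_antilipschitz]
  refine ⟨?_, ⟨K, hK⟩, AddMonoidHomClass.antilipschitz_of_bound _ (hT.norm_le h)⟩
  rw [Submodule.topologicalClosure_eq_top_iff, ContinuousLinearMap.orthogonal_range,
    LinearMap.ker_eq_bot']
  intro u hu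
  refine star_eq_zero.1 (h.eq_zero fun n ↦ ?_)
  have := congrArg star ((hT.adjoint u n).symm.trans (congrArg (· n) hu))
  simpa using this

lemma norm_inverse_le (hT : IsSchrodinger v T) (h : SchrodingerBoundedBelow v K) (hK : 0 ≤ K) :
    ‖Ring.inverse T‖ ≤ K :=
  ContinuousLinearMap.opNorm_le_bound _ hK fun f ↦ by
    have hright : T (Ring.inverse T f) = f :=
      congrArg (· f) (Ring.mul_inverse_cancel T (hT.isUnit h hK))
    simpa only [hright] using hT.norm_le h (Ring.inverse T f)

lemma isUnit_of_im_eq {η : ℝ} (hT : IsSchrodinger v T) (hv : ∀ n, (v n).im = η) (hη : η ≠ 0) :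
    IsUnit T := by
  have hS := hT.add_smul_one (η * Complex.I)
  have hreal : (fun n ↦ star (v n - η * Complex.I)) = fun n ↦ v n - η * Complex.I :=
    funext fun n ↦ Complex.conj_eq_iff_im.2 (by simp [hv])
  have hself : IsSelfAdjoint (T + (η * Complex.I) • 1) :=
    IsSchrodinger.ext (hreal ▸ hS.adjoint) hS
  by_contra h
  have hmem : η * Complex.I ∈ spectrum ℂ (T + (η * Complex.I) • 1) := by
    rwa [spectrum.mem_iff, ← IsUnit.neg_iff, neg_sub, Algebra.algebraMap_eq_smul_one,
      add_sub_cancel_right]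
  exact hη (by simpa using hself.im_eq_zero_of_mem_spectrum hmem)

end IsSchrodinger

end Schrodinger

section PotentialOperator

variable {α lam r : ℝ} {ρ : Circle} {X : ℂ}

/-- Multiplication by `ρ ^ n` on `ℓ²(ℤ)`. -/
noncomputable def phaseOperator (ρ : Circle) : ℓ²(ℤ, ℂ) →L[ℂ] ℓ²(ℤ, ℂ) :=
  lp.mapCLM 2 (K := 1) (fun n : ℤ ↦ ((ρ ^ n : Circle) : ℂ) • ContinuousLinearMap.id ℂ ℂ)
    zero_le_one fun n ↦ by
      rw [norm_smul, Circle.norm_coe, one_mul]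
      exact ContinuousLinearMap.norm_id_le

lemma phaseOperator_apply (ρ : Circle) (u : ℓ²(ℤ, ℂ)) (n : ℤ) :
    phaseOperator ρ u n = (ρ : ℂ) ^ n * u n := by
  rw [← Circle.coe_zpow]
  rfl

lemma norm_phaseOperator_le (ρ : Circle) : ‖phaseOperator ρ‖ ≤ 1 :=
  lp.norm_mapCLM_le 2 _ _ _

/-- Multiplication by `X ρ ^ n + (X ρ ^ n)⁻¹` on `ℓ²(ℤ)`. -/
noncomputable def phaseSumOperator (ρ : Circle) (X : ℂ) : ℓ²(ℤ, ℂ) →L[ℂ] ℓ²(ℤ, ℂ) :=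
  X • phaseOperator ρ + X⁻¹ • phaseOperator ρ⁻¹

lemma phaseSumOperator_apply (ρ : Circle) (X : ℂ) (u : ℓ²(ℤ, ℂ)) (n : ℤ) :
    phaseSumOperator ρ X u n = (X * ρ ^ n + (X * ρ ^ n)⁻¹) * u n := by
  simp only [phaseSumOperator, add_apply, smul_apply, lp.coeFn_add, lp.coeFn_smul, Pi.add_apply,
    Pi.smul_apply, phaseOperator_apply, Circle.coe_inv, smul_eq_mul, mul_inv, inv_zpow]
  ring

/-- Multiplication by `potDenominator α (X ρ ^ n)` on `ℓ²(ℤ)`. -/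
noncomputable def potDenominatorOperator (α : ℝ) (ρ : Circle) (X : ℂ) :
    ℓ²(ℤ, ℂ) →L[ℂ] ℓ²(ℤ, ℂ) :=
  1 - (α / 2 : ℂ) • phaseSumOperator ρ X

lemma potDenominatorOperator_apply (α : ℝ) (ρ : Circle) (X : ℂ) (u : ℓ²(ℤ, ℂ)) (n : ℤ) :
    potDenominatorOperator α ρ X u n = potDenominator α (X * ρ ^ n) * u n := by
  simp only [potDenominatorOperator, sub_apply, smul_apply, one_apply_eq_self, lp.coeFn_sub,
    lp.coeFn_smul, Pi.sub_apply, Pi.smul_apply, phaseSumOperator_apply, smul_eq_mul, potDenominator]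
  ring

lemma potDenominatorOperator_eq (hα : |α| < 1) (hX : X ≠ 0) :
    potDenominatorOperator α ρ X = (potConst α : ℂ) •
      ((1 - (potPole α * X) • phaseOperator ρ) * (1 - (potPole α * X⁻¹) • phaseOperator ρ⁻¹)) := by
  ext u n
  rw [potDenominatorOperator_apply,
    potDenominator_eq hα (mul_ne_zero hX (zpow_ne_zero n ρ.coe_ne_zero))]
  simp only [smul_apply, sub_apply, mul_apply_eq_comp, one_apply_eq_self, lp.coeFn_smul,
    lp.coeFn_sub, Pi.smul_apply, Pi.sub_apply, phaseOperator_apply, smul_eq_mul, Circle.coe_inv,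
    mul_inv, inv_zpow]
  ring

lemma isUnit_one_sub_smul_phaseOperator (hX : |potPole α| * ‖X‖ < 1) :
    IsUnit (1 - (potPole α * X) • phaseOperator ρ) := by
  refine isUnit_one_sub_of_norm_lt_one (lt_of_le_of_lt ?_ hX)
  rw [norm_smul, norm_potPole_mul]
  exact mul_le_of_le_one_right (by positivity) (norm_phaseOperator_le ρ)

lemma isUnit_potDenominatorOperator (hα : |α| < 1) (hX : |potPole α| < ‖X‖)
    (hX' : |potPole α| * ‖X‖ < 1) : IsUnit (potDenominatorOperator α ρ X) := by
  have hX0 : 0 < ‖X‖ := (abs_nonneg _).trans_lt hX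
  rw [potDenominatorOperator_eq hα (norm_pos_iff.1 hX0)]
  refine ((isUnit_one_sub_smul_phaseOperator hX').mul (isUnit_one_sub_smul_phaseOperator ?_)).smul
    (Units.mk0 (potConst α : ℂ) (by exact_mod_cast (potConst_pos α).ne'))
  rwa [norm_inv, ← div_eq_mul_inv, div_lt_one hX0]

/-- Multiplication by `complexPotential α lam (X ρ ^ n)` on `ℓ²(ℤ)`. -/
noncomputable def potentialOperator (α lam : ℝ) (ρ : Circle) (X : ℂ) : ℓ²(ℤ, ℂ) →L[ℂ] ℓ²(ℤ, ℂ) :=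
  Ring.inverse (potDenominatorOperator α ρ X) * ((lam : ℂ) • phaseSumOperator ρ X)

lemma potentialOperator_apply (hα : |α| < 1) (hX : |potPole α| < ‖X‖)
    (hX' : |potPole α| * ‖X‖ < 1) (u : ℓ²(ℤ, ℂ)) (n : ℤ) :
    potentialOperator α lam ρ X u n = complexPotential α lam (X * ρ ^ n) * u n := by
  have hnorm : ‖X * ρ ^ n‖ = ‖X‖ := norm_mul_zpow_of_norm_eq_one ρ.norm_coe X n
  have hden : potDenominator α (X * ρ ^ n) ≠ 0 :=
    potDenominator_ne_zero hα (by rwa [hnorm]) (by rwa [hnorm])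
  have hmul : potDenominatorOperator α ρ X * potentialOperator α lam ρ X =
      (lam : ℂ) • phaseSumOperator ρ X :=
    Ring.mul_inverse_cancel_left _ _ (isUnit_potDenominatorOperator hα hX hX')
  have happly := congrArg (fun T : ℓ²(ℤ, ℂ) →L[ℂ] ℓ²(ℤ, ℂ) ↦ T u n) hmul
  simp only [mul_apply_eq_comp, potDenominatorOperator_apply, smul_apply, lp.coeFn_smul,
    Pi.smul_apply, phaseSumOperator_apply, smul_eq_mul] at happly
  rw [complexPotential, div_mul_eq_mul_div, eq_div_iff hden]
  linear_combination happly

lemma differentiableAt_phaseSumOperator (hX : X ≠ 0) :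
    DifferentiableAt ℂ (phaseSumOperator ρ) X :=
  (differentiableAt_id.smul_const _).add ((differentiableAt_inv hX).smul_const _)

lemma differentiableAt_potDenominatorOperator (hX : X ≠ 0) :
    DifferentiableAt ℂ (potDenominatorOperator α ρ) X :=
  ((differentiableAt_phaseSumOperator hX).fun_const_smul _).const_sub 1

lemma differentiableAt_potentialOperator (hα : |α| < 1) (hX : |potPole α| < ‖X‖)
    (hX' : |potPole α| * ‖X‖ < 1) : DifferentiableAt ℂ (potentialOperator α lam ρ) X := by
  have hX0 : X ≠ 0 := norm_pos_iff.1 ((abs_nonneg _).trans_lt hX)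
  have hinv : DifferentiableAt ℂ (fun Y ↦ Ring.inverse (potDenominatorOperator α ρ Y)) X :=
    DifferentiableAt.comp X
      (differentiableAt_inverse (isUnit_potDenominatorOperator hα hX hX'))
      (differentiableAt_potDenominatorOperator hX0)
  exact hinv.fun_mul ((differentiableAt_phaseSumOperator hX0).fun_const_smul (lam : ℂ))

end PotentialOperator

section Resolvent

variable {α lam b E r M : ℝ} {ρ : Circle} {z : ℂ} {T : ℓ²(ℤ, ℂ) →L[ℂ] ℓ²(ℤ, ℂ)}

lemma notMem_spectrum_of_norm_inverse_le {F : Type*} [NormedAddCommGroup F] [NormedSpace ℂ F]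
    [CompleteSpace F] {T : F →L[ℂ] F} {w : ℂ} (hT : IsUnit (T - z • 1))
    (hM : ‖Ring.inverse (T - z • 1)‖ ≤ M) (hz : M * ‖z - w‖ < 1) : w ∉ spectrum ℂ T := by
  have hfactor : T - w • 1 =
      (T - z • 1) * (1 - -(Ring.inverse (T - z • 1) * (z - w) • (1 : F →L[ℂ] F))) := by
    rw [sub_neg_eq_add, mul_add, mul_one, Ring.mul_inverse_cancel_left _ _ hT, sub_smul,
      sub_add_sub_cancel]
  rw [spectrum.mem_iff, not_not, Algebra.algebraMap_eq_smul_one, ← IsUnit.neg_iff, neg_sub, hfactor]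
  refine hT.mul (isUnit_one_sub_of_norm_lt_one (lt_of_le_of_lt ?_ hz))
  have hone : ‖(z - w) • (1 : F →L[ℂ] F)‖ ≤ ‖z - w‖ := by
    rw [norm_smul]
    exact mul_le_of_le_one_right (norm_nonneg _) ContinuousLinearMap.norm_id_le
  rw [norm_neg]
  exact (norm_mul_le _ _).trans (mul_le_mul hM hone (norm_nonneg _) ((norm_nonneg _).trans hM))

lemma IsSchrodinger.add_potentialOperator_sub {X Y : ℂ} (hα : |α| < 1)
    (hT : IsSchrodinger (fun n ↦ z - complexPotential α lam (Y * (ρ : ℂ) ^ n)) T)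
    (hX : |potPole α| < ‖X‖) (hX' : |potPole α| * ‖X‖ < 1)
    (hY : |potPole α| < ‖Y‖) (hY' : |potPole α| * ‖Y‖ < 1) :
    IsSchrodinger (fun n ↦ z - complexPotential α lam (X * (ρ : ℂ) ^ n))
      (T + (potentialOperator α lam ρ X - potentialOperator α lam ρ Y)) := fun u n ↦ by
  simp only [add_apply, sub_apply, lp.coeFn_add, lp.coeFn_sub, Pi.add_apply, Pi.sub_apply, hT u n,
    potentialOperator_apply hα hX hX', potentialOperator_apply hα hY hY']
  ring

lemma abs_potPole_lt_norm_of_mem_closedAnnulus {X : ℂ} (hr : |potPole α| < r)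
    (hX : X ∈ closedAnnulus r r⁻¹) : |potPole α| < ‖X‖ ∧ |potPole α| * ‖X‖ < 1 :=
  ⟨hr.trans_le hX.1, by
    calc |potPole α| * ‖X‖ ≤ |potPole α| * r⁻¹ := by gcongr; exact hX.2
      _ < 1 := by rwa [← div_eq_mul_inv, div_lt_one ((abs_nonneg _).trans_lt hr)]⟩

lemma IsSchrodinger.isUnit_of_mem_closedAnnulus {X : ℂ}
    (hT : IsSchrodinger (fun n ↦ z - complexPotential α lam (X * (ρ : ℂ) ^ n)) T) (hz : z.im ≠ 0)
    (hr : 0 < r) (hX : X ∈ closedAnnulus r r⁻¹)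
    (hbelow : ∀ s ∈ Set.Ico r 1, ∃ K > 0, ∀ X : ℂ, ‖X‖ = s ∨ ‖X‖ = s⁻¹ →
      SchrodingerBoundedBelow (fun n ↦ z - complexPotential α lam (X * (ρ : ℂ) ^ n)) K) :
    IsUnit T := by
  rcases lt_trichotomy ‖X‖ 1 with h | h | h
  · obtain ⟨K, hK, hbound⟩ := hbelow ‖X‖ ⟨hX.1, h⟩
    exact hT.isUnit (hbound X (.inl rfl)) hK.le
  · refine hT.isUnit_of_im_eq (fun n ↦ ?_) hz
    rw [Complex.sub_im, complexPotential_im_eq_zero, sub_zero]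
    rw [norm_mul_zpow_of_norm_eq_one ρ.norm_coe, h]
  · obtain ⟨K, hK, hbound⟩ := hbelow ‖X‖⁻¹
      ⟨(le_inv_comm₀ (zero_lt_one.trans h) hr).1 hX.2, inv_lt_one_of_one_lt₀ h⟩
    exact hT.isUnit (hbound X (.inr (inv_inv _).symm)) hK.le

lemma IsSchrodinger.norm_inverse_le_of_norm_eq {Y : ℂ} (hα : |α| < 1)
    (hT : IsSchrodinger (fun n ↦ z - complexPotential α lam (Y * (ρ : ℂ) ^ n)) T)
    (hz : z.im ≠ 0) (hr : |potPole α| < r) (hr1 : r < 1) (hY : Y ∈ closedAnnulus r r⁻¹)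
    (hM : 0 ≤ M)
    (hbelow : ∀ s ∈ Set.Ico r 1, ∃ K > 0, ∀ X : ℂ, ‖X‖ = s ∨ ‖X‖ = s⁻¹ →
      SchrodingerBoundedBelow (fun n ↦ z - complexPotential α lam (X * (ρ : ℂ) ^ n)) K)
    (hcircles : ∀ X : ℂ, ‖X‖ = r ∨ ‖X‖ = r⁻¹ →
      SchrodingerBoundedBelow (fun n ↦ z - complexPotential α lam (X * (ρ : ℂ) ^ n)) M) :
    ‖Ring.inverse T‖ ≤ M := by
  have hr0 : 0 < r := (abs_nonneg _).trans_lt hr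
  have hrinv : 1 < r⁻¹ := (one_lt_inv₀ hr0).2 hr1
  set S : ℂ → ℓ²(ℤ, ℂ) →L[ℂ] ℓ²(ℤ, ℂ) := fun X ↦
    T + (potentialOperator α lam ρ X - potentialOperator α lam ρ Y) with hSdef
  have hS : ∀ X ∈ closedAnnulus r r⁻¹,
      IsSchrodinger (fun n ↦ z - complexPotential α lam (X * (ρ : ℂ) ^ n)) (S X) := fun X hX ↦ by
    obtain ⟨hX1, hX2⟩ := abs_potPole_lt_norm_of_mem_closedAnnulus hr hX
    obtain ⟨hY1, hY2⟩ := abs_potPole_lt_norm_of_mem_closedAnnulus hr hY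
    exact hT.add_potentialOperator_sub hα hX1 hX2 hY1 hY2
  have hdiff : DifferentiableOn ℂ (fun X ↦ Ring.inverse (S X)) (closedAnnulus r r⁻¹) :=
    fun X hX ↦ by
      obtain ⟨hX1, hX2⟩ := abs_potPole_lt_norm_of_mem_closedAnnulus hr hX
      have hunit := (hS X hX).isUnit_of_mem_closedAnnulus hz hr0 hX hbelow
      exact (DifferentiableAt.comp X (differentiableAt_inverse hunit)
        (((differentiableAt_potentialOperator hα hX1 hX2).sub_const
          _).const_add T)).differentiableWithinAt
  have hmax := norm_le_of_norm_le_on_circles (C := M) hdiff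
    (fun X hX ↦ (hS X ⟨hX.ge, by linarith⟩).norm_inverse_le (hcircles X (.inl hX)) hM)
    (fun X hX ↦ (hS X ⟨by linarith, hX.le⟩).norm_inverse_le (hcircles X (.inr hX)) hM) hY
  simpa only [hSdef, sub_self, add_zero] using hmax

lemma isSchrodinger_sub_smul_one {θ : ℝ} (hT : IsSchrodingerOp (potV α lam) b θ T) (z : ℂ) :
    IsSchrodinger (fun n ↦ z - complexPotential α lam (𝐞 θ * (𝐞 b : ℂ) ^ n)) (T - z • 1) :=
  fun u n ↦ by
    have hphase : (𝐞 (n * b + θ) : ℂ) = 𝐞 θ * (𝐞 b : ℂ) ^ n := by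
      rw [add_comm, AddChar.map_add_eq_mul, ← zsmul_eq_mul, AddChar.map_zsmul_eq_zpow,
        Circle.coe_mul, Circle.coe_zpow]
    simp only [sub_apply, smul_apply, one_apply_eq_self, lp.coeFn_sub, lp.coeFn_smul,
      Pi.sub_apply, Pi.smul_apply, smul_eq_mul, hT u n, potV_eq_complexPotential, hphase]
    ring

lemma exists_isGLB_transferMatrix (hα : |α| < 1) (lam b E : ℝ) :
    ∃ L, IsGLB {c | HasGrowthBound (transferMatrix α lam E) (𝐞 b) 1 c} L := by
  have hβ := abs_potPole_lt_one hα
  obtain ⟨B, hB⟩ := exists_norm_le_of_norm_eq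
    (differentiableOn_transferMatrix (lam := lam) hα hβ ((mul_one _).trans_lt hβ) E) le_rfl le_rfl
  exact HasGrowthBound.exists_isGLB_schrodingerMatrix (Circle.norm_coe _) zero_le_one hB

lemma notMem_spectrum_of_abs_add_le_two {θ L : ℝ} (hα : |α| < 1) (hb : Irrational b)
    (hT : IsSchrodingerOp (potV α lam) b θ T) (hD : |α * E + 2 * lam| ≤ 2) (hL : 0 < L)
    (hglb : IsGLB {c | HasGrowthBound (transferMatrix α lam E) (𝐞 b) 1 c} L) :
    (E : ℂ) ∉ spectrum ℂ T := by
  obtain ⟨r, η₀, hr, hr1, hη₀, hbelow⟩ :=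
    exists_schrodingerBoundedBelow_complexPotential hα hb hD hL hglb
  have hr0 : 0 < r := (abs_nonneg _).trans_lt hr
  obtain ⟨K, hK, hreal⟩ := hbelow 0 ⟨le_rfl, hη₀.le⟩ r ⟨le_rfl, hr1⟩
  obtain ⟨η, ⟨hη, hηη₀⟩, hηK⟩ : ∃ η ∈ Set.Ioc 0 η₀, η * K ≤ 1 / 4 :=
    ⟨min η₀ (1 / (4 * K)), ⟨by positivity, min_le_left _ _⟩, by
      calc min η₀ (1 / (4 * K)) * K ≤ 1 / (4 * K) * K := by gcongr; exact min_le_right _ _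
        _ = 1 / 4 := by field_simp⟩
  have hnorm : ‖η * Complex.I‖ = η := by simp [abs_of_pos hη]
  have him : (E + η * Complex.I).im ≠ 0 := by simpa using hη.ne'
  have hcircles : ∀ X : ℂ, ‖X‖ = r ∨ ‖X‖ = r⁻¹ → SchrodingerBoundedBelow
      (fun n ↦ (E + η * Complex.I) - complexPotential α lam (X * (𝐞 b : ℂ) ^ n)) (2 * K) :=
    fun X hX ↦ by
      convert (hreal X hX).add_const (c := η * Complex.I) hK.le (by rw [hnorm]; linarith) using 2
      push_cast
      ring
  have hcircle : (𝐞 θ : ℂ) ∈ closedAnnulus r r⁻¹ := by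
    constructor <;> rw [Circle.norm_coe]
    exacts [hr1.le, (one_le_inv₀ hr0).2 hr1.le]
  have hS := isSchrodinger_sub_smul_one hT (E + η * Complex.I)
  refine notMem_spectrum_of_norm_inverse_le (z := E + η * Complex.I) (M := 2 * K)
    (hS.isUnit_of_mem_closedAnnulus him hr0 hcircle (hbelow η ⟨hη.le, hηη₀⟩))
    (hS.norm_inverse_le_of_norm_eq hα him hr hr1 hcircle (by positivity)
      (hbelow η ⟨hη.le, hηη₀⟩) hcircles) ?_
  rw [add_sub_cancel_left, hnorm]
  linarith

end Resolvent

end LinftyOpNorm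

/-- for every `θ` and every `E` in the spectrum of `H_{α,θ,b}`,
`L(E) > 0 ↔ |αE + 2λ| > 2`. -/
theorem lyapunov_pos_iff (α lam b θ : ℝ) (hα : α ∈ Set.Ioo (-1 : ℝ) 1)
    (hb : Irrational b)
    (H : lp (fun _ : ℤ => ℂ) 2 →L[ℂ] lp (fun _ : ℤ => ℂ) 2)
    (hH : IsSchrodingerOp (potV α lam) b θ H)
    (E : ℝ) (hE : (E : ℂ) ∈ spectrum ℂ H) :
    0 < lyap (potV α lam) b (E : ℂ) ↔ 2 < |α * E + 2 * lam| := by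
  have hα' : |α| < 1 := abs_lt.2 hα
  refine ⟨fun hlyap ↦ ?_, lyap_pos_of_two_lt hα' b⟩
  by_contra! hD
  obtain ⟨L, hL⟩ := exists_isGLB_transferMatrix hα' lam b E
  have hLpos : 0 < L :=
    hlyap.trans_le ((le_isGLB_iff hL).2 fun c hc ↦ lyap_le_of_hasGrowthBound hα' hc)
  exact notMem_spectrum_of_abs_add_le_two hα' hb hH hD hLpos hL hE
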